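/- Let γ* = ((2 − 2^{(n−1)/n})^{3/2} / (122·n⁷))². For any convex bodies K and C in ℝⁿ, with σ = σ(K,C), |½(K+C)| ≥ √(|K|·|C|)·[1 + (σ−1)²/(32·n·σ²) + (n·γ*/σ^{1/n})·A(K,C)²]. -/

import Mathlib

open MeasureTheory Pointwise

noncomputable section

/-- The homothetic distance `A(K,C)`: with `α = |K|^(−1/n)` and `β = |C|^(−1/n)`,
`A(K,C) = inf{|αK Δ (x+βC)| : x ∈ ℝⁿ}`. -/
def homDist {n : ℕ} (K C : Set (EuclideanSpace ℝ (Fin n))) : ℝ :=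
  sInf {r : ℝ | ∃ x : EuclideanSpace ℝ (Fin n),
    r = (volume (symmDiff (((volume K).toReal ^ (-(1:ℝ)/(n:ℝ))) • K)
          ({x} + ((volume C).toReal ^ (-(1:ℝ)/(n:ℝ))) • C))).toReal}

/-- `σ(K,C) = max{|C|/|K|, |K|/|C|}`. -/
def volRatio {n : ℕ} (K C : Set (EuclideanSpace ℝ (Fin n))) : ℝ :=
  max ((volume C).toReal / (volume K).toReal) ((volume K).toReal / (volume C).toReal)

set_option linter.unusedSectionVars false

section P1
variable {E : Type*} [NormedAddCommGroup E] [InnerProductSpace ℝ E] 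

def IsSubgrad (f : E → ℝ) (x y : E) : Prop := ∀ x', f x + inner ℝ y (x' - x) ≤ f x'

theorem exists_prox [FiniteDimensional ℝ E] {f : E → ℝ} {L : NNReal} (hc : ConvexOn ℝ Set.univ f)
    (hL : LipschitzWith L f) (z : E) : ∃ x, IsSubgrad f x (z - x) := by
  have hcont : Continuous (fun x => f x + ‖x - z‖ ^ 2 / 2) := by
    have := hL.continuous
    fun_prop
  obtain ⟨x, hx⟩ := hcont.exists_forall_le' z (by
    have : (Metric.closedBall z (2 * L))ᶜ ∈ Filter.cocompact E :=
      (isCompact_closedBall z (2 * (L:ℝ))).compl_mem_cocompact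
    filter_upwards [this] with y hy
    have h1 : 2 * (L:ℝ) < ‖y - z‖ := by simpa [dist_eq_norm] using hy
    have h2 : f z - f y ≤ L * ‖y - z‖ := by
      have := hL.dist_le_mul z y
      rw [Real.dist_eq, dist_comm, dist_eq_norm] at this
      exact (le_abs_self _).trans this
    simp only [sub_self, norm_zero]
    nlinarith [norm_nonneg (y - z)])
  refine ⟨x, fun x' => ?_⟩
  have key : ∀ t : ℝ, 0 < t → t ≤ 1 →
      0 ≤ (f x' - f x - inner ℝ (z - x) (x' - x)) + t * (‖x' - x‖ ^ 2 / 2) := by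
    intro t ht ht1
    have h1 := hx (x + t • (x' - x))
    have h2 := hc.2 (Set.mem_univ x) (Set.mem_univ x') (sub_nonneg.2 ht1) ht.le (by ring)
    have h3 : (1 - t) • x + t • x' = x + t • (x' - x) := by module
    rw [h3] at h2
    have h4 : ‖x + t • (x' - x) - z‖ ^ 2 = ‖x - z‖ ^ 2 - 2 * (t * inner ℝ (z - x) (x' - x))
        + t ^ 2 * ‖x' - x‖ ^ 2 := by
      have : x + t • (x' - x) - z = (x - z) + t • (x' - x) := by abel
      rw [this, norm_add_sq_real, inner_smul_right, norm_smul, ← neg_sub z x, inner_neg_left,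
        norm_neg, mul_pow, Real.norm_eq_abs, sq_abs]
      ring
    rw [h4] at h1
    simp only [smul_eq_mul] at h2
    have : 0 ≤ t * ((f x' - f x - inner ℝ (z - x) (x' - x)) + t * (‖x' - x‖ ^ 2 / 2)) := by
      nlinarith
    exact nonneg_of_mul_nonneg_right this ht
  have hlim : Filter.Tendsto (fun t : ℝ => (f x' - f x - inner ℝ (z - x) (x' - x))
      + t * (‖x' - x‖ ^ 2 / 2)) (nhdsWithin 0 (Set.Ioi 0))
      (nhds ((f x' - f x - inner ℝ (z - x) (x' - x)) + 0 * (‖x' - x‖ ^ 2 / 2))) := by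
    apply Filter.Tendsto.mono_left _ nhdsWithin_le_nhds
    apply Continuous.tendsto
    fun_prop
  have := ge_of_tendsto hlim (by
    filter_upwards [Ioc_mem_nhdsGT (zero_lt_one)] with t ht using key t ht.1 ht.2)
  linarith

variable {f : E → ℝ} {S : E → E} (hS : ∀ z, IsSubgrad f (S z) (z - S z))

theorem IsSubgrad.mono {x y x' y' : E} (h : IsSubgrad f x y) (h' : IsSubgrad f x' y') :
    0 ≤ inner ℝ (y - y') (x - x') := by
  have h1 := h x'
  have h2 := h' x
  have h3 : inner ℝ y (x' - x) = - inner ℝ y (x - x') := by rw [← neg_sub, inner_neg_right]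
  rw [inner_sub_left]
  linarith

include hS in
theorem prox_unique {x y : E} (h : IsSubgrad f x y) : S (x + y) = x := by
  have h1 := (hS (x + y)).mono h
  have h2 : x + y - S (x + y) - y = - (S (x + y) - x) := by abel
  rw [h2, inner_neg_left, real_inner_self_eq_norm_sq] at h1
  have h3 : ‖S (x + y) - x‖ ^ 2 = 0 := by nlinarith [sq_nonneg ‖S (x + y) - x‖]
  exact sub_eq_zero.1 (norm_eq_zero.1 (pow_eq_zero_iff (two_ne_zero) |>.1 h3))

include hS in
theorem prox_firm (z z' : E) : ‖S z - S z'‖ ^ 2 ≤ inner ℝ (z - z') (S z - S z') := by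
  have h1 := (hS z).mono (hS z')
  have h2 : z - S z - (z' - S z') = (z - z') - (S z - S z') := by abel
  rw [h2, inner_sub_left, real_inner_self_eq_norm_sq] at h1
  linarith

include hS in
theorem prox_lip : LipschitzWith 1 S := by
  apply LipschitzWith.of_dist_le_mul
  intro z z'
  rw [dist_eq_norm, dist_eq_norm, NNReal.coe_one, one_mul]
  have h1 := prox_firm hS z z'
  have h2 := real_inner_le_norm (z - z') (S z - S z')
  by_contra hcon
  push Not at hcon
  nlinarith [norm_nonneg (S z - S z'), norm_nonneg (z - z')]

def env (f : E → ℝ) (S : E → E) (z : E) : ℝ := f (S z) + ‖S z - z‖ ^ 2 / 2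

include hS in
theorem env_upper (z z' : E) : env f S z' ≤ env f S z + inner ℝ (z - S z) (z' - z) + ‖z' - z‖ ^ 2 / 2 := by
  have h1 := hS z' (S z)
  unfold env
  have e1 : ‖S z' - z'‖ ^ 2 + 2 * inner ℝ (S z' - z') (S z - S z') + ‖S z - S z'‖ ^ 2
      = ‖S z - z'‖ ^ 2 := by
    rw [← norm_add_sq_real]; congr 2; abel
  have e2 : ‖S z - z'‖ ^ 2 = ‖S z - z‖ ^ 2 + 2 * inner ℝ (z - S z) (z' - z) + ‖z' - z‖ ^ 2 := by
    have : S z - z' = - ((z - S z) + (z' - z)) := by abel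
    rw [this, norm_neg, norm_add_sq_real, norm_sub_rev (S z)]
  have e3 : inner ℝ (S z' - z') (S z - S z') = - inner ℝ (z' - S z') (S z - S z') := by
    rw [← inner_neg_left, neg_sub]
  nlinarith [sq_nonneg ‖S z - S z'‖]

include hS in
theorem env_hasFDerivAt (z : E) : HasFDerivAt (env f S) (innerSL ℝ (z - S z)) z := by
  rw [hasFDerivAt_iff_isLittleO]
  have : (fun z' => env f S z' - env f S z - innerSL ℝ (z - S z) (z' - z)) =O[nhds z]
      fun z' => ‖z' - z‖ ^ 2 := by
    apply Asymptotics.IsBigO.of_bound 2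
    filter_upwards with z'
    have h1 := env_upper hS z z'
    have h2 := env_upper hS z' z
    have h3 : inner ℝ (z' - S z') (z - z') = - inner ℝ (z' - S z') (z' - z) := by
      rw [← inner_neg_right, neg_sub]
    have h4 : inner ℝ (z' - S z') (z' - z) = inner ℝ (z - S z) (z' - z) + ‖z' - z‖ ^ 2
        - inner ℝ (S z' - S z) (z' - z) := by
      rw [← real_inner_self_eq_norm_sq, ← inner_add_left, ← inner_sub_left]
      congr 1; abel
    have h5 := prox_firm hS z' z
    have h6 := real_inner_le_norm (S z' - S z) (z' - z)
    have h7 := (prox_lip hS).dist_le_mul z' z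
    rw [dist_eq_norm, dist_eq_norm, NNReal.coe_one, one_mul] at h7
    have h8 := real_inner_comm (S z' - S z) (z' - z)
    rw [norm_sub_rev z z'] at h2
    rw [norm_pow, norm_norm, innerSL_apply_apply, Real.norm_eq_abs, abs_le]
    constructor <;> nlinarith [norm_nonneg (S z' - S z), norm_nonneg (z' - z), sq_nonneg ‖S z' - S z‖]
  refine this.trans_isLittleO ?_
  have h := (Asymptotics.isLittleO_norm_pow_id (E' := E) (one_lt_two)).comp_tendsto
    (show Filter.Tendsto (fun z' => z' - z) (nhds z) (nhds 0) by
      have : Filter.Tendsto (fun z' => z' - z) (nhds z) (nhds (z - z)) :=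
        Continuous.tendsto (by fun_prop) z
      simpa using this)
  exact h

include hS in
theorem prox_symm {D : E →L[ℝ] E} {z : E} (hD : HasFDerivAt S D z) (u v : E) :
    inner ℝ (D u) v = inner ℝ u (D v) := by
  have h1 : HasFDerivAt (fun z => innerSL ℝ (z - S z))
      ((innerSL ℝ).comp (ContinuousLinearMap.id ℝ E - D)) z :=
    (innerSL ℝ).hasFDerivAt.comp z ((hasFDerivAt_id z).sub hD)
  have h2 := second_derivative_symmetric_of_eventually (f := env f S) (x := z)
    (Filter.Eventually.of_forall (fun y => env_hasFDerivAt hS y)) h1 u v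
  simp only [ContinuousLinearMap.comp_apply, ContinuousLinearMap.sub_apply,
    ContinuousLinearMap.id_apply, innerSL_apply_apply, inner_sub_left] at h2
  have := real_inner_comm u v
  have := real_inner_comm u (D v)
  linarith

include hS in
theorem prox_deriv_firm {D : E →L[ℝ] E} {z : E} (hD : HasFDerivAt S D z) (u : E) :
    ‖D u‖ ^ 2 ≤ inner ℝ (D u) u := by
  have hl : HasDerivAt (fun t : ℝ => S (z + t • u)) (D u) 0 := by
    have h0 : HasDerivAt (fun t : ℝ => z + t • u) u 0 := by
      simpa using ((hasDerivAt_id (0:ℝ)).smul_const u).const_add z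
    have hD' : HasFDerivAt S D (z + (0:ℝ) • u) := by simpa using hD
    exact hD'.comp_hasDerivAt (0:ℝ) h0
  rw [hasDerivAt_iff_tendsto_slope_zero] at hl
  simp only [zero_add, zero_smul, add_zero] at hl
  have h1 := (hl.norm.pow 2)
  have h2 := Filter.Tendsto.inner (𝕜 := ℝ) hl (tendsto_const_nhds (x := u))
  refine le_of_tendsto_of_tendsto h1 h2 ?_
  filter_upwards [self_mem_nhdsWithin] with t ht
  have h3 := prox_firm hS (z + t • u) z
  have ht' : t ≠ 0 := ht
  have e : z + t • u - z = t • u := by abel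
  rw [e, inner_smul_left] at h3
  simp only [norm_smul, mul_pow, inner_smul_left, norm_inv, Real.norm_eq_abs, inv_pow, sq_abs]
  simp only [conj_trivial] at h3 ⊢
  rw [real_inner_comm]
  have h5 : t⁻¹ * inner ℝ u (S (z + t • u) - S z) = (t ^ 2)⁻¹ * (t * inner ℝ u (S (z + t • u) - S z)) := by
    field_simp
  rw [h5]
  gcongr

end P1

section P2
open scoped BoundedContinuousFunction
variable {E : Type*} [NormedAddCommGroup E] [InnerProductSpace ℝ E] 

def cj {B : Set E} (g : B →ᵇ ℝ) (x : E) : ℝ := ⨆ y : B, (inner ℝ x (y:E) - g y)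

variable {B : Set E} [CompactSpace B] [Nonempty B]

theorem cj_max (g : B →ᵇ ℝ) (x : E) : ∃ y : B, cj g x = inner ℝ x (y:E) - g y ∧
    ∀ y' : B, inner ℝ x (y':E) - g y' ≤ inner ℝ x (y:E) - g y := by
  have hc : Continuous (fun y : B => inner ℝ x (y:E) - g y) := by
    have := g.continuous
    fun_prop
  obtain ⟨y, -, hy⟩ := isCompact_univ.exists_isMaxOn (Set.univ_nonempty) hc.continuousOn
  have hy' : ∀ y' : B, inner ℝ x (y':E) - g y' ≤ inner ℝ x (y:E) - g y := fun y' => hy (Set.mem_univ y')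
  refine ⟨y, le_antisymm (ciSup_le hy') ?_, hy'⟩
  exact le_ciSup (f := fun y : B => inner ℝ x (y:E) - g y) ⟨_, by rintro _ ⟨y', rfl⟩; exact hy' y'⟩ y

theorem le_cj (g : B →ᵇ ℝ) (x : E) (y : B) : inner ℝ x (y:E) - g y ≤ cj g x := by
  obtain ⟨y', h, h'⟩ := cj_max g x
  rw [h]; exact h' y

theorem cj_convex (g : B →ᵇ ℝ) : ConvexOn ℝ Set.univ (cj g) := by
  refine ⟨convex_univ, fun x _ x' _ a b ha hb hab => ?_⟩
  obtain ⟨y, h, -⟩ := cj_max g (a • x + b • x')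
  rw [h]
  have h1 := le_cj g x y
  have h2 := le_cj g x' y
  simp only [inner_add_left, inner_smul_left, conj_trivial, smul_eq_mul]
  have : g y = a * g y + b * g y := by rw [← add_mul, hab, one_mul]
  nlinarith

theorem cj_lip (g : B →ᵇ ℝ) {R : NNReal} (hR : ∀ y ∈ B, ‖y‖ ≤ R) : LipschitzWith R (cj g) := by
  apply LipschitzWith.of_le_add_mul
  intro x x'
  obtain ⟨y, h, -⟩ := cj_max g x
  have h1 := le_cj g x' y
  have h2 := real_inner_le_norm (x - x') (y:E)
  have h3 := hR y y.2
  rw [inner_sub_left] at h2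
  rw [h, dist_eq_norm]
  nlinarith [norm_nonneg (x - x')]

theorem cj_le_cj_add (g g' : B →ᵇ ℝ) (x : E) : cj g x ≤ cj g' x + dist g g' := by
  obtain ⟨y, h, -⟩ := cj_max g x
  have h1 := le_cj g' x y
  have h2 := BoundedContinuousFunction.dist_coe_le_dist (f := g) (g := g') y
  rw [Real.dist_eq, abs_sub_comm] at h2
  have := le_abs_self (g' y - g y)
  linarith

theorem exists_radius {A : Set E} (hA : IsCompact A) : ∃ R : NNReal, ∀ y ∈ A, ‖y‖ ≤ R := by
  obtain ⟨R, hR⟩ := hA.isBounded.exists_norm_le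
  exact ⟨⟨max R 0, le_max_right _ _⟩, fun y hy => (hR y hy).trans (le_max_left _ _)⟩

theorem cj_cont (g : B →ᵇ ℝ) : Continuous (cj g) := by
  obtain ⟨R, hR⟩ := exists_radius (isCompact_iff_compactSpace.2 ‹CompactSpace B›)
  exact (cj_lip g hR).continuous

def cjr (A : Set E) [CompactSpace A] (g : B →ᵇ ℝ) : A →ᵇ ℝ :=
  BoundedContinuousFunction.mkOfCompact ⟨fun x => cj g x, (cj_cont g).comp continuous_subtype_val⟩

theorem cjr_apply (A : Set E) [CompactSpace A] (g : B →ᵇ ℝ) (x : A) : cjr A g x = cj g x := rfl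

variable {A : Set E} [CompactSpace A] [Nonempty A]

theorem cjr_cjr_le (g : B →ᵇ ℝ) (y : B) : cjr B (cjr A g) y ≤ g y := by
  rw [cjr_apply]
  obtain ⟨x, h, -⟩ := cj_max (cjr A g) (y:E)
  rw [h, cjr_apply]
  have := le_cj g (x:E) y
  rw [real_inner_comm]
  linarith

theorem cj_cjr_cjr_le (g : B →ᵇ ℝ) (x : A) : cj (cjr B (cjr A g)) (x:E) ≤ cj g x := by
  obtain ⟨y, h, -⟩ := cj_max (cjr B (cjr A g)) (x:E)
  rw [h, cjr_apply]
  have := le_cj (cjr A g) (y:E) x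
  rw [real_inner_comm, cjr_apply] at this
  linarith

theorem cj_add_const (g : B →ᵇ ℝ) (c : ℝ) (x : E) :
    cj (g + BoundedContinuousFunction.const B c) x = cj g x - c := by
  apply le_antisymm
  · obtain ⟨y, h, -⟩ := cj_max (g + BoundedContinuousFunction.const B c) x
    have := le_cj g x y
    rw [h]
    simp
    linarith
  · obtain ⟨y, h, -⟩ := cj_max g x
    have := le_cj (g + BoundedContinuousFunction.const B c) x y
    rw [h]
    simp at this
    linarith

variable [MeasurableSpace E] [BorelSpace E]

def JJ (μ : Measure A) (ν : Measure B) (g : B →ᵇ ℝ) : ℝ := ∫ x, cjr A g x ∂μ + ∫ y, g y ∂ν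

variable (μ : Measure A) (ν : Measure B) [IsProbabilityMeasure μ] [IsProbabilityMeasure ν]

theorem JJ_cont : Continuous (JJ μ ν) := by
  apply LipschitzWith.continuous (K := 2)
  apply LipschitzWith.of_le_add_mul
  intro g g'
  unfold JJ
  have h1 : ∫ x, cjr A g x ∂μ ≤ ∫ x, cjr A g' x ∂μ + dist g g' := by
    have : ∫ x, cjr A g' x ∂μ + dist g g' = ∫ x, (cjr A g' x + dist g g') ∂μ := by
      rw [integral_add ((cjr A g').integrable μ) (integrable_const _)]; simp
    rw [this]
    apply integral_mono ((cjr A g).integrable μ) (((cjr A g').integrable μ).add (integrable_const _))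
    intro x
    exact cj_le_cj_add g g' x
  have h2 : ∫ x, g x ∂ν ≤ ∫ x, g' x ∂ν + dist g g' := by
    have : ∫ x, g' x ∂ν + dist g g' = ∫ x, (g' x + dist g g') ∂ν := by
      rw [integral_add (g'.integrable ν) (integrable_const _)]; simp
    rw [this]
    apply integral_mono (g.integrable ν) ((g'.integrable ν).add (integrable_const _))
    intro x
    have := BoundedContinuousFunction.dist_coe_le_dist (f := g) (g := g') x
    rw [Real.dist_eq] at this
    have := (le_abs_self _).trans this
    rw [Pi.add_apply]
    linarith
  simp only [NNReal.coe_ofNat]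
  linarith

theorem JJ_add_const (g : B →ᵇ ℝ) (c : ℝ) :
    JJ μ ν (g + BoundedContinuousFunction.const B c) = JJ μ ν g := by
  unfold JJ
  have h1 : ∫ x, cjr A (g + BoundedContinuousFunction.const B c) x ∂μ = ∫ x, cjr A g x ∂μ - c := by
    simp only [cjr_apply, cj_add_const]
    have := (cjr A g).integrable μ
    rw [integral_sub (f := fun x : A => cj g x) this (integrable_const _)]; simp
  have h2 : ∫ x, (g + BoundedContinuousFunction.const B c) x ∂ν = ∫ x, g x ∂ν + c := by
    simp only [BoundedContinuousFunction.coe_add, Pi.add_apply, BoundedContinuousFunction.const_apply]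
    rw [integral_add (g.integrable ν) (integrable_const _)]; simp
  rw [h1, h2]; ring

theorem JJ_cjr (g : B →ᵇ ℝ) : JJ μ ν (cjr B (cjr A g)) ≤ JJ μ ν g := by
  unfold JJ
  apply add_le_add
  · apply integral_mono ((cjr A _).integrable μ) ((cjr A _).integrable μ)
    intro x; exact cj_cjr_cjr_le g x
  · apply integral_mono (BoundedContinuousFunction.integrable ν _) (BoundedContinuousFunction.integrable ν _)
    intro x; exact cjr_cjr_le g x

theorem JJ_min : ∃ g : B →ᵇ ℝ, ∀ g', JJ μ ν g ≤ JJ μ ν g' := by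
  obtain ⟨RA, hRA⟩ := exists_radius (isCompact_iff_compactSpace.2 ‹CompactSpace A›)
  obtain ⟨RB, hRB⟩ := exists_radius (isCompact_iff_compactSpace.2 ‹CompactSpace B›)
  obtain ⟨y0⟩ := ‹Nonempty B›
  let F : Set (B →ᵇ ℝ) := {g | LipschitzWith RA g ∧ g y0 = 0}
  have hF : IsCompact F := by
    apply BoundedContinuousFunction.arzela_ascoli₂ (Metric.closedBall 0 (RA * (2 * RB))) (isCompact_closedBall _ _) F
    · have : F = (⋂ y : B, ⋂ y' : B, {g : B →ᵇ ℝ | dist (g y) (g y') ≤ RA * dist y y'}) ∩ {g | g y0 = 0} := by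
        ext g
        simp only [F, Set.mem_ofPred_eq, Set.mem_inter_iff, Set.mem_iInter, lipschitzWith_iff_dist_le_mul]
      rw [this]
      apply IsClosed.inter
      · refine isClosed_iInter fun y => isClosed_iInter fun y' => isClosed_le ?_ continuous_const
        exact (BoundedContinuousFunction.lipschitz_eval_const _).continuous.dist (BoundedContinuousFunction.lipschitz_eval_const _).continuous
      · exact isClosed_eq (BoundedContinuousFunction.lipschitz_eval_const _).continuous continuous_const
    · rintro g y ⟨h1, h2⟩
      rw [Metric.mem_closedBall, ← h2]
      refine (h1.dist_le_mul y y0).trans ?_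
      gcongr
      rw [Subtype.dist_eq, dist_eq_norm]
      have := norm_sub_le (y:E) y0
      linarith [hRB y y.2, hRB y0 y0.2]
    · exact (LipschitzWith.uniformEquicontinuous _ RA (fun g => g.2.1)).equicontinuous
  have hFn : ∀ g : B →ᵇ ℝ, (cjr B (cjr A g) + BoundedContinuousFunction.const B (-(cjr B (cjr A g) y0))) ∈ F := by
    intro g
    constructor
    · apply LipschitzWith.of_le_add_mul
      intro y y'
      simp only [BoundedContinuousFunction.coe_add, Pi.add_apply, BoundedContinuousFunction.const_apply, cjr_apply]
      have := (cj_lip (cjr A g) hRA).dist_le_mul y y'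
      rw [Real.dist_eq] at this
      have := (le_abs_self _).trans this
      rw [Subtype.dist_eq]
      linarith
    · simp
  obtain ⟨g, -, hg⟩ := hF.exists_isMinOn ⟨_, hFn 0⟩ (JJ_cont μ ν).continuousOn
  refine ⟨g, fun g' => ?_⟩
  refine (hg (hFn g')).trans ?_
  rw [JJ_add_const]
  exact JJ_cjr μ ν g'

theorem cj_subgrad (g : B →ᵇ ℝ) (x : E) (y : B) (h : ∀ y' : B, inner ℝ x (y':E) - g y' ≤ inner ℝ x (y:E) - g y) :
    IsSubgrad (cj g) x y := by
  intro x'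
  have h1 := le_cj g x' y
  obtain ⟨z, h2, -⟩ := cj_max g x
  have := h z
  have e : inner ℝ (y:E) (x' - x) = inner ℝ x' (y:E) - inner ℝ x (y:E) := by
    rw [inner_sub_right, real_inner_comm, real_inner_comm (x)]
  linarith

theorem IsSubgrad.eq_gradient [FiniteDimensional ℝ E] {f : E → ℝ} {x y : E} (h : IsSubgrad f x y) (hd : DifferentiableAt ℝ f x) :
    y = gradient f x := by
  have h1 : HasFDerivAt (fun x' => f x' - inner ℝ y x') (fderiv ℝ f x - innerSL ℝ y) x :=
    hd.hasFDerivAt.sub (innerSL ℝ y).hasFDerivAt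
  have h2 : IsLocalMin (fun x' => f x' - inner ℝ y x') x := by
    apply Filter.Eventually.of_forall
    intro x'
    have := h x'
    rw [inner_sub_right] at this
    simp only
    linarith
  have h3 := h2.hasFDerivAt_eq_zero h1
  rw [gradient, sub_eq_zero.1 h3]
  apply ext_inner_right ℝ
  intro v
  simp

theorem quot_tendsto [FiniteDimensional ℝ E] (g u : B →ᵇ ℝ) (x : E) (hd : DifferentiableAt ℝ (cj g) x) (y : B) (hy : (y:E) = gradient (cj g) x)
    {ε : ℕ → ℝ} (hε : ∀ k, 0 < ε k) (hε0 : Filter.Tendsto ε Filter.atTop (nhds 0)) :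
    Filter.Tendsto (fun k => (cj (g + ε k • u) x - cj g x) / ε k) Filter.atTop (nhds (- u y)) := by
  have huniq : ∀ z : B, (∀ y' : B, inner ℝ x (y':E) - g y' ≤ inner ℝ x (z:E) - g z) → z = y := by
    intro z hz
    apply Subtype.ext
    rw [hy]
    exact (cj_subgrad g x z hz).eq_gradient hd
  obtain ⟨z, hz1, hz2⟩ := cj_max g x
  obtain rfl := huniq z hz2
  choose w hw1 hw2 using fun k => cj_max (g + ε k • u) x
  have hwl : Filter.Tendsto w Filter.atTop (nhds z) := by
    apply le_nhds_of_unique_clusterPt (l := Filter.map w Filter.atTop)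
    intro p hp
    rw [← MapClusterPt, mapClusterPt_iff_frequently] at hp
    apply huniq
    intro y'
    have hψ : ∀ k, inner ℝ x (y':E) - g y' - ε k * (2 * ‖u‖) ≤ inner ℝ x (w k:E) - g (w k) := by
      intro k
      have := hw2 k y'
      simp only [BoundedContinuousFunction.coe_add, Pi.add_apply, BoundedContinuousFunction.coe_smul, smul_eq_mul] at this
      have h1 := u.norm_coe_le_norm y'
      have h2 := u.norm_coe_le_norm (w k)
      rw [Real.norm_eq_abs, abs_le] at h1 h2
      nlinarith [hε k]
    by_contra hcon
    push Not at hcon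
    have hopen : {z : B | inner ℝ x (z:E) - g z < (inner ℝ x (y':E) - g y' + (inner ℝ x (p:E) - g p)) / 2} ∈ nhds p := by
      apply IsOpen.mem_nhds
      · apply isOpen_lt _ continuous_const
        have := g.continuous
        fun_prop
      · simp only [Set.mem_ofPred_eq]; linarith
    have hev : ∀ᶠ k in Filter.atTop, ε k * (2 * ‖u‖) < (inner ℝ x (y':E) - g y' - (inner ℝ x (p:E) - g p)) / 2 := by
      have := hε0.mul_const (2 * ‖u‖)
      rw [zero_mul] at this
      exact this.eventually_lt_const (by linarith)
    obtain ⟨k, hk1, hk2⟩ := ((hp _ hopen).and_eventually hev).exists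
    simp only [Set.mem_ofPred_eq] at hk1
    linarith [hψ k]
  have h1 : Filter.Tendsto (fun k => - u (w k)) Filter.atTop (nhds (- u z)) :=
    ((u.continuous.tendsto z).comp hwl).neg
  refine tendsto_of_tendsto_of_tendsto_of_le_of_le tendsto_const_nhds h1 ?_ ?_
  · intro k
    have := le_cj (g + ε k • u) x z
    simp only [BoundedContinuousFunction.coe_add, Pi.add_apply, BoundedContinuousFunction.coe_smul, smul_eq_mul] at this
    simp only
    rw [le_div_iff₀ (hε k)]
    linarith
  · intro k
    have := hw1 k
    have h2 := le_cj g x (w k)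
    simp only [BoundedContinuousFunction.coe_add, Pi.add_apply, BoundedContinuousFunction.coe_smul, smul_eq_mul] at this
    simp only
    rw [div_le_iff₀ (hε k)]
    linarith

theorem measurable_gradient [FiniteDimensional ℝ E] (f : E → ℝ) : Measurable (gradient f) := by
  unfold gradient
  exact (LinearIsometryEquiv.continuous _).measurable.comp (measurable_fderiv ℝ f)

theorem brenier_sub [FiniteDimensional ℝ E] (hμ : (μ.map Subtype.val) ≪ (volume : Measure E)) : 
    ∃ g : B →ᵇ ℝ, (μ.map Subtype.val).map (gradient (cj g)) = ν.map Subtype.val := by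
  obtain ⟨g, hg⟩ := JJ_min μ ν
  refine ⟨g, ?_⟩
  have hmg := measurable_gradient (cj g)
  have : IsProbabilityMeasure (μ.map (Subtype.val : A → E)) :=
    Measure.isProbabilityMeasure_map measurable_subtype_coe.aemeasurable
  have : IsProbabilityMeasure ((μ.map Subtype.val).map (gradient (cj g))) :=
    Measure.isProbabilityMeasure_map hmg.aemeasurable
  have : IsProbabilityMeasure (ν.map (Subtype.val : B → E)) :=
    Measure.isProbabilityMeasure_map measurable_subtype_coe.aemeasurable
  obtain ⟨RB, hRB⟩ := exists_radius (isCompact_iff_compactSpace.2 ‹CompactSpace B›)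
  have hdiff : ∀ᵐ x : A ∂μ, DifferentiableAt ℝ (cj g) x := by
    have h1 := (cj_lip g hRB).ae_differentiableAt (μ := (volume : Measure E))
    have h2 := hμ.ae_le h1
    exact ae_of_ae_map measurable_subtype_coe.aemeasurable h2
  have key : ∀ u : E →ᵇ ℝ, ∫ x : A, u (gradient (cj g) x) ∂μ ≤ ∫ y : B, u y ∂ν := by
    intro U
    let u : B →ᵇ ℝ := U.compContinuous ⟨Subtype.val, continuous_subtype_val⟩
    let ε : ℕ → ℝ := fun k => 1 / ((k:ℝ) + 1)
    have hε : ∀ k, 0 < ε k := fun k => by positivity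
    have hε0 : Filter.Tendsto ε Filter.atTop (nhds 0) := tendsto_one_div_add_atTop_nhds_zero_nat
    have hlim : Filter.Tendsto (fun k => ∫ x : A, (cj (g + ε k • u) x - cj g x) / ε k ∂μ) Filter.atTop
        (nhds (∫ x : A, - U (gradient (cj g) x) ∂μ)) := by
      apply tendsto_integral_of_dominated_convergence (fun _ => ‖u‖)
      · intro k
        apply Continuous.aestronglyMeasurable
        have h1 := cj_cont (g + ε k • u)
        have h2 := cj_cont g
        fun_prop
      · exact integrable_const _
      · intro k
        filter_upwards with x
        have h1 := cj_le_cj_add (g + ε k • u) g x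
        have h2 := cj_le_cj_add g (g + ε k • u) x
        have h3 : dist (g + ε k • u) g = ε k * ‖u‖ := by
          rw [dist_eq_norm, add_sub_cancel_left, norm_smul, Real.norm_of_nonneg (hε k).le]
        rw [dist_comm] at h2
        rw [h3] at h1 h2
        rw [norm_div, Real.norm_of_nonneg (hε k).le, div_le_iff₀ (hε k), Real.norm_eq_abs, abs_le]
        constructor <;> linarith
      · filter_upwards [hdiff] with x hx
        obtain ⟨y, -, hy⟩ := cj_max g (x:E)
        have hy' := (cj_subgrad g x y hy).eq_gradient hx
        have := quot_tendsto g u x hx y hy' hε hε0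
        simpa [u, hy'] using this
    have h4 : ∀ k, 0 ≤ ∫ x : A, (cj (g + ε k • u) x - cj g x) / ε k ∂μ + ∫ y : B, U y ∂ν := by
      intro k
      have h1 := hg (g + ε k • u)
      unfold JJ at h1
      have h2 : ∫ x : A, (cj (g + ε k • u) x - cj g x) / ε k ∂μ
          = (∫ x : A, cjr A (g + ε k • u) x ∂μ - ∫ x : A, cjr A g x ∂μ) / ε k := by
        rw [← integral_sub (BoundedContinuousFunction.integrable _ _) (BoundedContinuousFunction.integrable _ _),
          ← integral_div]
        rfl
      have h3 : ∫ y, (g + ε k • u) y ∂ν = ∫ y, g y ∂ν + ε k * ∫ y : B, U y ∂ν := by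
        rw [← integral_const_mul, ← integral_add (g := fun a : B => ε k * U a) (BoundedContinuousFunction.integrable _ _)
          ((BoundedContinuousFunction.integrable ν u).const_mul _)]
        rfl
      rw [h2, div_add' _ _ _ (hε k).ne']
      apply div_nonneg _ (hε k).le
      rw [h3] at h1
      linarith
    have h5 := ge_of_tendsto' (hlim.add_const (∫ y : B, U y ∂ν)) h4
    rw [integral_neg] at h5
    linarith
  apply ext_of_forall_integral_eq_of_IsFiniteMeasure
  intro U
  rw [integral_map hmg.aemeasurable U.continuous.aestronglyMeasurable,
    integral_map (f := fun x => U (gradient (cj g) x)) measurable_subtype_coe.aemeasurable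
      (U.continuous.measurable.comp hmg).aestronglyMeasurable,
    integral_map measurable_subtype_coe.aemeasurable U.continuous.aestronglyMeasurable]
  apply le_antisymm (key U)
  have := key (-U)
  simp only [BoundedContinuousFunction.coe_neg, Pi.neg_apply, integral_neg] at this
  linarith

end P2

section P2b
variable {E : Type*} [NormedAddCommGroup E] [InnerProductSpace ℝ E] [FiniteDimensional ℝ E] 
  [MeasurableSpace E] [BorelSpace E]

theorem brenier {A B : Set E} (hA : IsCompact A) (hB : IsCompact B) (μ ν : Measure E)
    [IsProbabilityMeasure μ] [IsProbabilityMeasure ν] (hμA : μ Aᶜ = 0) (hνB : ν Bᶜ = 0)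
    (hμ : μ ≪ volume) : ∃ (f : E → ℝ) (L : NNReal), ConvexOn ℝ Set.univ f ∧ LipschitzWith L f ∧
      (∀ x, DifferentiableAt ℝ f x → gradient f x ∈ B ∧ IsSubgrad f x (gradient f x)) ∧
      μ.map (gradient f) = ν := by
  have : CompactSpace A := isCompact_iff_compactSpace.1 hA
  have : CompactSpace B := isCompact_iff_compactSpace.1 hB
  have aux : ∀ (D : Set E) (m : Measure E) [IsProbabilityMeasure m], IsCompact D → m Dᶜ = 0 →
      Nonempty D ∧ (m.comap (Subtype.val : D → E)).map Subtype.val = m := by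
    intro D m _ hD hm
    constructor
    · by_contra hcon
      have : D = ∅ := by
        rw [Set.eq_empty_iff_forall_notMem]; intro x hx; exact hcon ⟨⟨x, hx⟩⟩
      rw [this, Set.compl_empty, measure_univ] at hm
      exact one_ne_zero hm
    · rw [map_comap_subtype_coe hD.measurableSet]
      exact Measure.restrict_eq_self_of_ae_mem hm
  obtain ⟨nA, eA⟩ := aux A μ hA hμA
  obtain ⟨nB, eB⟩ := aux B ν hB hνB
  have : IsProbabilityMeasure (μ.comap (Subtype.val : A → E)) := by
    constructor
    have := congrArg (fun m => m Set.univ) eA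
    simpa [Measure.map_apply measurable_subtype_coe] using this
  have : IsProbabilityMeasure (ν.comap (Subtype.val : B → E)) := by
    constructor
    have := congrArg (fun m => m Set.univ) eB
    simpa [Measure.map_apply measurable_subtype_coe] using this
  obtain ⟨g, hg⟩ := brenier_sub (μ.comap (Subtype.val : A → E)) (ν.comap (Subtype.val : B → E)) (by rw [eA]; exact hμ)
  rw [eA, eB] at hg
  obtain ⟨RB, hRB⟩ := exists_radius hB
  refine ⟨cj g, RB, cj_convex g, cj_lip g hRB, ?_, hg⟩
  intro x hx
  obtain ⟨y, -, hy⟩ := cj_max g x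
  have hy' := cj_subgrad g x y hy
  rw [← hy'.eq_gradient hx]
  exact ⟨y.2, hy'⟩

end P2b

section P3
variable {E : Type*} [NormedAddCommGroup E] [InnerProductSpace ℝ E] [FiniteDimensional ℝ E] 
  [MeasurableSpace E] [BorelSpace E]

theorem lip_null {S : E → E} (hS : LipschitzWith 1 S) {N : Set E} (hN : volume N = 0) :
    volume (S '' N) = 0 := by
  have h1 : (volume : Measure E) ≪ (Measure.hausdorffMeasure (Module.finrank ℝ E : ℝ) : Measure E) :=
    Measure.absolutelyContinuous_isAddHaarMeasure _ _
  have h2 : (Measure.hausdorffMeasure (Module.finrank ℝ E : ℝ) : Measure E) ≪ (volume : Measure E) :=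
    Measure.absolutelyContinuous_isAddHaarMeasure _ _
  apply h1
  have := hS.hausdorffMeasure_image_le (d := (Module.finrank ℝ E : ℝ)) (by positivity) N
  rw [h2 hN, mul_zero] at this
  exact le_antisymm this bot_le

theorem ot_core {A B : Set E} (hA : IsCompact A) (hB : IsCompact B) (hA0 : volume A ≠ 0)
    (hB0 : volume B ≠ 0) : ∃ (S : E → E) (W : Set E), LipschitzWith 1 S ∧
    (∀ z z', ‖S z - S z'‖ ^ 2 ≤ inner ℝ (z - z') (S z - S z')) ∧
    (∀ z (D : E →L[ℝ] E), HasFDerivAt S D z → (∀ u v, inner ℝ (D u) v = inner ℝ u (D v)) ∧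
      ∀ u, ‖D u‖ ^ 2 ≤ inner ℝ (D u) u) ∧
    MeasurableSet W ∧ (∀ z ∈ W, S z ∈ A ∧ z - S z ∈ B ∧ DifferentiableAt ℝ S z) ∧
    ∫⁻ z in W, ENNReal.ofReal |(fderiv ℝ S z).det| = volume A ∧
    ∀ᵐ z ∂(volume.restrict W), volume B * ENNReal.ofReal |(fderiv ℝ S z).det| ≤
      volume A * ENNReal.ofReal |(ContinuousLinearMap.id ℝ E - fderiv ℝ S z).det| := by
  have hAt : volume A ≠ ⊤ := hA.measure_lt_top.ne
  have hBt : volume B ≠ ⊤ := hB.measure_lt_top.ne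
  have p1 : IsProbabilityMeasure (ProbabilityTheory.cond (volume : Measure E) A) :=
    ProbabilityTheory.cond_isProbabilityMeasure_of_finite hA0 hAt
  have p2 : IsProbabilityMeasure (ProbabilityTheory.cond (volume : Measure E) B) :=
    ProbabilityTheory.cond_isProbabilityMeasure_of_finite hB0 hBt
  obtain ⟨f, L, hfc, hfL, hfd, hpush⟩ := brenier hA hB
    (ProbabilityTheory.cond (volume : Measure E) A) (ProbabilityTheory.cond (volume : Measure E) B)
    (by rw [ProbabilityTheory.cond_apply hA.measurableSet]; simp)
    (by rw [ProbabilityTheory.cond_apply hB.measurableSet]; simp)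
    ProbabilityTheory.cond_absolutelyContinuous
  choose S hS using exists_prox hfc hfL
  have hSL := prox_lip hS
  have hmg := measurable_gradient f
  set T := gradient f with hT
  have hTS : ∀ x, DifferentiableAt ℝ f x → S (x + T x) = x := fun x hx =>
    prox_unique hS (hfd x hx).2
  let W0 : Set E := {z | S z ∈ A ∧ DifferentiableAt ℝ f (S z) ∧ z - S z = T (S z)}
  let W : Set E := W0 ∩ {z | DifferentiableAt ℝ S z}
  have hSm : Measurable S := hSL.continuous.measurable
  have hW0 : MeasurableSet W0 := by
    refine (hSm hA.measurableSet).inter ((hSm (measurableSet_of_differentiableAt ℝ f)).inter ?_)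
    exact measurableSet_eq_fun (measurable_id.sub hSm) (hmg.comp hSm)
  have hW : MeasurableSet W := hW0.inter (measurableSet_of_differentiableAt ℝ S)
  have hinj : Set.InjOn S W := by
    intro z hz z' hz' h
    have h1 := hz.1.2.2
    have h2 := hz'.1.2.2
    rw [h, sub_eq_iff_eq_add] at h1
    rw [sub_eq_iff_eq_add] at h2
    exact h1.trans h2.symm
  have harea : ∀ V ⊆ W, MeasurableSet V →
      ∫⁻ z in V, ENNReal.ofReal |(fderiv ℝ S z).det| = volume (S '' V) := fun V hV hVm =>
    lintegral_abs_det_fderiv_eq_addHaar_image volume hVm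
      (fun z hz => (hV hz).2.hasFDerivAt.hasFDerivWithinAt) (hinj.mono hV)
  have hSW : volume (S '' W) = volume A := by
    apply le_antisymm
    · apply measure_mono
      rintro _ ⟨z, hz, rfl⟩
      exact hz.1.1
    · have hsub : A ⊆ (S '' W ∪ S '' {z | ¬ DifferentiableAt ℝ S z}) ∪ {x | ¬ DifferentiableAt ℝ f x} := by
        intro x hx
        by_cases h1 : DifferentiableAt ℝ f x
        · left
          have h2 := hTS x h1
          by_cases h3 : DifferentiableAt ℝ S (x + T x)
          · left
            refine ⟨x + T x, ⟨⟨?_, ?_, ?_⟩, h3⟩, h2⟩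
            · rwa [h2]
            · rwa [h2]
            · rw [h2]; simp
          · right
            exact ⟨_, h3, h2⟩
        · right; exact h1
      refine (measure_mono hsub).trans ((measure_union_le _ _).trans ?_)
      have h1 : volume {x | ¬ DifferentiableAt ℝ f x} = 0 := hfL.ae_differentiableAt
      have h2 : volume (S '' {z | ¬ DifferentiableAt ℝ S z}) = 0 :=
        lip_null hSL hSL.ae_differentiableAt
      rw [h1, add_zero]
      refine (measure_union_le _ _).trans ?_
      rw [h2, add_zero]
  refine ⟨S, W, hSL, prox_firm hS, fun z D hD => ⟨prox_symm hS hD, prox_deriv_firm hS hD⟩, hW,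
    fun z hz => ⟨hz.1.1, ?_, hz.2⟩, ?_, ?_⟩
  · rw [hz.1.2.2]; exact (hfd _ hz.1.2.1).1
  · rw [harea W subset_rfl hW, hSW]
  have hmd : Measurable (fun z => fderiv ℝ S z) := measurable_fderiv ℝ S
  have hdet : Measurable (fun D : E →L[ℝ] E => D.det) := ContinuousLinearMap.continuous_det.measurable
  have hm1 : Measurable (fun z => volume B * ENNReal.ofReal |(fderiv ℝ S z).det|) := by
    have := hdet.comp hmd
    exact (ENNReal.measurable_ofReal.comp (continuous_abs.measurable.comp this)).const_mul _
  have hm2 : Measurable (fun z => ENNReal.ofReal |(fderiv ℝ S z).det|) := by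
    have := hdet.comp hmd
    exact (ENNReal.measurable_ofReal.comp (continuous_abs.measurable.comp this))
  have hm3 : Measurable (fun z => ENNReal.ofReal |(ContinuousLinearMap.id ℝ E - fderiv ℝ S z).det|) := by
    have := hdet.comp (hmd.const_sub (ContinuousLinearMap.id ℝ E))
    exact (ENNReal.measurable_ofReal.comp (continuous_abs.measurable.comp this))
  apply ae_le_of_forall_setLIntegral_le_of_sigmaFinite hm1
  intro s hs _
  rw [Measure.restrict_restrict hs, lintegral_const_mul _ hm2, lintegral_const_mul _ hm3]
  set V := s ∩ W with hV
  have hVm : MeasurableSet V := hs.inter hW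
  have hVW : V ⊆ W := Set.inter_subset_right
  rw [harea V hVW hVm]
  have hY : volume ((fun z => z - S z) '' V) ≤
      ∫⁻ z in V, ENNReal.ofReal |(ContinuousLinearMap.id ℝ E - fderiv ℝ S z).det| :=
    addHaar_image_le_lintegral_abs_det_fderiv volume hVm
      (fun z hz => (((hasFDerivAt_id z).sub (hVW hz).2.hasFDerivAt).hasFDerivWithinAt))
  set M := toMeasurable volume ((fun z => z - S z) '' V) with hM
  have hMm : MeasurableSet M := measurableSet_toMeasurable _ _
  have hsub : S '' V ⊆ A ∩ T ⁻¹' M := by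
    rintro _ ⟨z, hz, rfl⟩
    refine ⟨(hVW hz).1.1, ?_⟩
    rw [Set.mem_preimage, ← (hVW hz).1.2.2]
    exact subset_toMeasurable _ _ ⟨z, hz, rfl⟩
  have h1 : ProbabilityTheory.cond volume A (T ⁻¹' M) = ProbabilityTheory.cond volume B M := by
    rw [← hpush, Measure.map_apply hmg hMm]
  rw [ProbabilityTheory.cond_apply hA.measurableSet, ProbabilityTheory.cond_apply hB.measurableSet] at h1
  have h2 : volume B * volume (A ∩ T ⁻¹' M) = volume A * volume (B ∩ M) := by
    have := congrArg (fun t => volume A * volume B * t) h1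
    beta_reduce at this
    calc volume B * volume (A ∩ T ⁻¹' M) = (volume A * (volume A)⁻¹) * (volume B * volume (A ∩ T ⁻¹' M)) := by
          rw [ENNReal.mul_inv_cancel hA0 hAt, one_mul]
      _ = volume A * volume B * ((volume A)⁻¹ * volume (A ∩ T ⁻¹' M)) := by ring
      _ = (volume B * (volume B)⁻¹) * (volume A * volume (B ∩ M)) := by rw [this]; ring
      _ = _ := by rw [ENNReal.mul_inv_cancel hB0 hBt, one_mul]
  calc volume B * volume (S '' V) ≤ volume B * volume (A ∩ T ⁻¹' M) := by gcongr
    _ = volume A * volume (B ∩ M) := h2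
    _ ≤ volume A * volume M := by gcongr; exact Set.inter_subset_right
    _ = volume A * volume ((fun z => z - S z) '' V) := by rw [hM, measure_toMeasurable]
    _ ≤ _ := by gcongr

end P3

section P4
variable {E : Type*} [NormedAddCommGroup E] [InnerProductSpace ℝ E] [FiniteDimensional ℝ E] 

theorem det_of_eigen {ι : Type*} [Fintype ι] [DecidableEq ι] (e : OrthonormalBasis ι ℝ E)
    (N : E →L[ℝ] E) (μ : ι → ℝ) (h : ∀ i, N (e i) = μ i • e i) : N.det = ∏ i, μ i := by
  have h1 : LinearMap.toMatrix e.toBasis e.toBasis (N : E →ₗ[ℝ] E) = Matrix.diagonal μ := by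
    ext i j
    rw [LinearMap.toMatrix_apply]
    simp only [OrthonormalBasis.coe_toBasis, ContinuousLinearMap.coe_coe, h, map_smul]
    rw [← OrthonormalBasis.coe_toBasis, Module.Basis.repr_self]
    simp [Matrix.diagonal_apply, Finsupp.single_apply]
    split_ifs with h1 h2 h2
    · rw [h1]
    · exact absurd h1.symm h2
    · exact absurd h2.symm h1
    · rfl
  rw [ContinuousLinearMap.det, ← LinearMap.det_toMatrix e.toBasis, h1, Matrix.det_diagonal]

theorem la {D : E →L[ℝ] E} (hs : ∀ u v, inner ℝ (D u) v = inner ℝ u (D v))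
    (hf : ∀ u, ‖D u‖ ^ 2 ≤ inner ℝ (D u) u) : ∃ l : Fin (Module.finrank ℝ E) → ℝ,
    (∀ i, 0 ≤ l i ∧ l i ≤ 1) ∧ D.det = ∏ i, l i ∧
    (ContinuousLinearMap.id ℝ E - D).det = ∏ i, (1 - l i) ∧
    ∀ {ι : Type} [Fintype ι] (b : OrthonormalBasis ι ℝ E),
      ∑ j, ‖(2:ℝ) • D (b j) - b j‖ ^ 2 = ∑ i, (2 * l i - 1) ^ 2 := by
  have hsym : (D : E →ₗ[ℝ] E).IsSymmetric := hs
  let e := hsym.eigenvectorBasis rfl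
  let l := hsym.eigenvalues rfl
  have he : ∀ i, D (e i) = l i • e i := fun i => hsym.apply_eigenvectorBasis rfl i
  have hen : ∀ i, ‖e i‖ = 1 := fun i => e.orthonormal.1 i
  refine ⟨l, ?_, det_of_eigen e D l he, det_of_eigen e _ _ ?_, ?_⟩
  · intro i
    have := hf (e i)
    rw [he, norm_smul, inner_smul_left, real_inner_self_eq_norm_sq, hen] at this
    simp at this
    constructor <;> nlinarith [sq_nonneg (l i)]
  · intro i
    rw [sub_apply, he, ContinuousLinearMap.id_apply, sub_smul, one_smul]
  · intro ι _ b
    have h1 : ∀ j, ‖(2:ℝ) • D (b j) - b j‖ ^ 2 = ∑ i, (2 * l i - 1) ^ 2 * ‖inner ℝ (e i) (b j)‖ ^ 2 := by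
      intro j
      rw [← e.sum_sq_norm_inner_right]
      refine Finset.sum_congr rfl fun i _ => ?_
      rw [inner_sub_right, inner_smul_right, ← hs, he, inner_smul_left]
      simp only [conj_trivial, Real.norm_eq_abs, sq_abs]
      ring
    simp only [h1]
    rw [Finset.sum_comm]
    refine Finset.sum_congr rfl fun i _ => ?_
    rw [← Finset.mul_sum, b.sum_sq_norm_inner_left, hen]
    ring

theorem scal_add {n : ℕ} (hn : 0 < n) (l : Fin n → ℝ) (hl : ∀ i, 0 ≤ l i ∧ l i ≤ 1) {a b : ℝ}
    (ha : 0 < a) (hb : 0 < b) (h : b ^ n * ∏ i, l i ≤ a ^ n * ∏ i, (1 - l i)) :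
    (a + b) ^ n * ∏ i, l i ≤ a ^ n := by
  have hn' : (n:ℝ) ≠ 0 := by positivity
  have amgm : ∀ w : Fin n → ℝ, (∀ i, 0 ≤ w i) → (∏ i, w i) ^ ((n:ℝ)⁻¹) ≤ (n:ℝ)⁻¹ * ∑ i, w i := by
    intro w hw
    have := Real.geom_mean_le_arith_mean_weighted Finset.univ (fun _ : Fin n => (n:ℝ)⁻¹) w
      (fun i _ => by positivity) (by simp [hn']) (fun i _ => hw i)
    rw [Real.finsetProd_rpow _ _ (fun i _ => hw i)] at this
    rwa [Finset.mul_sum]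
  set p := ∏ i, l i with hp
  set q := ∏ i, (1 - l i) with hq
  have hp0 : 0 ≤ p := Finset.prod_nonneg fun i _ => (hl i).1
  have hq0 : 0 ≤ q := Finset.prod_nonneg fun i _ => sub_nonneg.2 (hl i).2
  have h1 := amgm l (fun i => (hl i).1)
  have h2 := amgm (fun i => 1 - l i) (fun i => sub_nonneg.2 (hl i).2)
  rw [← hp] at h1
  rw [← hq] at h2
  have h3 : (n:ℝ)⁻¹ * ∑ i, (1 - l i) = 1 - (n:ℝ)⁻¹ * ∑ i, l i := by
    rw [Finset.sum_sub_distrib]; simp; field_simp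
  rw [h3] at h2
  have h4 : b * p ^ ((n:ℝ)⁻¹) ≤ a * q ^ ((n:ℝ)⁻¹) := by
    have := Real.rpow_le_rpow (by positivity) h (show 0 ≤ (n:ℝ)⁻¹ by positivity)
    rwa [Real.mul_rpow (by positivity) hp0, Real.mul_rpow (by positivity) hq0,
      Real.pow_rpow_inv_natCast hb.le hn.ne', Real.pow_rpow_inv_natCast ha.le hn.ne'] at this
  have h5 : (a + b) * p ^ ((n:ℝ)⁻¹) ≤ a := by nlinarith
  have h6 : ((a + b) * p ^ ((n:ℝ)⁻¹)) ^ n ≤ a ^ n := by gcongr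
  rwa [mul_pow, Real.rpow_inv_natCast_pow hp0 hn.ne'] at h6

theorem scal_eq {n : ℕ} (hn : 0 < n) (l : Fin n → ℝ) (hl : ∀ i, 0 ≤ l i ∧ l i ≤ 1)
    (h : ∏ i, l i ≤ ∏ i, (1 - l i)) :
    2 ^ n * ∏ i, l i ≤ 1 - (∑ i, (2 * l i - 1) ^ 2) / (2 * n) := by
  have hp0 : 0 ≤ ∏ i, l i := Finset.prod_nonneg fun i _ => (hl i).1
  set p := ∏ i, l i with hp
  set s := ∑ i, (2 * l i - 1) ^ 2 with hs
  have hm : ∀ i, (2 * l i - 1) ^ 2 ≤ 1 := fun i => by nlinarith [hl i]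
  have hs1 : s ≤ n := by
    calc s ≤ ∑ i : Fin n, (1:ℝ) := Finset.sum_le_sum fun i _ => hm i
      _ = n := by simp
  have h1 : (2 ^ n * p) ^ 2 ≤ ∏ i, (1 - (2 * l i - 1) ^ 2) := by
    have e : ∏ i, (1 - (2 * l i - 1) ^ 2) = (2 ^ n) ^ 2 * (p * ∏ i, (1 - l i)) := by
      rw [hp, ← Finset.prod_mul_distrib]
      have : ((2:ℝ) ^ n) ^ 2 = ∏ i : Fin n, (4:ℝ) := by
        rw [Finset.prod_const, Finset.card_univ, Fintype.card_fin, ← pow_mul, mul_comm n 2, pow_mul]; norm_num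
      rw [this, ← Finset.prod_mul_distrib]
      refine Finset.prod_congr rfl fun i _ => by ring
    rw [e, mul_pow]
    gcongr
    nlinarith
  have h2 : ∏ i, (1 - (2 * l i - 1) ^ 2) ≤ 1 - s / n := by
    have : Nonempty (Fin n) := ⟨⟨0, hn⟩⟩
    obtain ⟨k, -, hk⟩ := Finset.exists_max_image Finset.univ (fun i => (2 * l i - 1) ^ 2) Finset.univ_nonempty
    have h3 : s ≤ n * (2 * l k - 1) ^ 2 := by
      calc s ≤ ∑ i : Fin n, (2 * l k - 1) ^ 2 := Finset.sum_le_sum fun i _ => hk i (Finset.mem_univ i)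
        _ = _ := by simp
    have h4 : ∏ i, (1 - (2 * l i - 1) ^ 2) ≤ 1 - (2 * l k - 1) ^ 2 := by
      rw [← Finset.mul_prod_erase _ _ (Finset.mem_univ k)]
      have : ∏ i ∈ Finset.univ.erase k, (1 - (2 * l i - 1) ^ 2) ≤ 1 :=
        Finset.prod_le_one (fun i _ => by linarith [hm i]) (fun i _ => by linarith [sq_nonneg (2 * l i - 1)])
      nlinarith [hm k]
    have h5 : s / n ≤ (2 * l k - 1) ^ 2 := by
      rw [div_le_iff₀ (by positivity)]; linarith
    linarith
  have hs0 : 0 ≤ s := Finset.sum_nonneg fun i _ => sq_nonneg _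
  have h6 : s / (2 * n) = s / n / 2 := by field_simp
  rw [h6]
  have h7 : s / n ≤ 1 := by rw [div_le_one (by positivity)]; exact hs1
  have h8 : 0 ≤ s / n := by positivity
  apply le_of_sq_le_sq _ (by linarith)
  nlinarith

variable [MeasurableSpace E] [BorelSpace E]

theorem bm_add {A B : Set E} (hE : 0 < Module.finrank ℝ E) (hA : IsCompact A) (hB : IsCompact B) {a b : ℝ} (ha : 0 < a) (hb : 0 < b)
    (hAa : volume A = ENNReal.ofReal (a ^ Module.finrank ℝ E))
    (hBb : volume B = ENNReal.ofReal (b ^ Module.finrank ℝ E)) :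
    ENNReal.ofReal ((a + b) ^ Module.finrank ℝ E) ≤ volume (A + B) := by
  set n := Module.finrank ℝ E with hn
  obtain ⟨S, W, hSL, hfirm, hD, hWm, hWW, hint, hae⟩ := ot_core hA hB
    (by rw [hAa]; simp; positivity) (by rw [hBb]; simp; positivity)
  have hWsub : W ⊆ A + B := fun z hz => ⟨S z, (hWW z hz).1, z - S z, (hWW z hz).2.1, by simp⟩
  have key : ∀ᵐ z ∂(volume.restrict W), ENNReal.ofReal |(fderiv ℝ S z).det| ≤
      ENNReal.ofReal (a ^ n / (a + b) ^ n) := by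
    filter_upwards [hae, ae_restrict_mem hWm] with z hz hzW
    have hd := (hWW z hzW).2.2.hasFDerivAt
    obtain ⟨l, hl, h1, h2, -⟩ := la (hD z _ hd).1 (hD z _ hd).2
    rw [hAa, hBb, h1, h2, ← ENNReal.ofReal_mul (by positivity), ← ENNReal.ofReal_mul (by positivity),
      abs_of_nonneg (Finset.prod_nonneg fun i _ => (hl i).1),
      abs_of_nonneg (Finset.prod_nonneg fun i _ => sub_nonneg.2 (hl i).2),
      ENNReal.ofReal_le_ofReal_iff (mul_nonneg (by positivity) (Finset.prod_nonneg fun i _ => sub_nonneg.2 (hl i).2))] at hz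
    rw [h1, abs_of_nonneg (Finset.prod_nonneg fun i _ => (hl i).1)]
    apply ENNReal.ofReal_le_ofReal
    rw [le_div_iff₀ (by positivity), mul_comm]
    exact scal_add hE l hl ha hb hz
  have h1 := lintegral_mono_ae key
  rw [hint, lintegral_const, hAa, Measure.restrict_apply_univ] at h1
  have h2 : ENNReal.ofReal (a ^ n) ≤ ENNReal.ofReal (a ^ n / (a + b) ^ n) * volume (A + B) :=
    h1.trans (by gcongr)
  have hfin : volume (A + B) ≠ ⊤ := (hA.add hB).measure_lt_top.ne
  rw [← ENNReal.ofReal_toReal hfin] at h2 ⊢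
  rw [← ENNReal.ofReal_mul (by positivity), ENNReal.ofReal_le_ofReal_iff (by positivity)] at h2
  apply ENNReal.ofReal_le_ofReal
  rw [div_mul_eq_mul_div, le_div_iff₀ (by positivity)] at h2
  exact le_of_mul_le_mul_left h2 (by positivity)

theorem ot_equal {A B : Set E} (hE : 0 < Module.finrank ℝ E) (hA : IsCompact A) (hB : IsCompact B) {V : ℝ} (hV : 0 < V)
    (hAa : volume A = ENNReal.ofReal V) (hBb : volume B = ENNReal.ofReal V) :
    ∃ (G : E → E) (W : Set E), LipschitzWith 1 G ∧ MeasurableSet W ∧ W ⊆ A + B ∧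
      (∀ z ∈ W, (2:ℝ)⁻¹ • (z + G z) ∈ A ∧ (2:ℝ)⁻¹ • (z - G z) ∈ B) ∧
      volume.real ((A + B) \ W) ≤ volume.real (A + B) - 2 ^ Module.finrank ℝ E * V ∧
      ∫ z in (A + B), ∑ j, ‖fderiv ℝ G z (stdOrthonormalBasis ℝ E j)‖ ^ 2 ≤
        3 * Module.finrank ℝ E * (volume.real (A + B) - 2 ^ Module.finrank ℝ E * V) := by
  set n := Module.finrank ℝ E with hn
  obtain ⟨S, W, hSL, hfirm, hD, hWm, hWW, hint, hae⟩ := ot_core hA hB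
    (by rw [hAa]; simp; positivity) (by rw [hBb]; simp; positivity)
  have hWsub : W ⊆ A + B := fun z hz => ⟨S z, (hWW z hz).1, z - S z, (hWW z hz).2.1, by simp⟩
  let G : E → E := fun z => (2:ℝ) • S z - z
  have hGL : LipschitzWith 1 G := by
    apply LipschitzWith.of_dist_le_mul
    intro z z'
    rw [dist_eq_norm, dist_eq_norm, NNReal.coe_one, one_mul]
    apply le_of_sq_le_sq _ (norm_nonneg _)
    have e : G z - G z' = (2:ℝ) • (S z - S z') - (z - z') := by simp only [G]; module
    rw [e, norm_sub_sq_real, norm_smul, inner_smul_left, real_inner_comm]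
    have := hfirm z z'
    simp
    nlinarith
  have hZc : IsCompact (A + B) := hA.add hB
  have hZfin : volume (A + B) ≠ ⊤ := hZc.measure_lt_top.ne
  have hWfin : volume W ≠ ⊤ := ne_top_of_le_ne_top hZfin (measure_mono hWsub)
  -- pointwise facts
  let s : E → ℝ := fun z => ∑ j, ‖fderiv ℝ G z (stdOrthonormalBasis ℝ E j)‖ ^ 2
  have hsm : Measurable s := by
    apply Finset.measurable_sum
    intro j _
    exact ((measurable_fderiv_apply_const ℝ G _).norm).pow_const 2
  have hs : ∀ z, DifferentiableAt ℝ S z → ∃ l : Fin n → ℝ, (∀ i, 0 ≤ l i ∧ l i ≤ 1) ∧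
      (fderiv ℝ S z).det = ∏ i, l i ∧ (ContinuousLinearMap.id ℝ E - fderiv ℝ S z).det = ∏ i, (1 - l i) ∧
      s z = ∑ i, (2 * l i - 1) ^ 2 := by
    intro z hz
    obtain ⟨l, hl, h1, h2, h3⟩ := la (hD z _ hz.hasFDerivAt).1 (hD z _ hz.hasFDerivAt).2
    refine ⟨l, hl, h1, h2, ?_⟩
    rw [← h3 (stdOrthonormalBasis ℝ E)]
    have : HasFDerivAt G ((2:ℝ) • fderiv ℝ S z - ContinuousLinearMap.id ℝ E) z :=
      (hz.hasFDerivAt.const_smul (2:ℝ)).sub (hasFDerivAt_id z)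
    simp only [s, this.fderiv]
    rfl
  have hs0 : ∀ z, 0 ≤ s z := fun z => Finset.sum_nonneg fun j _ => by positivity
  have hsn : ∀ z, s z ≤ n := by
    intro z
    calc s z ≤ ∑ j : Fin n, (1:ℝ) := by
          apply Finset.sum_le_sum
          intro j _
          have h1 : ‖fderiv ℝ G z‖ ≤ 1 := norm_fderiv_le_of_lipschitz ℝ hGL
          have h2 := (fderiv ℝ G z).le_opNorm (stdOrthonormalBasis ℝ E j)
          rw [(stdOrthonormalBasis ℝ E).orthonormal.1 j, mul_one] at h2
          have h3 := norm_nonneg (fderiv ℝ G z (stdOrthonormalBasis ℝ E j))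
          nlinarith
      _ = n := by simp
  have hsint : ∀ U : Set E, volume U ≠ ⊤ → IntegrableOn s U := by
    intro U hU
    refine Measure.integrableOn_of_bounded (M := n) hU hsm.aestronglyMeasurable ?_
    filter_upwards with z
    rw [Real.norm_of_nonneg (hs0 z)]; exact hsn z
  have hdm : Measurable (fun z => (fderiv ℝ S z).det) := by
    exact ContinuousLinearMap.continuous_det.measurable.comp (measurable_fderiv ℝ S)
  have hdet0 : ∀ z ∈ W, 0 ≤ (fderiv ℝ S z).det ∧ (fderiv ℝ S z).det ≤ 1 := by
    intro z hz
    obtain ⟨l, hl, h1, -⟩ := hs z (hWW z hz).2.2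
    rw [h1]
    exact ⟨Finset.prod_nonneg fun i _ => (hl i).1, Finset.prod_le_one (fun i _ => (hl i).1) fun i _ => (hl i).2⟩
  have hdint : IntegrableOn (fun z => (fderiv ℝ S z).det) W := by
    refine Measure.integrableOn_of_bounded (M := 1) hWfin hdm.aestronglyMeasurable ?_
    filter_upwards [ae_restrict_mem hWm] with z hz
    rw [Real.norm_of_nonneg (hdet0 z hz).1]; exact (hdet0 z hz).2
  have hdV : ∫ z in W, (fderiv ℝ S z).det = V := by
    have h1 : ENNReal.ofReal (∫ z in W, (fderiv ℝ S z).det) = ENNReal.ofReal V := by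
      rw [ofReal_integral_eq_lintegral_ofReal hdint
        (by filter_upwards [ae_restrict_mem hWm] with z hz using (hdet0 z hz).1), ← hAa, ← hint]
      apply setLIntegral_congr_fun hWm
      intro z hz
      simp only [abs_of_nonneg (hdet0 z hz).1]
    have h2 : 0 ≤ ∫ z in W, (fderiv ℝ S z).det := setIntegral_nonneg hWm fun z hz => (hdet0 z hz).1
    rwa [ENNReal.ofReal_eq_ofReal_iff h2 hV.le] at h1
  have hineq : ∫ z in W, (2 ^ n * (fderiv ℝ S z).det) ≤ ∫ z in W, (1 - s z / (2 * n)) := by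
    apply setIntegral_mono_ae_restrict (hdint.const_mul _)
      ((integrableOn_const hWfin).sub ((hsint W hWfin).div_const _))
    filter_upwards [hae, ae_restrict_mem hWm] with z hz hzW
    obtain ⟨l, hl, h1, h2, h3⟩ := hs z (hWW z hzW).2.2
    rw [hAa, hBb, h1, h2, ← ENNReal.ofReal_mul (by positivity), ← ENNReal.ofReal_mul (by positivity),
      abs_of_nonneg (Finset.prod_nonneg fun i _ => (hl i).1),
      abs_of_nonneg (Finset.prod_nonneg fun i _ => sub_nonneg.2 (hl i).2),
      ENNReal.ofReal_le_ofReal_iff (mul_nonneg (by positivity) (Finset.prod_nonneg fun i _ => sub_nonneg.2 (hl i).2))] at hz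
    show _ ≤ 1 - s z / (2 * n)
    rw [h1, h3]
    exact scal_eq hE l hl (le_of_mul_le_mul_left hz hV)
  rw [integral_const_mul, hdV, integral_sub (f := fun _ => (1:ℝ)) (integrableOn_const (C := (1:ℝ)) hWfin).integrable ((hsint W hWfin).integrable.div_const _),
    setIntegral_const, integral_div, smul_eq_mul, mul_one] at hineq
  have hWZ : volume.real W ≤ volume.real (A + B) := measureReal_mono hWsub hZfin
  have hdiff : volume.real ((A + B) \ W) = volume.real (A + B) - volume.real W :=
    measureReal_sdiff hWsub hWm hZfin
  have hsW0 : 0 ≤ ∫ z in W, s z := setIntegral_nonneg hWm fun z _ => hs0 z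
  have hn0 : (0:ℝ) < n := by exact_mod_cast hE
  have hq : (∫ z in W, s z) / (2 * n) * (2 * n) = ∫ z in W, s z := div_mul_cancel₀ _ (by positivity)
  have hq0 : 0 ≤ (∫ z in W, s z) / (2 * n) := by positivity
  refine ⟨G, W, hGL, hWm, hWsub, ?_, ?_, ?_⟩
  · intro z hz
    have e1 : (2:ℝ)⁻¹ • (z + G z) = S z := by simp only [G]; module
    have e2 : (2:ℝ)⁻¹ • (z - G z) = z - S z := by simp only [G]; module
    rw [e1, e2]
    exact ⟨(hWW z hz).1, (hWW z hz).2.1⟩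
  · rw [hdiff]; linarith
  · have h1 : ∫ z in (A + B), s z = (∫ z in W, s z) + ∫ z in (A + B) \ W, s z := by
      rw [← setIntegral_union Set.disjoint_sdiff_right (hZc.measurableSet.diff hWm) (hsint _ hWfin)
        (hsint _ (ne_top_of_le_ne_top hZfin (measure_mono Set.sdiff_subset))), Set.union_diff_cancel hWsub]
    have h2 : ∫ z in (A + B) \ W, s z ≤ n * volume.real ((A + B) \ W) := by
      have hf := ne_top_of_le_ne_top hZfin (measure_mono (Set.sdiff_subset (s := A + B) (t := W)))
      have := setIntegral_mono_on (hsint _ hf) (integrableOn_const (C := (n:ℝ)) hf)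
        (hZc.measurableSet.diff hWm) (fun z _ => hsn z)
      rwa [setIntegral_const, smul_eq_mul, mul_comm] at this
    show ∫ z in (A + B), s z ≤ _
    rw [h1]
    rw [hdiff] at h2
    nlinarith
end P4

section P5

theorem bm_mul_E {E : Type*} [NormedAddCommGroup E] [InnerProductSpace ℝ E] [FiniteDimensional ℝ E] 
    [MeasurableSpace E] [BorelSpace E] (hE : 0 < Module.finrank ℝ E) {A B : Set E}
    (hA : IsCompact A) (hB : IsCompact B) :
    volume A * volume B ≤ volume ((2:ℝ)⁻¹ • (A + B)) ^ 2 := by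
  by_cases hA0 : volume A = 0
  · rw [hA0, zero_mul]; exact bot_le
  by_cases hB0 : volume B = 0
  · rw [hB0, mul_zero]; exact bot_le
  set n := Module.finrank ℝ E with hn
  have hAt : volume A ≠ ⊤ := hA.measure_lt_top.ne
  have hBt : volume B ≠ ⊤ := hB.measure_lt_top.ne
  have ha : 0 < (volume A).toReal := ENNReal.toReal_pos hA0 hAt
  have hb : 0 < (volume B).toReal := ENNReal.toReal_pos hB0 hBt
  set a := (volume A).toReal ^ ((n:ℝ)⁻¹) with haa
  set b := (volume B).toReal ^ ((n:ℝ)⁻¹) with hbb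
  have ha0 : 0 < a := by positivity
  have hb0 : 0 < b := by positivity
  have ha1 : volume A = ENNReal.ofReal (a ^ n) := by
    rw [haa, Real.rpow_inv_natCast_pow ha.le hE.ne', ENNReal.ofReal_toReal hAt]
  have hb1 : volume B = ENNReal.ofReal (b ^ n) := by
    rw [hbb, Real.rpow_inv_natCast_pow hb.le hE.ne', ENNReal.ofReal_toReal hBt]
  have h := bm_add hE hA hB ha0 hb0 ha1 hb1
  rw [Measure.addHaar_smul, ha1, hb1, ← ENNReal.ofReal_mul (by positivity)]
  rw [← hn] at h ⊢
  calc ENNReal.ofReal (a ^ n * b ^ n) ≤ ENNReal.ofReal ((|((2:ℝ)⁻¹) ^ n| * (a + b) ^ n) ^ 2) := by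
        apply ENNReal.ofReal_le_ofReal
        rw [abs_of_pos (by positivity), ← mul_pow, ← mul_pow, ← pow_mul, mul_comm n 2, pow_mul]
        gcongr
        nlinarith [sq_nonneg (a - b)]
    _ = (ENNReal.ofReal |((2:ℝ)⁻¹) ^ n| * ENNReal.ofReal ((a + b) ^ n)) ^ 2 := by
        rw [ENNReal.ofReal_pow (by positivity), ENNReal.ofReal_mul (by positivity)]
    _ ≤ _ := by gcongr

theorem bm_mul {F : Type*} [NormedAddCommGroup F] [NormedSpace ℝ F] [FiniteDimensional ℝ F] 
    [MeasurableSpace F] [BorelSpace F] (μ : Measure F) [μ.IsAddHaarMeasure]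
    (hE : 0 < Module.finrank ℝ F) {A B : Set F}
    (hA : IsCompact A) (hB : IsCompact B) :
    μ A * μ B ≤ μ ((2:ℝ)⁻¹ • (A + B)) ^ 2 := by
  let φ : F ≃L[ℝ] EuclideanSpace ℝ (Fin (Module.finrank ℝ F)) := toEuclidean
  have hφ : Measurable φ := φ.continuous.measurable
  have : (μ.map φ).IsAddHaarMeasure := φ.isAddHaarMeasure_map μ
  have hc := Measure.isAddLeftInvariant_eq_smul (μ.map φ) (volume)
  set c := (Measure.addHaarScalarFactor (μ.map φ) volume : ENNReal)
  have key : ∀ D : Set F, μ D = c * volume (φ '' D) := by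
    intro D
    have h2 : (μ.map φ) (φ '' D) = μ D := by
      have := (φ.toHomeomorph.measurableEmbedding).map_apply μ (φ '' D)
      rw [show (φ.toHomeomorph : F → _) = φ from rfl] at this
      rw [this, φ.injective.preimage_image]
    rw [← h2, hc]; rfl
  rw [key A, key B, key]
  have h3 : φ '' ((2:ℝ)⁻¹ • (A + B)) = (2:ℝ)⁻¹ • (φ '' A + φ '' B) := by
    rw [Set.image_smul_comm _ _ _ (fun x => map_smul φ _ x), Set.image_add φ]
  rw [h3]
  have h4 := bm_mul_E (by simpa using hE) (hA.image φ.continuous) (hB.image φ.continuous)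
  calc _ = c ^ 2 * (volume (φ '' A) * volume (φ '' B)) := by ring
    _ ≤ c ^ 2 * volume ((2:ℝ)⁻¹ • (φ '' A + φ '' B)) ^ 2 := by gcongr
    _ = (c * volume ((2:ℝ)⁻¹ • (φ '' A + φ '' B))) ^ 2 := by rw [mul_pow]

end P5

section P6
variable {E : Type*} [NormedAddCommGroup E] [InnerProductSpace ℝ E] [FiniteDimensional ℝ E] 
    [MeasurableSpace E] [BorelSpace E]

def hyp (Z : Set E) (p : E → ℝ) : Set (E × (ℝ × ℝ)) :=
  {q | q.1 ∈ Z ∧ (0 ≤ q.2.1 ∧ q.2.1 ≤ p q.1) ∧ (0 ≤ q.2.2 ∧ q.2.2 ≤ p q.1)}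

theorem hyp_compact {Z : Set E} (hZ : IsCompact Z) {p : E → ℝ} (hp : Continuous p) :
    IsCompact (hyp Z p) := by
  obtain ⟨M, hM⟩ := (hZ.image hp).isBounded.exists_norm_le
  have hsub : hyp Z p ⊆ Z ×ˢ (Set.Icc 0 M ×ˢ Set.Icc 0 M) := by
    rintro ⟨x, u, v⟩ ⟨h1, h2, h3⟩
    have := (le_abs_self _).trans (hM _ ⟨x, h1, rfl⟩)
    exact ⟨h1, ⟨h2.1, h2.2.trans this⟩, ⟨h3.1, h3.2.trans this⟩⟩
  refine (hZ.prod (isCompact_Icc.prod isCompact_Icc)).of_isClosed_subset ?_ hsub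
  refine (hZ.isClosed.preimage continuous_fst).inter (IsClosed.inter (IsClosed.inter ?_ ?_) (IsClosed.inter ?_ ?_))
  · exact isClosed_le (f := fun _ : E × (ℝ × ℝ) => (0:ℝ)) (g := fun q => q.2.1) (by fun_prop) (by fun_prop)
  · exact isClosed_le (f := fun q : E × (ℝ × ℝ) => q.2.1) (g := fun q => p q.1) (by fun_prop) (by fun_prop)
  · exact isClosed_le (f := fun _ : E × (ℝ × ℝ) => (0:ℝ)) (g := fun q => q.2.2) (by fun_prop) (by fun_prop)
  · exact isClosed_le (f := fun q : E × (ℝ × ℝ) => q.2.2) (g := fun q => p q.1) (by fun_prop) (by fun_prop)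

theorem sq_vol {m : ℝ} (hm : 0 ≤ m) : volume (Set.Icc (0:ℝ) m ×ˢ Set.Icc (0:ℝ) m) = ENNReal.ofReal (m ^ 2) := by
  rw [Measure.volume_eq_prod, Measure.prod_prod, Real.volume_Icc, sub_zero, ← ENNReal.ofReal_mul hm, sq]

theorem hyp_volume {Z : Set E} (hZ : IsCompact Z) {p : E → ℝ} (hp : Continuous p) (hp0 : ∀ x ∈ Z, 0 ≤ p x) :
    volume (hyp Z p) = ENNReal.ofReal (∫ x in Z, p x ^ 2) := by
  rw [ofReal_integral_eq_lintegral_ofReal, Measure.volume_eq_prod,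
    Measure.prod_apply (hyp_compact hZ hp).measurableSet, ← lintegral_indicator hZ.measurableSet]
  · apply lintegral_congr
    intro x
    by_cases hx : x ∈ Z
    · rw [Set.indicator_of_mem hx, ← sq_vol (hp0 x hx)]
      congr 1
      ext ⟨u, v⟩
      simp [hyp, hx]
      try tauto
    · rw [Set.indicator_of_notMem hx]
      have : Prod.mk x ⁻¹' hyp Z p = ∅ := by
        ext ⟨u, v⟩
        simp [hyp, hx]
      rw [this, measure_empty]
  · exact (hp.pow 2).continuousOn.integrableOn_compact hZ
  · filter_upwards with x using sq_nonneg _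

variable {Z : Set E} {R : ℝ} {F : E → ℝ} {L : NNReal}

def hh (R : ℝ) (x : E) : ℝ := 1 - ‖x‖ ^ 2 / (2 * R ^ 2)

theorem hh_cont (R : ℝ) : Continuous (hh R : E → ℝ) := by
  unfold hh; fun_prop

theorem hh_bd (hR : 0 < R) (hZR : Z ⊆ Metric.closedBall 0 R) {x : E} (hx : x ∈ Z) : 1 / 2 ≤ hh R x ∧ hh R x ≤ 1 := by
  have h1 : ‖x‖ ≤ R := by simpa using hZR hx
  have h2 : ‖x‖ ^ 2 ≤ R ^ 2 := by gcongr
  have h3 : ‖x‖ ^ 2 / (2 * R ^ 2) ≤ 1 / 2 := by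
    rw [div_le_div_iff₀ (by positivity) (by norm_num)]; linarith
  have h4 : 0 ≤ ‖x‖ ^ 2 / (2 * R ^ 2) := by positivity
  unfold hh
  constructor <;> linarith

def secM (Z : Set E) (R : ℝ) (F : E → ℝ) (ε : ℝ) : Set (E × (ℝ × ℝ)) :=
  (2:ℝ)⁻¹ • (hyp Z (fun x => hh R x + ε * F x) + hyp Z (fun x => hh R x - ε * F x))

theorem hh_mid (hR : 0 < R) (x y : E) : (hh R x + hh R y) / 2 = hh R ((2:ℝ)⁻¹ • (x + y)) - ‖(2:ℝ)⁻¹ • (x - y)‖ ^ 2 / (2 * R ^ 2) := by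
  unfold hh
  have h := parallelogram_law_with_norm ℝ ((2:ℝ)⁻¹ • (x + y)) ((2:ℝ)⁻¹ • (x - y))
  have e1 : (2:ℝ)⁻¹ • (x + y) + (2:ℝ)⁻¹ • (x - y) = x := by module
  have e2 : (2:ℝ)⁻¹ • (x + y) - (2:ℝ)⁻¹ • (x - y) = y := by module
  rw [e1, e2] at h
  field_simp
  nlinarith

theorem sec_bound (hR : 0 < R) (hZc : Convex ℝ Z) {ε : ℝ} {z : E} {m : ℝ} (hm0 : 0 ≤ m)
    (hm : ∀ w, hh R z - ‖w‖ ^ 2 / (2 * R ^ 2) + ε * ((F (z + w) - F (z - w)) / 2) ≤ m) :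
    volume (Prod.mk z ⁻¹' secM Z R F ε) ≤ ENNReal.ofReal (m ^ 2) := by
  rw [← sq_vol hm0]
  apply measure_mono
  rintro ⟨u, v⟩ h
  obtain ⟨_, ⟨⟨x, u1, v1⟩, h1, ⟨y, u2, v2⟩, h2, rfl⟩, h3⟩ := h
  simp only [Prod.mk_add_mk, Prod.smul_mk, Prod.mk.injEq, smul_eq_mul] at h3
  obtain ⟨hz, hu, hv⟩ := h3
  obtain ⟨-, ⟨a1, a2⟩, ⟨a3, a4⟩⟩ := h1
  obtain ⟨-, ⟨b1, b2⟩, ⟨b3, b4⟩⟩ := h2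
  simp only at a1 a2 a3 a4 b1 b2 b3 b4
  have key := hm ((2:ℝ)⁻¹ • (x - y))
  rw [← hz] at key
  have e1 : (2:ℝ)⁻¹ • (x + y) + (2:ℝ)⁻¹ • (x - y) = x := by module
  have e2 : (2:ℝ)⁻¹ • (x + y) - (2:ℝ)⁻¹ • (x - y) = y := by module
  rw [e1, e2] at key
  have := hh_mid hR x y
  refine ⟨⟨?_, ?_⟩, ⟨?_, ?_⟩⟩ <;> simp only <;> linarith

theorem sec_empty (hZc : Convex ℝ Z) {ε : ℝ} {z : E} (hz : z ∉ Z) :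
    volume (Prod.mk z ⁻¹' secM Z R F ε) = 0 := by
  have : Prod.mk z ⁻¹' secM Z R F ε = ∅ := by
    rw [Set.eq_empty_iff_forall_notMem]
    rintro ⟨u, v⟩ h
    obtain ⟨_, ⟨⟨x, u1, v1⟩, h1, ⟨y, u2, v2⟩, h2, rfl⟩, h3⟩ := h
    simp only [Prod.mk_add_mk, Prod.smul_mk, Prod.mk.injEq, smul_eq_mul] at h3
    apply hz
    rw [← h3.1]
    have := hZc h1.1 h2.1 (show (0:ℝ) ≤ 2⁻¹ by norm_num) (show (0:ℝ) ≤ 2⁻¹ by norm_num) (by norm_num)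
    rwa [← smul_add] at this
  rw [this, measure_empty]

theorem quad_bd {R : ℝ} (hR : 0 < R) (ε N t : ℝ) : - (t ^ 2 / (2 * R ^ 2)) + ε * (N * t) ≤ ε ^ 2 * (R ^ 2 * N ^ 2 / 2) := by
  have : 0 ≤ (t - ε * N * R ^ 2) ^ 2 / (2 * R ^ 2) := by positivity
  have e : (t - ε * N * R ^ 2) ^ 2 / (2 * R ^ 2) = t ^ 2 / (2 * R ^ 2) - ε * (N * t) + ε ^ 2 * (R ^ 2 * N ^ 2 / 2) := by
    field_simp; ring
  linarith

theorem sec_bound1 (hR : 0 < R) (hZc : Convex ℝ Z) (hZR : Z ⊆ Metric.closedBall 0 R) (hF : LipschitzWith L F) {ε : ℝ} (hε : 0 ≤ ε) {z : E} (hz : z ∈ Z) :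
    volume (Prod.mk z ⁻¹' secM Z R F ε) ≤ ENNReal.ofReal ((hh R z + ε ^ 2 * (R ^ 2 * L ^ 2 / 2)) ^ 2) := by
  have := hh_bd hR hZR hz
  apply sec_bound hR hZc (by nlinarith [show 0 ≤ ε ^ 2 * (R ^ 2 * L ^ 2 / 2) by positivity])
  intro w
  have h1 := hF.dist_le_mul (z + w) (z - w)
  rw [Real.dist_eq, dist_eq_norm] at h1
  have e : z + w - (z - w) = (2:ℝ) • w := by module
  rw [e, norm_smul, Real.norm_ofNat] at h1
  have h2 := (le_abs_self _).trans h1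
  have h3 := quad_bd hR ε L ‖w‖
  have h4 : ε * ((F (z + w) - F (z - w)) / 2) ≤ ε * (L * ‖w‖) := by
    apply mul_le_mul_of_nonneg_left _ hε; linarith
  linarith

theorem sec_bound2 (hR : 0 < R) (hZc : Convex ℝ Z) (hZR : Z ⊆ Metric.closedBall 0 R) (hF : LipschitzWith L F) {z : E} (hz : z ∈ Z)
    (hd : DifferentiableAt ℝ F z) {c : ℝ} (hc : 0 < c) :
    ∀ᶠ ε in nhdsWithin (0:ℝ) (Set.Ioi 0), volume (Prod.mk z ⁻¹' secM Z R F ε) ≤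
      ENNReal.ofReal ((hh R z + ε ^ 2 * (R ^ 2 * (‖fderiv ℝ F z‖ + c) ^ 2 / 2)) ^ 2) := by
  have := hh_bd hR hZR hz
  have h1 := hd.hasFDerivAt
  rw [hasFDerivAt_iff_isLittleO_nhds_zero] at h1
  have h2 := h1.def hc
  rw [Metric.eventually_nhds_iff] at h2
  obtain ⟨ρ, hρ, h2⟩ := h2
  have h3 : ∀ᶠ ε in nhdsWithin (0:ℝ) (Set.Ioi 0), ε * L < ρ / (2 * R ^ 2) := by
    apply Filter.Eventually.filter_mono nhdsWithin_le_nhds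
    have : Filter.Tendsto (fun ε : ℝ => ε * (L:ℝ)) (nhds 0) (nhds (0 * L)) := Continuous.tendsto (by fun_prop) _
    rw [zero_mul] at this
    exact this.eventually_lt_const (by positivity)
  filter_upwards [h3, self_mem_nhdsWithin] with ε hε hε0
  have hε0 : 0 < ε := hε0
  apply sec_bound hR hZc (by nlinarith [show 0 ≤ ε ^ 2 * (R ^ 2 * (‖fderiv ℝ F z‖ + c) ^ 2 / 2) by positivity])
  intro w
  by_cases hw : ‖w‖ < ρ
  · have a1 := h2 (y := w) (by simpa using hw)
    have a2 := h2 (y := -w) (by simpa using hw)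
    rw [Real.norm_eq_abs, abs_le] at a1 a2
    rw [norm_neg, map_neg, ← sub_eq_add_neg] at a2
    have a3 := (le_abs_self _).trans ((fderiv ℝ F z).le_opNorm w)
    have h3 := quad_bd hR ε (‖fderiv ℝ F z‖ + c) ‖w‖
    have h4 : ε * ((F (z + w) - F (z - w)) / 2) ≤ ε * ((‖fderiv ℝ F z‖ + c) * ‖w‖) := by
      apply mul_le_mul_of_nonneg_left _ hε0.le; linarith
    linarith
  · push Not at hw
    have h1 := hF.dist_le_mul (z + w) (z - w)
    rw [Real.dist_eq, dist_eq_norm] at h1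
    have e : z + w - (z - w) = (2:ℝ) • w := by module
    rw [e, norm_smul, Real.norm_ofNat] at h1
    have h2 := (le_abs_self _).trans h1
    have h4 : ε * ((F (z + w) - F (z - w)) / 2) ≤ ε * (L * ‖w‖) := by
      apply mul_le_mul_of_nonneg_left _ hε0.le; linarith
    have h5 : ε * (L * ‖w‖) ≤ ‖w‖ ^ 2 / (2 * R ^ 2) := by
      have : ρ / (2 * R ^ 2) ≤ ‖w‖ / (2 * R ^ 2) := by gcongr
      have e : ‖w‖ ^ 2 / (2 * R ^ 2) = ‖w‖ / (2 * R ^ 2) * ‖w‖ := by ring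
      rw [e]
      nlinarith [norm_nonneg w]
    have : 0 ≤ ε ^ 2 * (R ^ 2 * (‖fderiv ℝ F z‖ + c) ^ 2 / 2) := by positivity
    linarith

theorem bm_eps (hZ : IsCompact Z) (hF : LipschitzWith L F) {ε : ℝ} (hp : ∀ x ∈ Z, |ε * F x| ≤ hh R x)
    (h0 : ∫ x in Z, hh R x * F x = 0) :
    ENNReal.ofReal ((∫ x in Z, hh R x ^ 2) + ε ^ 2 * ∫ x in Z, F x ^ 2) ≤ volume (secM Z R F ε) := by
  have hFc := hF.continuous
  have hhc := hh_cont (E := E) R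
  have hc1 : Continuous (fun x => hh R x + ε * F x) := by fun_prop
  have hc2 : Continuous (fun x => hh R x - ε * F x) := by fun_prop
  have i1 : IntegrableOn (fun x => hh R x ^ 2) Z := (hhc.pow 2).continuousOn.integrableOn_compact hZ
  have i2 : IntegrableOn (fun x => F x ^ 2) Z := (hFc.pow 2).continuousOn.integrableOn_compact hZ
  have i3 : IntegrableOn (fun x => hh R x * F x) Z := (hhc.mul hFc).continuousOn.integrableOn_compact hZ
  have comp : ∀ t : ℝ, ∫ x in Z, (hh R x + t * F x) ^ 2 = (∫ x in Z, hh R x ^ 2) + t ^ 2 * ∫ x in Z, F x ^ 2 := by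
    intro t
    have e : ∀ x, (hh R x + t * F x) ^ 2 = (hh R x ^ 2 + t ^ 2 * F x ^ 2) + 2 * t * (hh R x * F x) := fun x => by ring
    simp only [e]
    rw [integral_add (f := fun x => hh R x ^ 2 + t ^ 2 * F x ^ 2) (i1.integrable.add (i2.integrable.const_mul _)) (i3.integrable.const_mul _),
      integral_add i1.integrable (i2.integrable.const_mul _), integral_const_mul, integral_const_mul, h0]
    ring
  have v1 := hyp_volume hZ hc1 (fun x hx => by have := abs_le.1 (hp x hx); linarith)
  have v2 := hyp_volume hZ hc2 (fun x hx => by have := abs_le.1 (hp x hx); linarith)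
  rw [comp] at v1
  have e2 : ∫ x in Z, (hh R x - ε * F x) ^ 2 = (∫ x in Z, hh R x ^ 2) + ε ^ 2 * ∫ x in Z, F x ^ 2 := by
    have := comp (-ε)
    rw [neg_sq] at this
    rw [← this]
    congr 1; ext x; ring
  rw [e2] at v2
  have hI1 : (volume : Measure (ℝ × ℝ)).IsAddHaarMeasure := by
    rw [Measure.volume_eq_prod]; infer_instance
  have hI2 : (volume : Measure (E × (ℝ × ℝ))).IsAddHaarMeasure := by
    rw [Measure.volume_eq_prod]; infer_instance
  have hbm := bm_mul (volume : Measure (E × (ℝ × ℝ))) (by simp) (hyp_compact hZ hc1) (hyp_compact hZ hc2)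
  rw [v1, v2, ← sq] at hbm
  exact (ENNReal.pow_le_pow_left_iff (two_ne_zero)).1 hbm

theorem poincare (hR : 0 < R) (hZ : IsCompact Z) (hZc : Convex ℝ Z) (hZR : Z ⊆ Metric.closedBall 0 R)
    (hF : LipschitzWith L F) (h0 : ∫ x in Z, hh R x * F x = 0) :
    ∫ x in Z, F x ^ 2 ≤ R ^ 2 * ∫ x in Z, ‖fderiv ℝ F x‖ ^ 2 := by
  have hFc := hF.continuous
  have hhc := hh_cont (E := E) R
  have i1 : IntegrableOn (fun x => hh R x ^ 2) Z := (hhc.pow 2).continuousOn.integrableOn_compact hZ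
  have hZfin : volume Z ≠ ⊤ := hZ.measure_lt_top.ne
  have hmN : Measurable (fun x => ‖fderiv ℝ F x‖) := (measurable_fderiv ℝ F).norm
  have hN1 : ∀ x, ‖fderiv ℝ F x‖ ≤ L := fun x => norm_fderiv_le_of_lipschitz ℝ hF
  let a : ℝ → E → ℝ := fun ε z => (volume (Prod.mk z ⁻¹' secM Z R F ε)).toReal
  have hsm : ∀ ε, MeasurableSet (secM Z R F ε) := by
    intro ε
    apply IsCompact.measurableSet
    exact ((hyp_compact hZ (by fun_prop)).add (hyp_compact hZ (by fun_prop))).smul _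
  have ham : ∀ ε, Measurable (a ε) := fun ε => (measurable_measure_prodMk_left (hsm ε)).ennreal_toReal
  let lim : E → ℝ := fun z => hh R z * (R ^ 2 * ‖fderiv ℝ F z‖ ^ 2)
  let ψ : ℝ → E → ℝ := fun ε z => max ((a ε z - hh R z ^ 2) / ε ^ 2) (lim z)
  have hlm : Measurable lim := hhc.measurable.mul ((hmN.pow_const 2).const_mul _)
  have hψm : ∀ ε, Measurable (ψ ε) := fun ε =>
    (((ham ε).sub (hhc.measurable.pow_const 2)).div_const _).max hlm
  set C : ℝ := R ^ 2 * L ^ 2 with hC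
  have hC0 : 0 ≤ C := by positivity
  have hlim0 : ∀ z ∈ Z, 0 ≤ lim z ∧ lim z ≤ C := by
    intro z hz
    have := hh_bd hR hZR hz
    have h2 : R ^ 2 * ‖fderiv ℝ F z‖ ^ 2 ≤ C := by
      rw [hC]; gcongr; exact hN1 z
    have h3 : 0 ≤ R ^ 2 * ‖fderiv ℝ F z‖ ^ 2 := by positivity
    exact ⟨mul_nonneg (by linarith) h3, by simp only [lim]; nlinarith⟩
  have ha1 : ∀ ε, 0 ≤ ε → ∀ z ∈ Z, a ε z ≤ (hh R z + ε ^ 2 * (C / 2)) ^ 2 := by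
    intro ε hε z hz
    exact ENNReal.toReal_le_of_le_ofReal (sq_nonneg _) (sec_bound1 hR hZc hZR hF hε hz)
  have hbound : ∀ ε, 0 < ε → ε ≤ 1 → ∀ z ∈ Z, (a ε z - hh R z ^ 2) / ε ^ 2 ≤ C + C ^ 2 := by
    intro ε hε hε1 z hz
    have h1 := ha1 ε hε.le z hz
    have := hh_bd hR hZR hz
    rw [div_le_iff₀ (by positivity)]
    have h2 : ε ^ 2 ≤ 1 := by nlinarith
    have h3 : (hh R z + ε ^ 2 * (C / 2)) ^ 2 - hh R z ^ 2 = (hh R z * C + ε ^ 2 * C ^ 2 / 4) * ε ^ 2 := by ring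
    have h4 : hh R z * C + ε ^ 2 * C ^ 2 / 4 ≤ C + C ^ 2 := by nlinarith [sq_nonneg C]
    nlinarith [sq_nonneg ε]
  have htend : Filter.Tendsto (fun ε => ∫ z in Z, ψ ε z) (nhdsWithin 0 (Set.Ioi 0)) (nhds (∫ z in Z, lim z)) := by
    apply tendsto_integral_filter_of_dominated_convergence (fun _ => C + C ^ 2)
    · filter_upwards with ε using (hψm ε).aestronglyMeasurable
    · filter_upwards [Ioc_mem_nhdsGT (zero_lt_one)] with ε hε
      filter_upwards [ae_restrict_mem hZ.measurableSet] with z hz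
      have h1 := hlim0 z hz
      rw [Real.norm_of_nonneg (h1.1.trans (le_max_right _ _))]
      exact max_le (hbound ε hε.1 hε.2 z hz) (by nlinarith [sq_nonneg C])
    · exact integrableOn_const hZfin
    · filter_upwards [ae_restrict_mem hZ.measurableSet, ae_restrict_of_ae (hF.ae_differentiableAt (μ := (volume : Measure E)))] with z hz hd
      rw [tendsto_order]
      constructor
      · intro y hy
        filter_upwards with ε using lt_of_lt_of_le hy (le_max_right _ _)
      · intro y hy
        have hcont : Filter.Tendsto (fun c : ℝ => hh R z * (R ^ 2 * (‖fderiv ℝ F z‖ + c) ^ 2)) (nhdsWithin 0 (Set.Ioi 0)) (nhds (hh R z * (R ^ 2 * (‖fderiv ℝ F z‖ + 0) ^ 2))) :=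
          (Continuous.tendsto (by fun_prop) 0).mono_left nhdsWithin_le_nhds
        rw [add_zero] at hcont
        obtain ⟨c, hc1, hc2⟩ := ((hcont.eventually_lt_const hy).and self_mem_nhdsWithin).exists
        have hc2 : 0 < c := hc2
        set N := R ^ 2 * (‖fderiv ℝ F z‖ + c) ^ 2 with hN
        have hcont2 : Filter.Tendsto (fun ε : ℝ => hh R z * N + ε ^ 2 * (N ^ 2 / 4)) (nhdsWithin 0 (Set.Ioi 0)) (nhds (hh R z * N + 0 ^ 2 * (N ^ 2 / 4))) :=
          (Continuous.tendsto (by fun_prop) 0).mono_left nhdsWithin_le_nhds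
        have hev := hcont2.eventually_lt_const (u := y) (by simpa using hc1)
        filter_upwards [hev, sec_bound2 hR hZc hZR hF hz hd hc2, self_mem_nhdsWithin] with ε h1 h2 h3
        have h3 : 0 < ε := h3
        have h4 : a ε z ≤ _ := ENNReal.toReal_le_of_le_ofReal (sq_nonneg _) h2
        apply max_lt _ hy
        rw [div_lt_iff₀ (by positivity)]
        have h5 : (hh R z + ε ^ 2 * (N / 2)) ^ 2 - hh R z ^ 2 = (hh R z * N + ε ^ 2 * (N ^ 2 / 4)) * ε ^ 2 := by ring
        have h6 : (hh R z * N + ε ^ 2 * (N ^ 2 / 4)) * ε ^ 2 < y * ε ^ 2 := by gcongr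
        linarith
  obtain ⟨M, hM⟩ := (hZ.image hFc).isBounded.exists_norm_le
  have hM0 : ∀ x ∈ Z, |F x| ≤ |M| := fun x hx => (hM _ ⟨x, hx, rfl⟩).trans (le_abs_self _)
  have hge : ∀ᶠ ε in nhdsWithin (0:ℝ) (Set.Ioi 0), ∫ x in Z, F x ^ 2 ≤ ∫ z in Z, ψ ε z := by
    have hsmall : ∀ᶠ ε in nhdsWithin (0:ℝ) (Set.Ioi 0), ε * |M| < 1 / 2 := by
      apply Filter.Eventually.filter_mono nhdsWithin_le_nhds
      have : Filter.Tendsto (fun ε : ℝ => ε * |M|) (nhds 0) (nhds (0 * |M|)) := Continuous.tendsto (by fun_prop) _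
      rw [zero_mul] at this
      exact this.eventually_lt_const (by norm_num)
    filter_upwards [hsmall, Ioc_mem_nhdsGT (zero_lt_one)] with ε hεM hε
    have hε0 : 0 < ε := hε.1
    have hb := bm_eps hZ hF (ε := ε) (R := R) (by
      intro x hx
      rw [abs_mul, abs_of_pos hε0]
      have := hh_bd hR hZR hx
      have := hM0 x hx
      nlinarith) h0
    have haint : IntegrableOn (a ε) Z := by
      refine Measure.integrableOn_of_bounded (M := (1 + C) ^ 2) hZfin (ham ε).aestronglyMeasurable ?_
      filter_upwards [ae_restrict_mem hZ.measurableSet] with z hz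
      rw [Real.norm_of_nonneg ENNReal.toReal_nonneg]
      refine (ha1 ε hε0.le z hz).trans ?_
      have := hh_bd hR hZR hz
      have h2 : ε ^ 2 ≤ 1 := by nlinarith [hε.2]
      have h3 : ε ^ 2 * (C / 2) ≤ C := by nlinarith
      have h4 : 0 ≤ ε ^ 2 * (C / 2) := by positivity
      have : 0 ≤ hh R z + ε ^ 2 * (C / 2) := by linarith
      gcongr <;> linarith
    have hvol : volume (secM Z R F ε) = ENNReal.ofReal (∫ z in Z, a ε z) := by
      rw [ofReal_integral_eq_lintegral_ofReal haint (by filter_upwards with z using ENNReal.toReal_nonneg),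
        Measure.volume_eq_prod, Measure.prod_apply (hsm ε), ← lintegral_indicator hZ.measurableSet]
      apply lintegral_congr
      intro z
      by_cases hz : z ∈ Z
      · rw [Set.indicator_of_mem hz, ENNReal.ofReal_toReal]
        exact ne_top_of_le_ne_top ENNReal.ofReal_ne_top (sec_bound1 hR hZc hZR hF hε0.le hz)
      · rw [Set.indicator_of_notMem hz, sec_empty hZc hz]
    rw [hvol, ENNReal.ofReal_le_ofReal_iff (integral_nonneg fun z => ENNReal.toReal_nonneg)] at hb
    have hψint : IntegrableOn (ψ ε) Z := by
      refine Measure.integrableOn_of_bounded (M := C + C ^ 2) hZfin (hψm ε).aestronglyMeasurable ?_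
      filter_upwards [ae_restrict_mem hZ.measurableSet] with z hz
      have h1 := hlim0 z hz
      rw [Real.norm_of_nonneg (h1.1.trans (le_max_right _ _))]
      exact max_le (hbound ε hε.1 hε.2 z hz) (by nlinarith [sq_nonneg C])
    have h1 : ∫ z in Z, (a ε z - hh R z ^ 2) / ε ^ 2 ≤ ∫ z in Z, ψ ε z :=
      integral_mono ((haint.integrable.sub i1.integrable).div_const _) hψint (fun z => le_max_left _ _)
    refine le_trans ?_ h1
    rw [integral_div, integral_sub haint.integrable i1.integrable, le_div_iff₀ (by positivity)]
    linarith
  have h1 := ge_of_tendsto htend hge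
  refine h1.trans ?_
  rw [← integral_const_mul]
  have hi : ∀ f : E → ℝ, Measurable f → (∀ z ∈ Z, 0 ≤ f z ∧ f z ≤ C) → IntegrableOn f Z := by
    intro f hf hb
    refine Measure.integrableOn_of_bounded (M := C) hZfin hf.aestronglyMeasurable ?_
    filter_upwards [ae_restrict_mem hZ.measurableSet] with z hz
    rw [Real.norm_of_nonneg (hb z hz).1]; exact (hb z hz).2
  apply setIntegral_mono_on (hi _ hlm hlim0) (hi _ ((hmN.pow_const 2).const_mul _) _) hZ.measurableSet
  · intro z hz
    have := hh_bd hR hZR hz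
    have h3 : 0 ≤ R ^ 2 * ‖fderiv ℝ F z‖ ^ 2 := by positivity
    simp only [lim]; nlinarith
  · intro z hz
    refine ⟨by positivity, ?_⟩
    rw [hC]; gcongr; exact hN1 z

end P6

section P7
variable {E : Type*} [NormedAddCommGroup E] [InnerProductSpace ℝ E] [FiniteDimensional ℝ E] 
    [MeasurableSpace E] [BorelSpace E]

theorem dual_norm_sq {ι : Type*} [Fintype ι] (b : OrthonormalBasis ι ℝ E) (f : E →L[ℝ] ℝ) :
    ‖f‖ ^ 2 = ∑ i, f (b i) ^ 2 := by
  have h := b.sum_sq_norm_inner_right ((InnerProductSpace.toDual ℝ E).symm f)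
  rw [LinearIsometryEquiv.norm_map] at h
  rw [← h]
  refine Finset.sum_congr rfl fun i _ => ?_
  rw [real_inner_comm, InnerProductSpace.toDual_symm_apply, Real.norm_eq_abs, sq_abs]

theorem vec_norm_sq {ι : Type*} [Fintype ι] (b : OrthonormalBasis ι ℝ E) (v : E) :
    ‖v‖ ^ 2 = ∑ i, (inner ℝ (b i) v) ^ 2 := by
  have h := b.sum_sq_norm_inner_right v
  rw [← h]
  refine Finset.sum_congr rfl fun i _ => ?_
  rw [Real.norm_eq_abs, sq_abs]

theorem fd_bdd_int {Z : Set E} (hZ : IsCompact Z) {f : E → ℝ} (hf : Measurable f) {M : ℝ} (hM : ∀ z, |f z| ≤ M) :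
    IntegrableOn f Z :=
  Measure.integrableOn_of_bounded (M := M) hZ.measure_lt_top.ne hf.aestronglyMeasurable
    (by filter_upwards with z using hM z)

theorem vec_poincare {Z : Set E} {R : ℝ} {G : E → E} (hR : 0 < R) (hZ : IsCompact Z) (hZc : Convex ℝ Z)
    (hZR : Z ⊆ Metric.closedBall 0 R) (hZ0 : 0 < volume.real Z) (hG : LipschitzWith 1 G) :
    ∃ g0 : E, ∫ z in Z, ‖G z - g0‖ ^ 2 ≤
      R ^ 2 * ∫ z in Z, ∑ j, ‖fderiv ℝ G z (stdOrthonormalBasis ℝ E j)‖ ^ 2 := by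
  have hGc := hG.continuous
  have hhc := hh_cont (E := E) R
  set c := ∫ z in Z, hh R z with hc
  have hci : IntegrableOn (fun z : E => hh R z) Z := hhc.continuousOn.integrableOn_compact hZ
  have hc0 : 0 < c := by
    have : ∫ z in Z, (1/2 : ℝ) ≤ c :=
      setIntegral_mono_on (integrableOn_const hZ.measure_lt_top.ne) hci hZ.measurableSet
        (fun z hz => (hh_bd hR hZR hz).1)
    rw [setIntegral_const, smul_eq_mul] at this
    linarith
  set b := stdOrthonormalBasis ℝ E with hb
  refine ⟨c⁻¹ • ∫ z in Z, hh R z • G z, ?_⟩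
  set g0 := c⁻¹ • ∫ z in Z, hh R z • G z with hg0
  have hGi : IntegrableOn (fun z : E => hh R z • G z) Z := (hhc.smul hGc).continuousOn.integrableOn_compact hZ
  let F : Fin (Module.finrank ℝ E) → E → ℝ := fun j z => inner ℝ (b j) (G z - g0)
  have hFl : ∀ j, LipschitzWith 1 (F j) := by
    intro j
    refine LipschitzWith.of_dist_le_mul fun x y => ?_
    have h1 := hG.dist_le_mul x y
    rw [Real.dist_eq, ← inner_sub_right]
    refine (abs_real_inner_le_norm _ _).trans ?_
    rw [b.norm_eq_one, one_mul]
    rw [dist_eq_norm] at h1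
    simpa using h1
  have hFd : ∀ j z, DifferentiableAt ℝ G z → ∀ v, fderiv ℝ (F j) z v = inner ℝ (b j) (fderiv ℝ G z v) := by
    intro j z hd v
    have h1 : HasFDerivAt (fun z => G z - g0) (fderiv ℝ G z) z := hd.hasFDerivAt.sub_const g0
    have h2 := (innerSL ℝ (b j)).hasFDerivAt.comp z h1
    have h3 : HasFDerivAt (F j) ((innerSL ℝ (b j)).comp (fderiv ℝ G z)) z := h2
    rw [h3.fderiv]; rfl
  have h0 : ∀ j, ∫ z in Z, hh R z * F j z = 0 := by
    intro j
    have e : ∀ z, hh R z * F j z = inner ℝ (b j) (hh R z • G z - hh R z • g0) := by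
      intro z
      rw [← smul_sub, inner_smul_right]
    simp only [e]
    have hi2 : IntegrableOn (fun z : E => hh R z • g0) Z := (hhc.smul continuous_const).continuousOn.integrableOn_compact hZ
    rw [integral_inner (f := fun z => hh R z • G z - hh R z • g0) (hGi.integrable.sub hi2.integrable),
      integral_sub (f := fun z => hh R z • G z) hGi.integrable hi2.integrable, integral_smul_const, ← hc, hg0, smul_smul, mul_inv_cancel₀ hc0.ne',
      one_smul, sub_self, inner_zero_right]
  have hp := fun j => poincare hR hZ hZc hZR (hFl j) (h0 j)
  have e1 : ∫ z in Z, ‖G z - g0‖ ^ 2 = ∑ j, ∫ z in Z, F j z ^ 2 := by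
    rw [← integral_finsetSum]
    · refine setIntegral_congr_fun hZ.measurableSet fun z _ => vec_norm_sq b _
    · intro j _
      exact ((hFl j).continuous.pow 2).continuousOn.integrableOn_compact hZ
  rw [e1]
  refine (Finset.sum_le_sum fun j _ => hp j).trans ?_
  rw [← Finset.mul_sum]
  apply le_of_eq
  congr 1
  rw [← integral_finsetSum]
  · refine setIntegral_congr_ae hZ.measurableSet ?_
    filter_upwards [hG.ae_differentiableAt (μ := (volume : Measure E))] with z hd _
    simp_rw [dual_norm_sq b, hFd _ z hd]
    rw [Finset.sum_comm]
    simp_rw [← vec_norm_sq b]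
  · intro j _
    refine fd_bdd_int hZ ((measurable_fderiv ℝ (F j)).norm.pow_const 2) (M := 1) fun z => ?_
    have := norm_fderiv_le_of_lipschitz ℝ (hFl j) (x₀ := z)
    rw [abs_of_nonneg (by positivity)]
    exact pow_le_one₀ (norm_nonneg _) (by simpa using this)

/-- Cauchy–Schwarz on a compact set. -/
theorem cs_set {Z : Set E} (hZ : IsCompact Z) {f : E → ℝ} (hf : IntegrableOn f Z) (hf2 : IntegrableOn (fun z => f z ^ 2) Z) :
    (∫ z in Z, f z) ^ 2 ≤ volume.real Z * ∫ z in Z, f z ^ 2 := by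
  set I := ∫ z in Z, f z
  set J := ∫ z in Z, f z ^ 2
  set m := volume.real Z
  have hm : 0 ≤ m := measureReal_nonneg
  have h : ∀ t : ℝ, 0 ≤ J - 2 * t * I + t ^ 2 * m := by
    intro t
    have h1 : 0 ≤ ∫ z in Z, (f z - t) ^ 2 := integral_nonneg fun z => sq_nonneg _
    have e : ∀ z, (f z - t) ^ 2 = (f z ^ 2 - 2 * t * f z) + t ^ 2 := fun z => by ring
    simp only [e] at h1
    have ic : IntegrableOn (fun _ : E => t ^ 2) Z := integrableOn_const hZ.measure_lt_top.ne
    rw [integral_add (f := fun z => f z ^ 2 - 2 * t * f z) (hf2.integrable.sub (hf.integrable.const_mul _)) ic.integrable,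
      integral_sub (f := fun z => f z ^ 2) hf2.integrable (hf.integrable.const_mul _), integral_const_mul, setIntegral_const, smul_eq_mul] at h1
    linarith
  rcases hm.eq_or_lt with h0 | h0
  · rw [← h0, zero_mul]
    by_contra hI
    push Not at hI
    have hI0 : I ≠ 0 := by rintro hh; rw [hh] at hI; norm_num at hI
    have := h ((J + 1) / (2 * I))
    rw [← h0] at this
    have e : 2 * ((J + 1) / (2 * I)) * I = J + 1 := by field_simp
    rw [e] at this
    linarith
  · have := h (I / m)
    have e : J - 2 * (I / m) * I + (I / m) ^ 2 * m = (m * J - I ^ 2) / m := by field_simp; ring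
    rw [e] at this
    have := (div_nonneg_iff.1 this)
    rcases this with h | h
    · linarith [h.1]
    · linarith [h.2]

end P7

section P8
variable {E : Type*} [NormedAddCommGroup E] [InnerProductSpace ℝ E] [FiniteDimensional ℝ E] 
    [MeasurableSpace E] [BorelSpace E]

theorem polar_meas {f : E → ENNReal} (hf : Measurable f) :
    Measurable (fun p : Metric.sphere (0:E) 1 × ℝ => ENNReal.ofReal (p.2 ^ (Module.finrank ℝ E - 1)) * f (p.2 • (p.1 : E))) := by
  have h1 : Measurable (fun p : Metric.sphere (0:E) 1 × ℝ => p.2 • (p.1 : E)) := by fun_prop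
  have h2 : Measurable (fun p : Metric.sphere (0:E) 1 × ℝ => p.2 ^ (Module.finrank ℝ E - 1)) := by fun_prop
  exact h2.ennreal_ofReal.mul (hf.comp h1)

theorem polar_lintegral (hE : 0 < Module.finrank ℝ E) {f : E → ENNReal} (hf : Measurable f) :
    ∫⁻ x, f x = ∫⁻ ω, (∫⁻ r in Set.Ioi (0:ℝ), ENNReal.ofReal (r ^ (Module.finrank ℝ E - 1)) * f (r • (ω : E)))
      ∂(volume : Measure E).toSphere := by
  have : Nontrivial E := Module.finrank_pos_iff.1 hE
  have hmp := (volume : Measure E).measurePreserving_homeomorphUnitSphereProd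
  have e1 : ∫⁻ x, f x = ∫⁻ x : ({0}ᶜ : Set E), f x ∂((volume : Measure E).comap (↑)) := by
    rw [lintegral_subtype_comap (measurableSet_singleton _).compl f, restrict_compl_singleton]
  let g : Metric.sphere (0:E) 1 × Set.Ioi (0:ℝ) → ENNReal := fun p => f ((p.2 : ℝ) • (p.1 : E))
  have hg : Measurable g := by
    apply hf.comp
    fun_prop
  have e2 : ∀ x : ({0}ᶜ : Set E), f x = g (homeomorphUnitSphereProd E x) := by
    intro x
    have := (homeomorphUnitSphereProd E).symm_apply_apply x
    have h2 := congrArg Subtype.val this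
    simp only [g]
    rw [homeomorphUnitSphereProd_symm_apply_coe] at h2
    rw [h2]
  rw [e1]
  simp only [e2]
  rw [hmp.lintegral_comp hg, lintegral_prod _ hg.aemeasurable]
  apply lintegral_congr
  intro ω
  rw [Measure.volumeIoiPow, lintegral_withDensity_eq_lintegral_mul]
  · rw [← lintegral_subtype_comap measurableSet_Ioi (fun r => ENNReal.ofReal (r ^ (Module.finrank ℝ E - 1)) * f (r • (ω : E)))]
    rfl
  · fun_prop
  · exact hg.comp measurable_prodMk_left

theorem polar_ae (hE : 0 < Module.finrank ℝ E) {P : E → Prop} (hP : ∀ᵐ x, P x) :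
    ∀ᵐ (ω : Metric.sphere (0:E) 1) ∂(volume : Measure E).toSphere, ∀ᵐ r ∂(volume.restrict (Set.Ioi (0:ℝ))), P (r • (ω : E)) := by
  obtain ⟨S, hS1, hS2, hS3⟩ := exists_measurable_superset_of_null (ae_iff.1 hP)
  let f : E → ENNReal := S.indicator (fun _ => 1)
  have hf : Measurable f := measurable_const.indicator hS2
  have h0 : ∫⁻ x, f x = 0 := by
    rw [lintegral_indicator hS2]; simp [hS3]
  have hm := polar_meas (E := E) hf
  rw [polar_lintegral hE hf, lintegral_eq_zero_iff (Measurable.lintegral_prod_right' (f := fun p : Metric.sphere (0:E) 1 × ℝ => ENNReal.ofReal (p.2 ^ (Module.finrank ℝ E - 1)) * f (p.2 • (p.1 : E))) hm)] at h0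
  filter_upwards [h0] with ω hω
  have hω : ∫⁻ r in Set.Ioi (0:ℝ), ENNReal.ofReal (r ^ (Module.finrank ℝ E - 1)) * f (r • (ω : E)) = 0 := hω
  have hmω : Measurable (fun r : ℝ => ENNReal.ofReal (r ^ (Module.finrank ℝ E - 1)) * f (r • (ω : E))) :=
    hm.comp measurable_prodMk_left
  rw [lintegral_eq_zero_iff hmω] at hω
  filter_upwards [hω, ae_restrict_mem measurableSet_Ioi] with r hr hr0
  have hr0 : 0 < r := hr0
  by_contra hc
  have hmem : r • (ω : E) ∈ S := hS1 hc
  have hr : ENNReal.ofReal (r ^ (Module.finrank ℝ E - 1)) * f (r • (ω : E)) = 0 := hr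
  simp only [f, Set.indicator_of_mem hmem, mul_one, ENNReal.ofReal_eq_zero] at hr
  have : 0 < r ^ (Module.finrank ℝ E - 1) := by positivity
  linarith

theorem ray_bound (n : ℕ) (hn : 0 < n) {H : E → E} {L : NNReal} (hH : LipschitzWith L H) {ω : E} (hω : ‖ω‖ = 1)
    (hd : ∀ᵐ r ∂(volume.restrict (Set.Ioi (0:ℝ))), DifferentiableAt ℝ H (r • ω)) {s : ℝ} (hs : 0 < s) :
    ENNReal.ofReal (‖H (s • ω)‖ * s ^ n) ≤ ∫⁻ r in Set.Ioc 0 s, ENNReal.ofReal (r ^ (n - 1)) *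
      ENNReal.ofReal (n * ‖H (r • ω)‖ + ‖r • ω‖ * ‖fderiv ℝ H (r • ω)‖) := by
  obtain ⟨e, he1, he2⟩ : ∃ e : E, ‖e‖ ≤ 1 ∧ inner ℝ e (H (s • ω)) = ‖H (s • ω)‖ := by
    by_cases h0 : H (s • ω) = 0
    · exact ⟨0, by simp, by simp [h0]⟩
    · refine ⟨‖H (s • ω)‖⁻¹ • H (s • ω), ?_, ?_⟩
      · rw [norm_smul, norm_inv, norm_norm, inv_mul_cancel₀ (norm_ne_zero_iff.2 h0)]
      · rw [real_inner_smul_left, real_inner_self_eq_norm_sq]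
        field_simp [norm_ne_zero_iff.2 h0]
  let q : ℝ → ℝ := fun r => inner ℝ e (H (r • ω))
  let ψ : ℝ → ℝ := fun r => q r * r ^ n
  have hq : LipschitzWith L q := by
    refine LipschitzWith.of_dist_le_mul fun x y => ?_
    rw [Real.dist_eq, ← inner_sub_right]
    refine (abs_real_inner_le_norm _ _).trans ?_
    have h1 := hH.dist_le_mul (x • ω) (y • ω)
    rw [dist_eq_norm, dist_eq_norm, ← sub_smul, norm_smul, hω, mul_one] at h1
    rw [dist_eq_norm]
    nlinarith [norm_nonneg (H (x • ω) - H (y • ω))]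
  have hac : AbsolutelyContinuousOnInterval ψ 0 s := by
    apply AbsolutelyContinuousOnInterval.mul
    · exact hq.lipschitzOnWith.absolutelyContinuousOnInterval
    · apply ContDiffOn.absolutelyContinuousOnInterval
      fun_prop
  have hint := hac.integral_deriv_eq_sub
  have hψ0 : ψ 0 = 0 := by simp [ψ, hn.ne']
  have hψs : ψ s = ‖H (s • ω)‖ * s ^ n := by simp only [ψ, q, he2]
  rw [hψ0, sub_zero, hψs, intervalIntegral.integral_of_le hs.le] at hint
  rw [← hint]
  refine (ENNReal.ofReal_le_ofReal (le_abs_self _)).trans ?_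
  rw [← Real.norm_eq_abs, ofReal_norm_eq_enorm]
  refine (enorm_integral_le_lintegral_enorm _).trans ?_
  apply lintegral_mono_ae
  have hd' : ∀ᵐ r ∂(volume.restrict (Set.Ioc (0:ℝ) s)), DifferentiableAt ℝ H (r • ω) :=
    ae_mono (Measure.restrict_mono Set.Ioc_subset_Ioi_self le_rfl) hd
  filter_upwards [hd', ae_restrict_mem measurableSet_Ioc] with r hr hr0
  have hr0 : 0 < r := hr0.1
  rw [← ENNReal.ofReal_mul (by positivity), ← ofReal_norm_eq_enorm]
  apply ENNReal.ofReal_le_ofReal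
  have hq' : HasDerivAt q (inner ℝ e (fderiv ℝ H (r • ω) ω)) r := by
    have h1 : HasDerivAt (fun r : ℝ => r • ω) ω r := by
      simpa using (hasDerivAt_id r).smul_const ω
    have h2 := hr.hasFDerivAt.comp_hasDerivAt r h1
    exact ((innerSL ℝ e).hasFDerivAt.comp_hasDerivAt r h2)
  have hψ' := hq'.mul (hasDerivAt_pow n r)
  have : deriv ψ r = _ := hψ'.deriv
  rw [this]
  have b1 : |inner ℝ e (fderiv ℝ H (r • ω) ω)| ≤ ‖fderiv ℝ H (r • ω)‖ := by
    refine (abs_real_inner_le_norm _ _).trans ?_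
    have := (fderiv ℝ H (r • ω)).le_opNorm ω
    rw [hω, mul_one] at this
    nlinarith [norm_nonneg ((fderiv ℝ H (r • ω)) ω)]
  have b2 : |q r| ≤ ‖H (r • ω)‖ := by
    refine (abs_real_inner_le_norm _ _).trans ?_
    nlinarith [norm_nonneg (H (r • ω))]
  rw [norm_smul, hω, mul_one, Real.norm_of_nonneg hr0.le]
  have e3 : r ^ n = r ^ (n - 1) * r := by rw [← pow_succ, Nat.sub_add_cancel hn]
  have hp : 0 < r ^ (n - 1) := by positivity
  rw [e3, Real.norm_eq_abs]
  refine (abs_add_le _ _).trans ?_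
  rw [abs_mul (inner ℝ e _), abs_mul (q r), abs_of_pos (by positivity : 0 < r ^ (n-1) * r), abs_of_nonneg (by positivity : 0 ≤ (n:ℝ) * r ^ (n-1))]
  calc _ ≤ ‖fderiv ℝ H (r • ω)‖ * (r ^ (n-1) * r) + ‖H (r • ω)‖ * (n * r ^ (n-1)) := by gcongr
    _ = _ := by ring

theorem trace (hE : 0 < Module.finrank ℝ E) {Z U W : Set E} (hZm : MeasurableSet Z) (hZc : Convex ℝ Z) (hZ0 : (0:E) ∈ Z)
    (hZb : Bornology.IsBounded Z)
    (hUm : MeasurableSet U) (hUc : Convex ℝ U) (hU0 : (0:E) ∈ U) (hWm : MeasurableSet W) (hWZ : W ⊆ Z)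
    {H : E → E} {L : NNReal} (hH : LipschitzWith L H) {c : ℝ} (hc : 0 ≤ c)
    (hW : ∀ z ∈ W, (1 + c * ‖H z‖)⁻¹ • z ∈ U) :
    volume (W \ U) ≤ ENNReal.ofReal c * ∫⁻ z in Z, ENNReal.ofReal (Module.finrank ℝ E * ‖H z‖ + ‖z‖ * ‖fderiv ℝ H z‖) := by
  set n := Module.finrank ℝ E with hn
  let g : E → ENNReal := fun z => ENNReal.ofReal (n * ‖H z‖ + ‖z‖ * ‖fderiv ℝ H z‖)
  have hg : Measurable g := by
    have h1 := hH.continuous.measurable.norm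
    have h2 := (measurable_fderiv ℝ H).norm
    exact ((h1.const_mul _).add (measurable_norm.mul h2)).ennreal_ofReal
  have e1 : volume (W \ U) = ∫⁻ z, (W \ U).indicator (fun _ => (1:ENNReal)) z := by
    rw [lintegral_indicator (hWm.diff hUm)]; simp
  have e2 : ∫⁻ z in Z, g z = ∫⁻ z, Z.indicator g z := (lintegral_indicator hZm g).symm
  show volume (W \ U) ≤ ENNReal.ofReal c * ∫⁻ z in Z, g z
  have hm1 : Measurable ((W \ U).indicator (fun _ => (1:ENNReal))) := measurable_const.indicator (hWm.diff hUm)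
  have hm2 : Measurable (Z.indicator g) := hg.indicator hZm
  rw [e1, e2, polar_lintegral hE hm1, polar_lintegral hE hm2, ← lintegral_const_mul' _ _ ENNReal.ofReal_ne_top]
  apply lintegral_mono_ae
  filter_upwards [polar_ae hE (hH.ae_differentiableAt (μ := (volume : Measure E)))] with ω hω
  have hω1 : ‖(ω : E)‖ = 1 := by simpa using ω.2
  set T := ∫⁻ r in Set.Ioi (0:ℝ), ENNReal.ofReal (r ^ (n - 1)) * Z.indicator g (r • (ω : E)) with hT
  let S : Set ℝ := {r | 0 < r ∧ r • (ω : E) ∈ W \ U}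
  have hSm : MeasurableSet S := by
    have : Measurable (fun r : ℝ => r • (ω : E)) := by fun_prop
    exact measurableSet_Ioi.inter (this (hWm.diff hUm))
  have e3 : ∫⁻ r in Set.Ioi (0:ℝ), ENNReal.ofReal (r ^ (n - 1)) * (W \ U).indicator (fun _ => (1:ENNReal)) (r • (ω : E)) =
      ∫⁻ r in S, ENNReal.ofReal (r ^ (n - 1)) := by
    rw [← lintegral_indicator measurableSet_Ioi, ← lintegral_indicator hSm]
    apply lintegral_congr
    intro r
    by_cases h0 : 0 < r
    · by_cases h1 : r • (ω : E) ∈ W \ U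
      · rw [Set.indicator_of_mem (show r ∈ Set.Ioi 0 from h0), Set.indicator_of_mem h1, mul_one, Set.indicator_of_mem (show r ∈ S from ⟨h0, h1⟩)]
      · rw [Set.indicator_of_mem (show r ∈ Set.Ioi 0 from h0), Set.indicator_of_notMem h1, mul_zero, Set.indicator_of_notMem (fun h => h1 h.2)]
    · rw [Set.indicator_of_notMem (show r ∉ Set.Ioi 0 from h0), Set.indicator_of_notMem (fun h => h0 h.1)]
  rw [e3]
  rcases S.eq_empty_or_nonempty with hSe | hSne
  · rw [hSe]; simp
  have hray : ∀ s ∈ S, ENNReal.ofReal (‖H (s • (ω : E))‖ * s ^ n) ≤ T := by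
    intro s hs
    refine (ray_bound n hE hH hω1 hω hs.1).trans ?_
    rw [hT, ← lintegral_indicator measurableSet_Ioc, ← lintegral_indicator measurableSet_Ioi]
    apply lintegral_mono
    intro r
    by_cases hr : r ∈ Set.Ioc 0 s
    · have hrZ : r • (ω : E) ∈ Z := by
        have := hZc.smul_mem_of_zero_mem hZ0 (hWZ hs.2.1) (t := r / s) ⟨div_nonneg hr.1.le hs.1.le, (div_le_one hs.1).2 hr.2⟩
        rwa [smul_smul, div_mul_cancel₀ _ hs.1.ne'] at this
      rw [Set.indicator_of_mem hr, Set.indicator_of_mem (show r ∈ Set.Ioi 0 from hr.1), Set.indicator_of_mem hrZ]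
    · rw [Set.indicator_of_notMem hr]; exact bot_le
  have hkey : ∀ r ∈ S, ∀ s ∈ S, ENNReal.ofReal ((s - r) * s ^ (n - 1)) ≤ ENNReal.ofReal c * T := by
    intro r hr s hs
    refine le_trans ?_ (mul_le_mul_right (hray s hs) _)
    rw [← ENNReal.ofReal_mul hc]
    apply ENNReal.ofReal_le_ofReal
    set a := c * ‖H (s • (ω : E))‖ with ha
    have ha0 : 0 ≤ a := by positivity
    have h1 := hW _ hs.2.1
    rw [← ha, smul_smul] at h1
    have h2 : (1 + a)⁻¹ * s < r := by
      by_contra hcon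
      push Not at hcon
      have h0 : 0 < (1 + a)⁻¹ * s := lt_of_lt_of_le hr.1 hcon
      have := hUc.smul_mem_of_zero_mem hU0 h1 (t := r / ((1 + a)⁻¹ * s)) ⟨div_nonneg hr.1.le h0.le, (div_le_one h0).2 hcon⟩
      rw [smul_smul, div_mul_cancel₀ _ h0.ne'] at this
      exact hr.2.2 this
    have h3 : s < r * (1 + a) := by
      rwa [inv_mul_lt_iff₀ (by positivity), mul_comm] at h2
    have h4 : s - r ≤ a * s := by
      by_contra hcon
      push Not at hcon
      have : r ≤ s := by nlinarith [hs.1]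
      nlinarith
    have e4 : s ^ n = s * s ^ (n - 1) := by rw [← pow_succ', Nat.sub_add_cancel hE]
    have hsp : 0 ≤ s ^ (n - 1) := pow_nonneg hs.1.le _
    rw [e4, ← mul_assoc c, ← ha]
    nlinarith
  obtain ⟨M, hM⟩ := hZb.exists_norm_le
  have hSM : ∀ s ∈ S, s ≤ M := by
    intro s hs
    have := hM _ (hWZ hs.2.1)
    rwa [norm_smul, hω1, mul_one, Real.norm_of_nonneg hs.1.le] at this
  have hba : BddAbove S := ⟨M, hSM⟩
  have hbb : BddBelow S := ⟨0, fun s hs => hs.1.le⟩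
  have hfin : ENNReal.ofReal ((sSup S - sInf S) * sSup S ^ (n - 1)) ≤ ENNReal.ofReal c * T := by
    have hcl : IsClosed {p : ℝ × ℝ | ENNReal.ofReal ((p.2 - p.1) * p.2 ^ (n - 1)) ≤ ENNReal.ofReal c * T} :=
      isClosed_le (ENNReal.continuous_ofReal.comp (by fun_prop)) continuous_const
    have hsub : S ×ˢ S ⊆ {p : ℝ × ℝ | ENNReal.ofReal ((p.2 - p.1) * p.2 ^ (n - 1)) ≤ ENNReal.ofReal c * T} :=
      fun p hp => hkey _ hp.1 _ hp.2
    have h3 := closure_minimal hsub hcl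
    rw [closure_prod_eq] at h3
    exact h3 (show (sInf S, sSup S) ∈ _ from ⟨csInf_mem_closure hSne hbb, csSup_mem_closure hSne hba⟩)
  refine le_trans ?_ hfin
  have hSI : S ⊆ Set.Icc (sInf S) (sSup S) := fun s hs => ⟨csInf_le hbb hs, le_csSup hba hs⟩
  obtain ⟨s0, hs0⟩ := hSne
  have hsup : 0 ≤ sSup S := hs0.1.le.trans (hSI hs0).2
  calc ∫⁻ r in S, ENNReal.ofReal (r ^ (n - 1)) ≤ ∫⁻ r in S, ENNReal.ofReal (sSup S ^ (n - 1)) := by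
        apply setLIntegral_mono' hSm
        intro r hr
        apply ENNReal.ofReal_le_ofReal
        exact pow_le_pow_left₀ hr.1.le (hSI hr).2 _
    _ = ENNReal.ofReal (sSup S ^ (n - 1)) * volume S := by rw [setLIntegral_const]
    _ ≤ ENNReal.ofReal (sSup S ^ (n - 1)) * ENNReal.ofReal (sSup S - sInf S) := by
        gcongr
        rw [← Real.volume_Icc]; exact measure_mono hSI
    _ = _ := by rw [← ENNReal.ofReal_mul (by positivity), mul_comm]

end P8

section P9
variable {E : Type*} [NormedAddCommGroup E] [InnerProductSpace ℝ E] [FiniteDimensional ℝ E] 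
    [MeasurableSpace E] [BorelSpace E]

theorem opnorm_sq_le {ι : Type*} [Fintype ι] (b : OrthonormalBasis ι ℝ E) (A : E →L[ℝ] E) :
    ‖A‖ ^ 2 ≤ ∑ j, ‖A (b j)‖ ^ 2 := by
  have h : ‖A‖ ≤ √(∑ j, ‖A (b j)‖ ^ 2) := by
    refine A.opNorm_le_bound (Real.sqrt_nonneg _) fun v => ?_
    have e : A v = ∑ j, inner ℝ (b j) v • A (b j) := by
      conv_lhs => rw [← b.sum_repr' v]
      rw [map_sum]; simp only [map_smul]
    have h1 : ‖A v‖ ≤ ∑ j, |inner ℝ (b j) v| * ‖A (b j)‖ := by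
      rw [e]
      refine (norm_sum_le _ _).trans (le_of_eq ?_)
      simp only [norm_smul, Real.norm_eq_abs]
    refine h1.trans ?_
    have h2 := Finset.sum_mul_sq_le_sq_mul_sq Finset.univ (fun j => |inner ℝ (b j) v|) (fun j => ‖A (b j)‖)
    simp only [sq_abs] at h2
    rw [← vec_norm_sq b] at h2
    refine (Real.le_sqrt_of_sq_le h2).trans (le_of_eq ?_)
    rw [Real.sqrt_mul (sq_nonneg _), Real.sqrt_sq (norm_nonneg _), mul_comm]
  calc ‖A‖ ^ 2 ≤ (√(∑ j, ‖A (b j)‖ ^ 2)) ^ 2 := by gcongr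
    _ = _ := Real.sq_sqrt (Finset.sum_nonneg fun j _ => sq_nonneg _)

theorem iso_radius {Z : Set E} {n : ℕ} (hnE : Module.finrank ℝ E = n) (hn : 1 ≤ n) (hZ : IsCompact Z) (hZc : Convex ℝ Z) (hm : 0 < volume.real Z)
    (h1 : ∀ θ : E, ∫ z in Z, inner ℝ θ z = 0) (h2 : ∀ θ : E, ∫ z in Z, (inner ℝ θ z) ^ 2 = volume.real Z * ‖θ‖ ^ 2) :
    Z ⊆ Metric.closedBall 0 (3 * n) := by
  intro z0 hz0
  set m := volume.real Z with hmdef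
  have hn' : (1:ℝ) ≤ n := by exact_mod_cast hn
  set t : ℝ := 1 / (2 * n) with ht
  have ht0 : 0 < t := by positivity
  have ht1 : t ≤ 1 / 2 := by
    rw [ht]; exact one_div_le_one_div_of_le (by norm_num) (by linarith)
  have hnt : n * t = 1 / 2 := by rw [ht]; field_simp
  have hb : 1 / 2 ≤ (1 - t) ^ n := by
    have := one_add_mul_le_pow (a := -t) (by linarith) n
    rw [← sub_eq_add_neg] at this
    linarith
  let f : E → ℝ := Z.indicator (fun z => (inner ℝ z0 z) ^ 2)
  have hc1 : Continuous (fun z : E => (inner ℝ z0 z) ^ 2) := by fun_prop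
  have hfi : Integrable f := (integrable_indicator_iff hZ.measurableSet).2 (hc1.continuousOn.integrableOn_compact hZ)
  have hf : ∫ z, f z = m * ‖z0‖ ^ 2 := by
    rw [integral_indicator hZ.measurableSet, h2]
  have e1 : ∫ w, f (t • z0 + (1 - t) • w) = ((1 - t) ^ n)⁻¹ * (m * ‖z0‖ ^ 2) := by
    have := Measure.integral_comp_smul (volume : Measure E) (fun w => f (t • z0 + w)) (1 - t)
    rw [this, integral_add_left_eq_self f, hf, hnE, smul_eq_mul, abs_of_nonneg]
    have : 0 < (1 - t) ^ n := by linarith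
    positivity
  let g : E → ℝ := Z.indicator (fun w => (inner ℝ z0 (t • z0 + (1 - t) • w)) ^ 2)
  have hc2 : Continuous (fun w : E => (inner ℝ z0 (t • z0 + (1 - t) • w)) ^ 2) := by fun_prop
  have hgi : Integrable g := (integrable_indicator_iff hZ.measurableSet).2 (hc2.continuousOn.integrableOn_compact hZ)
  have hfi2 : Integrable (fun w => f (t • z0 + (1 - t) • w)) := by
    have h3 : Integrable (fun w => f (t • z0 + w)) := hfi.comp_add_left _
    exact h3.comp_smul (show (1 - t) ≠ 0 by linarith)
  have hle : ∫ w, g w ≤ ∫ w, f (t • z0 + (1 - t) • w) := by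
    apply integral_mono hgi hfi2
    intro w
    by_cases hw : w ∈ Z
    · have hw2 : t • z0 + (1 - t) • w ∈ Z := hZc hz0 hw ht0.le (by linarith) (by ring)
      simp only [f, g, Set.indicator_of_mem hw, Set.indicator_of_mem hw2]; exact le_rfl
    · simp only [g, Set.indicator_of_notMem hw, f]
      exact Set.indicator_nonneg (fun _ _ => sq_nonneg _) _
  have e2 : ∫ w, g w = m * (t ^ 2 * ‖z0‖ ^ 4 + (1 - t) ^ 2 * ‖z0‖ ^ 2) := by
    rw [integral_indicator hZ.measurableSet]
    have e : ∀ w, (inner ℝ z0 (t • z0 + (1 - t) • w)) ^ 2 = (t ^ 2 * ‖z0‖ ^ 4 + 2 * t * (1 - t) * ‖z0‖ ^ 2 * inner ℝ z0 w) + (1 - t) ^ 2 * (inner ℝ z0 w) ^ 2 := by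
      intro w
      rw [inner_add_right, real_inner_smul_right, real_inner_smul_right, real_inner_self_eq_norm_sq]; ring
    simp only [e]
    have i0 : IntegrableOn (fun _ : E => t ^ 2 * ‖z0‖ ^ 4) Z := integrableOn_const hZ.measure_lt_top.ne
    have i1 : IntegrableOn (fun w : E => inner ℝ z0 w) Z := by
      have : Continuous (fun w : E => inner ℝ z0 w) := by fun_prop
      exact this.continuousOn.integrableOn_compact hZ
    have i2 : IntegrableOn (fun w : E => inner ℝ z0 w ^ 2) Z := hc1.continuousOn.integrableOn_compact hZ
    rw [integral_add (f := fun w => t ^ 2 * ‖z0‖ ^ 4 + 2 * t * (1 - t) * ‖z0‖ ^ 2 * inner ℝ z0 w) (i0.integrable.add (i1.integrable.const_mul _)) (i2.integrable.const_mul _),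
      integral_add (f := fun w => t ^ 2 * ‖z0‖ ^ 4) i0.integrable (i1.integrable.const_mul _), setIntegral_const, integral_const_mul, integral_const_mul, h1, h2, smul_eq_mul]
    ring
  rw [e1, e2] at hle
  have h3 : ((1 - t) ^ n)⁻¹ ≤ 2 := by
    rw [inv_le_comm₀ (by linarith) (by norm_num)]; linarith
  have h4 : t ^ 2 * ‖z0‖ ^ 4 ≤ 2 * ‖z0‖ ^ 2 := by
    have h5 : ((1 - t) ^ n)⁻¹ * (m * ‖z0‖ ^ 2) ≤ 2 * (m * ‖z0‖ ^ 2) := by gcongr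
    have h6 : m * (t ^ 2 * ‖z0‖ ^ 4 + (1 - t) ^ 2 * ‖z0‖ ^ 2) ≤ m * (2 * ‖z0‖ ^ 2) := by linarith
    have h7 := le_of_mul_le_mul_left h6 hm
    have h8 : 0 ≤ (1 - t) ^ 2 * ‖z0‖ ^ 2 := by positivity
    linarith
  rw [mem_closedBall_zero_iff]
  by_contra hcon
  push Not at hcon
  have h9 : 3 / 2 < t * ‖z0‖ := by
    calc (3:ℝ)/2 = t * (3 * n) := by linarith
      _ < _ := by gcongr
  have hz : 0 < ‖z0‖ ^ 2 := by
    have : 0 < ‖z0‖ := by linarith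
    positivity
  have h10 : (t * ‖z0‖) ^ 2 * ‖z0‖ ^ 2 ≤ 2 * ‖z0‖ ^ 2 := by nlinarith
  have h11 := le_of_mul_le_mul_right h10 hz
  nlinarith

theorem inner_ball {Z W Q : Set E} {R r p : ℝ} (hZ : IsCompact Z) (hR : 0 < R) (hZR : Z ⊆ Metric.closedBall 0 R)
    (hWm : MeasurableSet W) (hr : 0 ≤ r)
    (h1 : ∀ θ : E, ∫ z in Z, inner ℝ θ z = 0) (h2 : ∀ θ : E, ∫ z in Z, (inner ℝ θ z) ^ 2 = volume.real Z * ‖θ‖ ^ 2)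
    (hQ : IsClosed Q) (hQc : Convex ℝ Q) (hQn : Q.Nonempty) {H : E → E} (hH : Continuous H) (hWQ : ∀ z ∈ W, (2:ℝ)⁻¹ • (z + H z) ∈ Q)
    (hp : ∫ z in Z, ‖H z‖ = p)
    (hlt : 2 * r * volume.real Z + p + R * volume.real (Z \ W) < volume.real Z / (2 * R)) :
    Metric.closedBall 0 r ⊆ Q := by
  intro v hv
  by_contra hvQ
  obtain ⟨f, u, hf1, hf2⟩ := geometric_hahn_banach_closed_point hQc hQ hvQ
  set θ := (InnerProductSpace.toDual ℝ E).symm f with hθ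
  have hfθ : ∀ x, f x = inner ℝ θ x := fun x => (InnerProductSpace.toDual_symm_apply).symm
  have hvn : ‖v‖ ≤ r := by simpa using hv
  have hN : 0 < ‖θ‖ := by
    rw [norm_pos_iff]
    intro h0
    obtain ⟨a, ha⟩ := hQn
    have := hf1 a ha
    rw [hfθ, h0, inner_zero_left] at this hf2
    linarith
  set N := ‖θ‖
  have hQr : ∀ a ∈ Q, inner ℝ θ a ≤ N * r := by
    intro a ha
    have a1 := hf1 a ha
    rw [hfθ] at a1 hf2
    have a2 := real_inner_le_norm θ v
    have a3 : ‖θ‖ * ‖v‖ ≤ N * r := by gcongr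
    linarith
  have hHi : IntegrableOn (fun z => ‖H z‖) Z := hH.norm.continuousOn.integrableOn_compact hZ
  have i1 : IntegrableOn (fun w : E => inner ℝ θ w) Z := by
    have : Continuous (fun w : E => inner ℝ θ w) := by fun_prop
    exact this.continuousOn.integrableOn_compact hZ
  have i2 : IntegrableOn (fun w : E => inner ℝ θ w ^ 2) Z := by
    have : Continuous (fun w : E => inner ℝ θ w ^ 2) := by fun_prop
    exact this.continuousOn.integrableOn_compact hZ
  have i3 : IntegrableOn (fun _ : E => N * (2 * r)) Z := integrableOn_const hZ.measure_lt_top.ne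
  have i4 : IntegrableOn (Wᶜ.indicator (fun _ : E => N * R)) Z :=
    (integrableOn_const (C := N * R) (s := Z) (μ := volume) hZ.measure_lt_top.ne).indicator hWm.compl
  have hle : ∫ z in Z, (1 / 2 * inner ℝ θ z + 1 / (2 * (R * N)) * inner ℝ θ z ^ 2) ≤
      ∫ z in Z, ((N * (2 * r) + N * ‖H z‖) + Wᶜ.indicator (fun _ : E => N * R) z) := by
    apply setIntegral_mono_on ((i1.integrable.const_mul _).add (i2.integrable.const_mul _))
      ((i3.integrable.add (hHi.integrable.const_mul _)).add i4.integrable) hZ.measurableSet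
    intro z hz
    have hzR : ‖z‖ ≤ R := by simpa using hZR hz
    set s : ℝ := inner ℝ θ z with hs
    have hsR : |s| ≤ R * N := by
      refine (abs_real_inner_le_norm _ _).trans ?_
      rw [mul_comm]; gcongr
    have hsm : 1 / 2 * s + 1 / (2 * (R * N)) * s ^ 2 ≤ max s 0 := by
      have hRN : 0 < R * N := by positivity
      have : 1 / (2 * (R * N)) * s ^ 2 ≤ |s| / 2 := by
        rw [one_div, inv_mul_le_iff₀ (by positivity), ← sq_abs s]
        nlinarith [abs_nonneg s]
      rcases le_total 0 s with h | h
      · rw [max_eq_left h]; rw [abs_of_nonneg h] at this; linarith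
      · rw [max_eq_right h]; rw [abs_of_nonpos h] at this; linarith
    refine hsm.trans ?_
    show max s 0 ≤ (N * (2 * r) + N * ‖H z‖) + Wᶜ.indicator (fun _ : E => N * R) z
    have hp1 : 0 ≤ N * (2 * r) := by positivity
    have hp2 : 0 ≤ N * ‖H z‖ := by positivity
    have hp3 : 0 ≤ N * R := by positivity
    by_cases hzW : z ∈ W
    · rw [Set.indicator_of_notMem (by simpa using hzW), add_zero]
      apply max_le _ (by linarith)
      have b1 := hQr _ (hWQ z hzW)
      rw [real_inner_smul_right, inner_add_right] at b1
      have b2 := neg_le_of_abs_le (abs_real_inner_le_norm θ (H z))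
      rw [← hs] at b1
      have : ‖θ‖ * ‖H z‖ = N * ‖H z‖ := rfl
      linarith
    · rw [Set.indicator_of_mem (by simpa using hzW)]
      apply max_le _ (by linarith)
      have := le_of_abs_le hsR
      linarith
  rw [integral_add (f := fun z => 1 / 2 * inner ℝ θ z) (i1.integrable.const_mul _) (i2.integrable.const_mul _), integral_const_mul, integral_const_mul, h1, h2,
    integral_add (f := fun z => N * (2 * r) + N * ‖H z‖) (i3.integrable.add (hHi.integrable.const_mul _)) i4.integrable,
    integral_add (f := fun z => N * (2 * r)) i3.integrable (hHi.integrable.const_mul _), setIntegral_const, integral_const_mul, hp, smul_eq_mul,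
    setIntegral_indicator hWm.compl, setIntegral_const, smul_eq_mul, ← Set.sdiff_eq] at hle
  have e : 1 / 2 * 0 + 1 / (2 * (R * N)) * (volume.real Z * N ^ 2) = N * (volume.real Z / (2 * R)) := by
    field_simp; ring
  rw [show ‖θ‖ = N from rfl, e] at hle
  have := mul_lt_mul_of_pos_left hlt hN
  linarith

end P9

section P10
variable {E : Type*} [NormedAddCommGroup E] [InnerProductSpace ℝ E] [FiniteDimensional ℝ E] 
    [MeasurableSpace E] [BorelSpace E]

theorem shrink_mem {Q : Set E} (hQc : Convex ℝ Q) {r : ℝ} (hr : 0 < r) (hb : Metric.closedBall 0 r ⊆ Q) {z h : E}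
    (hx : (2:ℝ)⁻¹ • (z + h) ∈ Q) : (2:ℝ)⁻¹ • ((1 + 1 / (2 * r) * ‖h‖)⁻¹ • z) ∈ Q := by
  set a := 1 / (2 * r) * ‖h‖ with ha
  have ha0 : 0 ≤ a := by positivity
  have hy : (-(r / ‖h‖)) • h ∈ Q := by
    apply hb
    rw [mem_closedBall_zero_iff, norm_smul, norm_neg, norm_div, norm_norm, Real.norm_of_nonneg hr.le]
    by_cases h0 : ‖h‖ = 0
    · rw [h0, mul_zero]; exact hr.le
    · rw [div_mul_cancel₀ _ h0]
  have := hQc hx hy (a := (1 + a)⁻¹) (b := a * (1 + a)⁻¹) (by positivity) (by positivity) (by field_simp)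
  convert this using 1
  have e : (a * (1 + a)⁻¹) • (-(r / ‖h‖)) • h = -(((1 + a)⁻¹ * 2⁻¹) • h) := by
    by_cases h0 : h = 0
    · simp [h0]
    · have : ‖h‖ ≠ 0 := norm_ne_zero_iff.2 h0
      rw [smul_smul, ← neg_smul]
      congr 1
      rw [ha]; field_simp
  rw [e, smul_add, smul_add, smul_smul, smul_smul, smul_smul, mul_comm (2:ℝ)⁻¹]
  abel

theorem num1 {n m Δ p R w : ℝ} (hn : 2 ≤ n) (hm : 0 < m) (hΔ : 0 ≤ Δ) (hR : R = 3 * n) (hw : 0 < w) (hwm : m = w + Δ)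
    (hs : 676 * n ^ 16 * Δ < w) (hp0 : 0 ≤ p) (hp : p ^ 2 ≤ m * (R ^ 2 * (3 * n * Δ))) :
    2 * (1 / (8 * R)) * m + p + R * Δ < m / (2 * R) := by
  have hR0 : 0 < R := by linarith
  have h11 : (2048:ℝ) ≤ n ^ 11 := by
    calc (2048:ℝ) = 2 ^ 11 := by norm_num
      _ ≤ n ^ 11 := by gcongr
  have h14 : (16384:ℝ) ≤ n ^ 14 := by
    calc (16384:ℝ) = 2 ^ 14 := by norm_num
      _ ≤ n ^ 14 := by gcongr
  have h16a : n ^ 16 = n ^ 11 * n ^ 5 := by ring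
  have h16b : n ^ 16 = n ^ 14 * n ^ 2 := by ring
  have h1 : 72 * n ^ 2 * Δ < m := by
    have : 72 * n ^ 2 * Δ ≤ 676 * n ^ 16 * Δ := by
      rw [h16b]
      have : 72 * n ^ 2 ≤ 676 * (n ^ 14 * n ^ 2) := by nlinarith [sq_nonneg n]
      gcongr
    linarith
  have h2 : 15552 * n ^ 5 * Δ < m := by
    have : 15552 * n ^ 5 * Δ ≤ 676 * n ^ 16 * Δ := by
      rw [h16a]
      have : 15552 * n ^ 5 ≤ 676 * (n ^ 11 * n ^ 5) := by
        have : 0 ≤ n ^ 5 := by positivity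
        nlinarith
      gcongr
    linarith
  have h3 : p < m / (8 * R) := by
    apply lt_of_pow_lt_pow_left₀ 2 (by positivity)
    refine lt_of_le_of_lt hp ?_
    rw [div_pow, lt_div_iff₀ (by positivity)]
    have : m * (R ^ 2 * (3 * n * Δ)) * (8 * R) ^ 2 = m * (15552 * n ^ 5 * Δ) := by rw [hR]; ring
    rw [this, sq]
    gcongr
  have h4 : R * Δ < m / (8 * R) := by
    rw [lt_div_iff₀ (by positivity)]
    calc R * Δ * (8 * R) = 72 * n ^ 2 * Δ := by rw [hR]; ring
      _ < m := h1
  have e : m / (2 * R) = 2 * (1 / (8 * R)) * m + m / (8 * R) + m / (8 * R) := by field_simp; ring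
  linarith

theorem num2 {n m Δ p q R w : ℝ} (hn : 2 ≤ n) (hm : 0 < m) (hΔ : 0 ≤ Δ) (hR : R = 3 * n) (hw : 0 < w) (hwm : m = w + Δ)
    (hs : 676 * n ^ 16 * Δ < w) (hp0 : 0 ≤ p) (hp : p ^ 2 ≤ m * (R ^ 2 * (3 * n * Δ)))
    (hq0 : 0 ≤ q) (hq : q ^ 2 ≤ m * (3 * n * Δ)) :
    (2 * (Δ + 1 / (2 * (1 / (8 * R))) * (n * p + R * q))) ^ 2 ≤ 2704 * n ^ 16 * w * Δ := by
  have hR0 : 0 < R := by linarith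
  have h1 : (1:ℝ) ≤ n ^ 16 := one_le_pow₀ (by linarith)
  have hΔw : Δ ≤ w := by nlinarith
  have hmw : m ≤ 2 * w := by linarith
  have e : 1 / (2 * (1 / (8 * R))) = 12 * n := by rw [hR]; field_simp; norm_num
  rw [e]
  set S := n * p + R * q
  have hS0 : 0 ≤ S := by positivity
  have hS : S ^ 2 ≤ 108 * n ^ 5 * (m * Δ) := by
    have a1 : (n * p) ^ 2 ≤ 27 * n ^ 5 * (m * Δ) := by
      calc (n * p) ^ 2 = n ^ 2 * p ^ 2 := by ring
        _ ≤ n ^ 2 * (m * (R ^ 2 * (3 * n * Δ))) := by gcongr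
        _ = _ := by rw [hR]; ring
    have a2 : (R * q) ^ 2 ≤ 27 * n ^ 3 * (m * Δ) := by
      calc (R * q) ^ 2 = R ^ 2 * q ^ 2 := by ring
        _ ≤ R ^ 2 * (m * (3 * n * Δ)) := by gcongr
        _ = _ := by rw [hR]; ring
    have a3 : 27 * n ^ 3 * (m * Δ) ≤ 27 * n ^ 5 * (m * Δ) := by
      gcongr <;> first | linarith | norm_num
    have a4 : S ^ 2 ≤ 2 * (n * p) ^ 2 + 2 * (R * q) ^ 2 := by
      have := sq_nonneg (n * p - R * q)
      simp only [S]; nlinarith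
    linarith
  have hS2 : S ^ 2 ≤ 216 * n ^ 5 * (w * Δ) := by
    have : 108 * n ^ 5 * (m * Δ) ≤ 108 * n ^ 5 * (2 * w * Δ) := by gcongr
    linarith
  have b1 : (2 * (Δ + 12 * n * S)) ^ 2 ≤ 8 * Δ ^ 2 + 1152 * n ^ 2 * S ^ 2 := by
    nlinarith [sq_nonneg (Δ - 12 * n * S)]
  have b2 : 1152 * n ^ 2 * S ^ 2 ≤ 1152 * n ^ 2 * (216 * n ^ 5 * (w * Δ)) := by gcongr
  have b3 : 8 * Δ ^ 2 ≤ 8 * n ^ 7 * (w * Δ) := by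
    have : (1:ℝ) ≤ n ^ 7 := one_le_pow₀ (by linarith)
    have h0 : Δ ^ 2 ≤ w * Δ := by nlinarith
    have h0' : 0 ≤ w * Δ := by positivity
    nlinarith
  have h9 : (512:ℝ) ≤ n ^ 9 := by
    calc (512:ℝ) = 2 ^ 9 := by norm_num
      _ ≤ n ^ 9 := by gcongr
  have b4 : 2704 * n ^ 16 * w * Δ = 2704 * n ^ 9 * (n ^ 7 * (w * Δ)) := by ring
  have b5 : 0 ≤ n ^ 7 * (w * Δ) := by positivity
  have b6 : 1152 * n ^ 2 * (216 * n ^ 5 * (w * Δ)) = 248832 * (n ^ 7 * (w * Δ)) := by ring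
  nlinarith

theorem iso_core {n : ℕ} (hnE : Module.finrank ℝ E = n) (hn : 2 ≤ n) {K C : Set E} (hK : IsCompact K) (hKc : Convex ℝ K)
    (hC : IsCompact C) (hCc : Convex ℝ C) {V : ℝ} (hV : 0 < V) (hKV : volume K = ENNReal.ofReal V) (hCV : volume C = ENNReal.ofReal V)
    (h1 : ∀ θ : E, ∫ z in (K + C), inner ℝ θ z = 0)
    (h2 : ∀ θ : E, ∫ z in (K + C), (inner ℝ θ z) ^ 2 = volume.real (K + C) * ‖θ‖ ^ 2) :
    ∃ x : E, volume.real (symmDiff K ({x} + C)) ^ 2 * 2 ^ n ≤ 2704 * n ^ 16 * V * (volume.real (K + C) - 2 ^ n * V) := by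
  have hn' : (2:ℝ) ≤ n := by exact_mod_cast hn
  have hE : 0 < Module.finrank ℝ E := by omega
  have hKr : volume.real K = V := by rw [measureReal_def, hKV, ENNReal.toReal_ofReal hV.le]
  have hCr : volume.real C = V := by rw [measureReal_def, hCV, ENNReal.toReal_ofReal hV.le]
  obtain ⟨G, W, hG, hWm, hWZ, hWmem, hWvol, hint⟩ := ot_equal hE hK hC hV hKV hCV
  rw [hnE] at hWvol
  replace hint := hint.trans_eq (by rw [hnE] : _ = 3 * (n:ℝ) * (volume.real (K + C) - 2 ^ n * V))
  set Z := K + C with hZdef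
  have hZ : IsCompact Z := hK.add hC
  have hZc : Convex ℝ Z := hKc.add hCc
  set m := volume.real Z with hm
  set Δ := m - 2 ^ n * V with hΔ
  set w := (2:ℝ) ^ n * V with hw
  have hw0 : 0 < w := by positivity
  have hΔ0 : 0 ≤ Δ := measureReal_nonneg.trans hWvol
  have hm0 : 0 < m := by linarith
  by_cases hs : 676 * (n:ℝ) ^ 16 * Δ < w
  swap
  · push Not at hs
    refine ⟨0, ?_⟩
    have hD : volume.real (symmDiff K ({0} + C)) ≤ 2 * V := by
      rw [Set.singleton_add, Set.image_congr (fun x _ => zero_add x), Set.image_id']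
      have h3 : symmDiff K C ⊆ K ∪ C := by
        rw [Set.symmDiff_def]; exact Set.union_subset_union Set.sdiff_subset Set.sdiff_subset
      calc _ ≤ volume.real (K ∪ C) := measureReal_mono h3 (hK.union hC).measure_lt_top.ne
        _ ≤ _ := measureReal_union_le _ _
        _ = _ := by rw [hKr, hCr]; ring
    calc volume.real (symmDiff K ({0} + C)) ^ 2 * 2 ^ n ≤ (2 * V) ^ 2 * 2 ^ n := by gcongr
      _ = 4 * V * w := by rw [hw]; ring
      _ ≤ 4 * V * (676 * (n:ℝ) ^ 16 * Δ) := by gcongr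
      _ = _ := by ring
  set R : ℝ := 3 * n with hR
  have hR0 : 0 < R := by positivity
  have hZR : Z ⊆ Metric.closedBall 0 R := iso_radius hnE (by omega) hZ hZc hm0 h1 h2
  obtain ⟨g0, hg0⟩ := vec_poincare hR0 hZ hZc hZR hm0 hG
  have hHl : LipschitzWith 1 (fun z => G z - g0) := by
    refine LipschitzWith.of_dist_le_mul fun x y => ?_
    rw [dist_sub_right]; exact hG.dist_le_mul x y
  set H : E → E := fun z => G z - g0 with hH
  have hHc : Continuous H := hHl.continuous
  have hfd : ∀ z, fderiv ℝ H z = fderiv ℝ G z := fun z => fderiv_sub_const _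
  set p := ∫ z in Z, ‖H z‖ with hp
  set q := ∫ z in Z, ‖fderiv ℝ H z‖ with hq
  have hp0 : 0 ≤ p := integral_nonneg fun z => norm_nonneg _
  have hq0 : 0 ≤ q := integral_nonneg fun z => norm_nonneg _
  have hpi : IntegrableOn (fun z => ‖H z‖) Z := hHc.norm.continuousOn.integrableOn_compact hZ
  have hqb : ∀ z, ‖fderiv ℝ H z‖ ≤ 1 := fun z => by simpa using norm_fderiv_le_of_lipschitz ℝ hHl (x₀ := z)
  have hqi : IntegrableOn (fun z => ‖fderiv ℝ H z‖) Z :=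
    fd_bdd_int hZ (measurable_fderiv ℝ H).norm (M := 1) fun z => by rw [abs_norm]; exact hqb z
  have hqi2 : IntegrableOn (fun z => ‖fderiv ℝ H z‖ ^ 2) Z :=
    fd_bdd_int hZ ((measurable_fderiv ℝ H).norm.pow_const 2) (M := 1) fun z => by
      rw [abs_of_nonneg (by positivity)]; exact pow_le_one₀ (norm_nonneg _) (hqb z)
  have hp2 : p ^ 2 ≤ m * (R ^ 2 * (3 * n * Δ)) := by
    refine (cs_set hZ hpi ((hHc.norm.pow 2).continuousOn.integrableOn_compact hZ)).trans ?_
    refine mul_le_mul_of_nonneg_left (hg0.trans ?_) hm0.le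
    exact mul_le_mul_of_nonneg_left hint (by positivity)
  have hq2 : q ^ 2 ≤ m * (3 * n * Δ) := by
    refine (cs_set hZ hqi hqi2).trans ?_
    refine mul_le_mul_of_nonneg_left (le_trans ?_ hint) hm0.le
    refine setIntegral_mono_on hqi2 ?_ hZ.measurableSet fun z _ => ?_
    · refine fd_bdd_int hZ (M := ∑ j : Fin (Module.finrank ℝ E), 1) ?_ fun z => ?_
      · refine Finset.measurable_fun_sum _ fun j _ => ?_
        exact (((measurable_fderiv ℝ G).apply_continuousLinearMap _).norm).pow_const 2
      · rw [abs_of_nonneg (Finset.sum_nonneg fun j _ => sq_nonneg _)]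
        refine Finset.sum_le_sum fun j _ => ?_
        apply pow_le_one₀ (norm_nonneg _)
        have a1 := (fderiv ℝ G z).le_opNorm (stdOrthonormalBasis ℝ E j)
        rw [OrthonormalBasis.norm_eq_one, mul_one, ← hfd] at a1
        rw [← hfd]
        exact a1.trans (hqb z)
    · rw [hfd]; exact opnorm_sq_le _ _
  have hmw : m = w + Δ := by rw [hΔ]; ring
  have hlt0 := num1 hn' hm0 hΔ0 hR hw0 hmw hs hp0 hp2
  set r : ℝ := 1 / (8 * R) with hr
  have hr0 : 0 < r := by positivity
  have hlt : 2 * r * volume.real Z + p + R * volume.real (Z \ W) < volume.real Z / (2 * R) := by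
    have : R * volume.real (Z \ W) ≤ R * Δ := mul_le_mul_of_nonneg_left hWvol hR0.le
    linarith
  set u := (2:ℝ)⁻¹ • g0 with hu
  let K' : Set E := (fun x => x + u) ⁻¹' K
  let C' : Set E := (fun x => x + (-u)) ⁻¹' C
  have hK'cl : IsClosed K' := hK.isClosed.preimage (by fun_prop)
  have hC'cl : IsClosed C' := hC.isClosed.preimage (by fun_prop)
  have hK'c : Convex ℝ K' := hKc.translate_preimage_left u
  have hC'c : Convex ℝ C' := hCc.translate_preimage_left (-u)
  have hK'v : volume K' = ENNReal.ofReal V := by rw [← hKV]; exact measure_preimage_add_right _ _ _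
  have hC'v : volume C' = ENNReal.ofReal V := by rw [← hCV]; exact measure_preimage_add_right _ _ _
  have hne : ∀ S : Set E, volume S = ENNReal.ofReal V → S.Nonempty := by
    intro S hS
    by_contra hcon
    rw [Set.not_nonempty_iff_eq_empty] at hcon
    rw [hcon, measure_empty] at hS
    have := ENNReal.ofReal_pos.2 hV
    rw [← hS] at this
    exact lt_irrefl _ this
  have hWK : ∀ z ∈ W, (2:ℝ)⁻¹ • (z + H z) ∈ K' := by
    intro z hz
    show (2:ℝ)⁻¹ • (z + (G z - g0)) + u ∈ K
    have e : (2:ℝ)⁻¹ • (z + (G z - g0)) + u = (2:ℝ)⁻¹ • (z + G z) := by rw [hu]; module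
    rw [e]; exact (hWmem z hz).1
  have hWC : ∀ z ∈ W, (2:ℝ)⁻¹ • (z + - H z) ∈ C' := by
    intro z hz
    show (2:ℝ)⁻¹ • (z + - (G z - g0)) + -u ∈ C
    have e : (2:ℝ)⁻¹ • (z + - (G z - g0)) + -u = (2:ℝ)⁻¹ • (z - G z) := by rw [hu]; module
    rw [e]; exact (hWmem z hz).2
  have hBK := inner_ball hZ hR0 hZR hWm hr0.le h1 h2 hK'cl hK'c (hne _ hK'v) hHc hWK rfl hlt
  have hBC := inner_ball hZ hR0 hZR hWm hr0.le h1 h2 hC'cl hC'c (hne _ hC'v) (H := fun z => - H z) hHc.neg hWC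
    (by simp only [norm_neg]; rfl) hlt
  set N := K' ∩ C' with hN
  have hNm : MeasurableSet N := hK'cl.measurableSet.inter hC'cl.measurableSet
  have h0N : (0:E) ∈ N := ⟨hBK (by simp [hr0.le]), hBC (by simp [hr0.le])⟩
  set U := (2:ℝ) • N with hU
  have hUmem : ∀ z, z ∈ U ↔ (2:ℝ)⁻¹ • z ∈ N := fun z => Set.mem_smul_set_iff_inv_smul_mem₀ two_ne_zero _ _
  have hUZ : U ⊆ Z := by
    intro z hz
    rw [hUmem] at hz
    refine ⟨_, hz.1, _, hz.2, ?_⟩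
    show (2:ℝ)⁻¹ • z + u + ((2:ℝ)⁻¹ • z + -u) = z
    module
  have hUm : MeasurableSet U := hNm.const_smul₀ _
  have hUc : Convex ℝ U := (hK'c.inter hC'c).smul _
  have hU0 : (0:E) ∈ U := by rw [hUmem]; simpa using h0N
  have hWU : ∀ z ∈ W, (1 + 1 / (2 * r) * ‖H z‖)⁻¹ • z ∈ U := by
    intro z hz
    rw [hUmem]
    refine ⟨shrink_mem hK'c hr0 hBK (hWK z hz), ?_⟩
    have := shrink_mem hC'c hr0 hBC (hWC z hz)
    rwa [norm_neg] at this
  have htr := trace hE hZ.measurableSet hZc (hUZ hU0) hZ.isBounded hUm hUc hU0 hWm hWZ hHl (c := 1 / (2 * r)) (by positivity) hWU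
  rw [hnE] at htr
  have hgi : IntegrableOn (fun z => n * ‖H z‖ + ‖z‖ * ‖fderiv ℝ H z‖) Z := by
    refine (hpi.const_mul _).add ?_
    refine Measure.integrableOn_of_bounded (M := R * 1) hZ.measure_lt_top.ne
      (measurable_norm.mul (measurable_fderiv ℝ H).norm).aestronglyMeasurable ?_
    filter_upwards [ae_restrict_mem hZ.measurableSet] with z hz
    have hzR : ‖z‖ ≤ R := by simpa using hZR hz
    rw [Real.norm_of_nonneg (by positivity)]
    exact mul_le_mul hzR (hqb z) (norm_nonneg _) hR0.le
  rw [← ofReal_integral_eq_lintegral_ofReal hgi (by filter_upwards with z; positivity), ← ENNReal.ofReal_mul (by positivity)] at htr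
  have hgle : ∫ z in Z, (n * ‖H z‖ + ‖z‖ * ‖fderiv ℝ H z‖) ≤ n * p + R * q := by
    have : ∫ z in Z, (n * ‖H z‖ + ‖z‖ * ‖fderiv ℝ H z‖) ≤ ∫ z in Z, (n * ‖H z‖ + R * ‖fderiv ℝ H z‖) := by
      refine setIntegral_mono_on hgi ((hpi.const_mul _).add (hqi.const_mul _)) hZ.measurableSet fun z hz => ?_
      have hzR : ‖z‖ ≤ R := by simpa using hZR hz
      show n * ‖H z‖ + ‖z‖ * ‖fderiv ℝ H z‖ ≤ n * ‖H z‖ + R * ‖fderiv ℝ H z‖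
      gcongr
    refine this.trans (le_of_eq ?_)
    rw [integral_add (f := fun z => n * ‖H z‖) (hpi.integrable.const_mul _) (hqi.integrable.const_mul _), integral_const_mul, integral_const_mul]
  have hg0' : 0 ≤ ∫ z in Z, (n * ‖H z‖ + ‖z‖ * ‖fderiv ℝ H z‖) := integral_nonneg fun z => by positivity
  have hWUr : volume.real (W \ U) ≤ 1 / (2 * r) * (n * p + R * q) := by
    refine (ENNReal.toReal_le_of_le_ofReal (by positivity) htr).trans ?_
    gcongr
  have hZfin : volume Z ≠ ⊤ := hZ.measure_lt_top.ne
  have hZU : m - volume.real U ≤ Δ + 1 / (2 * r) * (n * p + R * q) := by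
    have a1 : volume.real (Z \ U) = m - volume.real U := measureReal_sdiff hUZ hUm hZfin
    have a2 : Z \ U ⊆ (Z \ W) ∪ (W \ U) := by
      intro z hz
      by_cases hzW : z ∈ W
      · exact Or.inr ⟨hzW, hz.2⟩
      · exact Or.inl ⟨hz.1, hzW⟩
    have a3 : volume.real (Z \ U) ≤ volume.real (Z \ W) + volume.real (W \ U) := by
      refine (measureReal_mono a2 ?_).trans (measureReal_union_le _ _)
      refine ne_top_of_le_ne_top hZfin (measure_mono ?_)
      exact Set.union_subset Set.sdiff_subset (Set.sdiff_subset.trans hWZ)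
    linarith
  have hUN : volume.real U = 2 ^ n * volume.real N := by
    rw [hU, measureReal_def, Measure.addHaar_smul, ENNReal.toReal_mul, hnE, ENNReal.toReal_ofReal (abs_nonneg _), abs_of_nonneg (by positivity)]
    rfl
  refine ⟨g0, ?_⟩
  have hDe : volume.real (symmDiff K ({g0} + C)) = volume.real (symmDiff K' C') := by
    have e : symmDiff K' C' = (fun x => x + u) ⁻¹' (symmDiff K ({g0} + C)) := by
      rw [Set.preimage_symmDiff]
      congr 1
      ext x
      simp only [C', Set.mem_preimage, Set.singleton_add, Set.mem_image]
      constructor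
      · intro h; exact ⟨_, h, by rw [hu]; module⟩
      · rintro ⟨y, hy, hxy⟩
        have : x + -u = y := by
          have : x = g0 + y - u := by rw [hxy]; abel
          rw [this, hu]; module
        rw [this]; exact hy
    rw [e, measureReal_def, measureReal_def, measure_preimage_add_right]
  have hD : volume.real (symmDiff K' C') ≤ 2 * (V - volume.real N) := by
    have hK'r : volume.real K' = V := by rw [measureReal_def, hK'v, ENNReal.toReal_ofReal hV.le]
    have hC'r : volume.real C' = V := by rw [measureReal_def, hC'v, ENNReal.toReal_ofReal hV.le]
    have hNK : N ⊆ K' := Set.inter_subset_left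
    have hNC : N ⊆ C' := Set.inter_subset_right
    have hNf : volume N ≠ ⊤ := ne_top_of_le_ne_top (by rw [hK'v]; exact ENNReal.ofReal_ne_top) (measure_mono hNK)
    have a1 : volume.real (K' \ N) = V - volume.real N := by rw [measureReal_sdiff hNK hNm (by rw [hK'v]; exact ENNReal.ofReal_ne_top), hK'r]
    have a2 : volume.real (C' \ N) = V - volume.real N := by rw [measureReal_sdiff hNC hNm (by rw [hC'v]; exact ENNReal.ofReal_ne_top), hC'r]
    have e1 : K' \ C' = K' \ N := by rw [hN, Set.sdiff_self_inter]
    have e2 : C' \ K' = C' \ N := by rw [hN, Set.inter_comm, Set.sdiff_self_inter]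
    rw [Set.symmDiff_def, e1, e2]
    refine (measureReal_union_le _ _).trans ?_
    linarith
  have hnum := num2 hn' hm0 hΔ0 hR hw0 hmw hs hp0 hp2 hq0 hq2
  rw [← hr] at hnum
  have hP : (0:ℝ) < 2 ^ n := by positivity
  set D := volume.real (symmDiff K ({g0} + C)) with hDdef
  have hD0 : 0 ≤ D := measureReal_nonneg
  have hfin : 2 ^ n * D ≤ 2 * (Δ + 1 / (2 * r) * (n * p + R * q)) := by
    rw [hDe]
    have : 2 ^ n * volume.real (symmDiff K' C') ≤ 2 ^ n * (2 * (V - volume.real N)) := by gcongr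
    rw [hUN] at hZU
    have e : (2:ℝ) ^ n * (2 * (V - volume.real N)) = 2 * (w - 2 ^ n * volume.real N) := by rw [hw]; ring
    linarith
  have hsq : (2 ^ n * D) ^ 2 ≤ 2704 * (n:ℝ) ^ 16 * w * Δ := le_trans (by gcongr) hnum
  have e1 : (2 ^ n * D) ^ 2 = 2 ^ n * (D ^ 2 * 2 ^ n) := by ring
  have e2 : 2704 * (n:ℝ) ^ 16 * w * Δ = 2 ^ n * (2704 * (n:ℝ) ^ 16 * V * Δ) := by rw [hw]; ring
  rw [e1, e2] at hsq
  exact le_of_mul_le_mul_left hsq hP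

end P10

section P11
variable {n : ℕ}
local notation "EE" => EuclideanSpace ℝ (Fin n)

open scoped MatrixOrder ComplexOrder Matrix.Norms.L2Operator in
theorem psd_factor {M : Matrix (Fin n) (Fin n) ℝ} (hM : M.PosSemidef) : ∃ B : Matrix (Fin n) (Fin n) ℝ, M = B.conjTranspose * B := by
  obtain ⟨B, hB⟩ := CStarAlgebra.nonneg_iff_eq_star_mul_self.mp hM.nonneg
  exact ⟨B, hB⟩

theorem cov_factor {Z : Set EE} (hZ : IsCompact Z) (hm : 0 < volume.real Z) :
    ∃ A : EE →ₗ[ℝ] EE, Function.Injective A ∧ ∀ θ : EE, ∫ z in Z, (inner ℝ θ z) ^ 2 = volume.real Z * ‖A θ‖ ^ 2 := by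
  set m := volume.real Z
  have hint : ∀ i j, IntegrableOn (fun z : EE => z i * z j) Z := fun i j =>
    (Continuous.continuousOn (by fun_prop)).integrableOn_compact hZ
  let M : Matrix (Fin n) (Fin n) ℝ := fun i j => m⁻¹ * ∫ z in Z, z i * z j
  have hq : ∀ v : Fin n → ℝ, ∫ z in Z, (∑ i, v i * z i) ^ 2 = m * (v ⬝ᵥ (M.mulVec v)) := by
    intro v
    have e : ∀ z : EE, (∑ i, v i * z i) ^ 2 = ∑ i, ∑ j, (v i * v j) * (z i * z j) := by
      intro z
      rw [sq, Finset.sum_mul_sum]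
      refine Finset.sum_congr rfl fun i _ => Finset.sum_congr rfl fun j _ => by ring
    simp_rw [e]
    rw [integral_finsetSum _ fun i _ => integrable_finsetSum _ fun j _ => (hint i j).integrable.const_mul _]
    simp only [dotProduct, Matrix.mulVec, Finset.mul_sum, M]
    refine Finset.sum_congr rfl fun i _ => ?_
    rw [integral_finsetSum _ fun j _ => (hint i j).integrable.const_mul _]
    refine Finset.sum_congr rfl fun j _ => ?_
    rw [integral_const_mul]
    field_simp
  have hM : M.PosSemidef := by
    refine Matrix.PosSemidef.of_dotProduct_mulVec_nonneg ?_ ?_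
    · ext i j
      rw [Matrix.conjTranspose_apply, star_trivial]
      show m⁻¹ * (∫ z in Z, z j * z i) = m⁻¹ * ∫ z in Z, z i * z j
      have : (fun z : EE => z j * z i) = fun z => z i * z j := by funext z; ring
      rw [this]
    · intro v
      rw [star_trivial]
      have := hq v
      have h0 : 0 ≤ ∫ z in Z, (∑ i, v i * z i) ^ 2 := integral_nonneg fun z => sq_nonneg _
      rw [this] at h0
      exact nonneg_of_mul_nonneg_right h0 hm
  obtain ⟨B, hB⟩ := psd_factor hM
  let A : EE →ₗ[ℝ] EE := Matrix.toEuclideanLin B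
  have hA : ∀ θ : EE, ∫ z in Z, (inner ℝ θ z) ^ 2 = m * ‖A θ‖ ^ 2 := by
    intro θ
    have e : ∀ z : EE, inner ℝ θ z = ∑ i, θ i * z i := by
      intro z; simp [PiLp.inner_apply, mul_comm]
    simp_rw [e]
    rw [hq, hB, EuclideanSpace.norm_sq_eq]
    congr 1
    rw [← Matrix.mulVec_mulVec, Matrix.dotProduct_mulVec, Matrix.conjTranspose_eq_transpose_of_trivial, Matrix.vecMul_transpose]
    simp only [dotProduct]
    refine Finset.sum_congr rfl fun i _ => ?_
    rw [Real.norm_eq_abs, sq_abs, sq]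
    rfl
  refine ⟨A, ?_, hA⟩
  rw [injective_iff_map_eq_zero]
  intro θ hθ
  by_contra hne
  have h := hA θ
  rw [hθ, norm_zero, zero_pow two_ne_zero, mul_zero, setIntegral_eq_zero_iff_of_nonneg_ae] at h
  rotate_left
  · filter_upwards with z; exact sq_nonneg _
  · exact (Continuous.continuousOn (by fun_prop)).integrableOn_compact hZ
  have h2 : Z ≤ᵐ[volume] ({z | inner ℝ θ z = 0} : Set EE) := by
    have := (ae_restrict_iff' hZ.measurableSet).1 h
    filter_upwards [this] with z hz hzZ
    exact pow_eq_zero_iff (two_ne_zero) |>.1 (hz hzZ)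
  have h3 : volume ({z | inner ℝ θ z = 0} : Set EE) = 0 := by
    have := Measure.addHaar_submodule volume (LinearMap.ker (innerSL ℝ θ).toLinearMap) (by
      intro ht
      have : θ ∈ LinearMap.ker (innerSL ℝ θ).toLinearMap := by rw [ht]; trivial
      have h4 : inner ℝ θ θ = (0:ℝ) := this
      exact hne (inner_self_eq_zero.1 h4))
    exact this
  have h4 := measure_mono_ae h2
  rw [h3] at h4
  have : m = 0 := by
    rw [show m = (volume Z).toReal from rfl, le_antisymm h4 bot_le]; rfl
  exact hm.ne' this

theorem eqvol_c (hn : 2 ≤ n) {K C : Set EE} (hK : IsCompact K) (hKc : Convex ℝ K)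
    (hC : IsCompact C) (hCc : Convex ℝ C) {V : ℝ} (hV : 0 < V) (hKV : volume K = ENNReal.ofReal V) (hCV : volume C = ENNReal.ofReal V)
    (hm : 0 < volume.real (K + C))
    (h1 : ∀ θ : EE, ∫ z in (K + C), inner ℝ θ z = 0) :
    ∃ x : EE, volume.real (symmDiff K ({x} + C)) ^ 2 * 2 ^ n ≤ 2704 * n ^ 16 * V * (volume.real (K + C) - 2 ^ n * V) := by
  have hZ : IsCompact (K + C) := hK.add hC
  obtain ⟨A, hAi, hA⟩ := cov_factor hZ hm
  let e : EE ≃ₗ[ℝ] EE := LinearEquiv.ofInjectiveEndo A hAi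
  have he : ∀ x, e x = A x := fun x => rfl
  let T : EE →ₗ[ℝ] EE := LinearMap.adjoint (e.symm : EE →ₗ[ℝ] EE)
  have hT : ∀ θ z, inner ℝ θ (T z) = inner ℝ (e.symm θ) z := fun θ z => LinearMap.adjoint_inner_right _ _ _
  have hTi : Function.Injective T := by
    rw [injective_iff_map_eq_zero]
    intro z hz
    have := hT (e z) z
    rw [hz, inner_zero_right, e.symm_apply_apply] at this
    exact inner_self_eq_zero.1 this.symm
  let L : EE ≃ₗ[ℝ] EE := LinearEquiv.ofInjectiveEndo T hTi
  have hL : ∀ x, L x = T x := fun x => rfl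
  set d := |LinearMap.det T| with hd
  have hd0 : 0 < d := by
    rw [hd, abs_pos]
    exact (LinearEquiv.isUnit_det' L).ne_zero
  have hvol : ∀ S : Set EE, volume (T '' S) = ENNReal.ofReal d * volume S := fun S => Measure.addHaar_image_linearMap _ _ _
  have hvolr : ∀ S : Set EE, volume.real (T '' S) = d * volume.real S := fun S => by
    rw [measureReal_def, hvol, ENNReal.toReal_mul, ENNReal.toReal_ofReal hd0.le]; rfl
  have hTc : Continuous T := T.continuous_of_finiteDimensional
  have hsum : T '' K + T '' C = T '' (K + C) := (Set.image_add T).symm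
  have hcv : ∀ g : EE → ℝ, ∫ z in T '' (K + C), g z = d * ∫ z in (K + C), g (T z) := by
    intro g
    have := integral_image_eq_integral_abs_det_fderiv_smul volume hZ.measurableSet (f := T)
      (f' := fun _ => LinearMap.toContinuousLinearMap T) (fun x _ => (LinearMap.toContinuousLinearMap T).hasFDerivAt.hasFDerivWithinAt)
      hTi.injOn g
    rw [this]
    have e2 : (LinearMap.toContinuousLinearMap T).det = LinearMap.det T := rfl
    simp only [e2, smul_eq_mul]
    rw [integral_const_mul]
  obtain ⟨x, hx⟩ := iso_core (E := EE) (n := n) (by simp) hn (hK.image hTc) (hKc.linear_image T) (hC.image hTc) (hCc.linear_image T)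
    (V := d * V) (by positivity) (by rw [hvol, hKV, ENNReal.ofReal_mul hd0.le]) (by rw [hvol, hCV, ENNReal.ofReal_mul hd0.le])
    (by
      intro θ
      rw [hsum, hcv]
      simp_rw [hT]
      rw [h1, mul_zero])
    (by
      intro θ
      rw [hsum, hcv, hvolr]
      simp_rw [hT]
      rw [hA, ← he, e.apply_symm_apply]; ring)
  refine ⟨L.symm x, ?_⟩
  have hs : symmDiff (T '' K) ({x} + T '' C) = T '' (symmDiff K ({L.symm x} + C)) := by
    rw [Set.image_symmDiff hTi]
    congr 1
    rw [Set.image_add T, Set.image_singleton, ← hL, L.apply_symm_apply]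
  rw [hs, hsum, hvolr, hvolr] at hx
  have hd2 : 0 < d ^ 2 := by positivity
  refine le_of_mul_le_mul_left (a := d ^ 2) ?_ hd2
  calc _ = (d * volume.real (symmDiff K ({L.symm x} + C))) ^ 2 * 2 ^ n := by ring
    _ ≤ _ := hx
    _ = _ := by ring

theorem eqvol (hn : 2 ≤ n) {K C : Set EE} (hK : IsCompact K) (hKc : Convex ℝ K)
    (hC : IsCompact C) (hCc : Convex ℝ C) {V : ℝ} (hV : 0 < V) (hKV : volume K = ENNReal.ofReal V) (hCV : volume C = ENNReal.ofReal V) :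
    ∃ x : EE, volume.real (symmDiff K ({x} + C)) ^ 2 * 2 ^ n ≤ 2704 * n ^ 16 * V * (volume.real (K + C) - 2 ^ n * V) := by
  have hZ : IsCompact (K + C) := hK.add hC
  have hm : 0 < volume.real (K + C) := by
    have hne : C.Nonempty := by
      by_contra hcon
      rw [Set.not_nonempty_iff_eq_empty] at hcon
      rw [hcon, measure_empty] at hCV
      have := ENNReal.ofReal_pos.2 hV
      rw [← hCV] at this
      exact lt_irrefl _ this
    obtain ⟨c, hc⟩ := hne
    have h1 : (fun x => c + x) '' K ⊆ K + C := by
      rintro _ ⟨k, hk, rfl⟩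
      exact ⟨k, hk, c, hc, add_comm _ _⟩
    have h2 : volume.real ((fun x => c + x) '' K) = V := by
      rw [measureReal_def, Set.image_add_left, measure_preimage_add, hKV, ENNReal.toReal_ofReal hV.le]
    calc 0 < V := hV
      _ = _ := h2.symm
      _ ≤ _ := measureReal_mono h1 hZ.measure_lt_top.ne
  set m := volume.real (K + C) with hmdef
  set c : EE := m⁻¹ • ∫ z in (K + C), z with hc
  let K' : Set EE := (fun x => c + x) ⁻¹' K
  have hK'e : K' = (fun x => -c + x) '' K := by rw [Set.image_add_left, neg_neg]
  have hK'k : IsCompact K' := by rw [hK'e]; exact hK.image (by fun_prop)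
  have hK'c : Convex ℝ K' := hKc.translate_preimage_right c
  have hK'V : volume K' = ENNReal.ofReal V := by rw [← hKV]; exact measure_preimage_add _ _ _
  have hsum : K' + C = (fun x => c + x) ⁻¹' (K + C) := by
    ext z
    constructor
    · rintro ⟨k, hk, y, hy, rfl⟩
      exact ⟨c + k, hk, y, hy, by simp [add_assoc]⟩
    · rintro ⟨k, hk, y, hy, hz⟩
      refine ⟨-c + k, ?_, y, hy, ?_⟩
      · show c + (-c + k) ∈ K
        simpa using hk
      · have hz' : k + y = c + z := hz
        show -c + k + y = z
        rw [add_assoc, hz']; simp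
  have hsv : volume.real (K' + C) = m := by
    rw [measureReal_def, hsum, measure_preimage_add]; rfl
  have hcv : ∀ g : EE → ℝ, ∫ z in (K' + C), g z = ∫ z in (K + C), g (z - c) := by
    intro g
    have hmp : MeasurePreserving (fun x : EE => c + x) volume volume := measurePreserving_add_left volume c
    have hme : MeasurableEmbedding (fun x : EE => c + x) := (MeasurableEquiv.addLeft c).measurableEmbedding
    have := hmp.setIntegral_preimage_emb hme (fun z => g (z - c)) (K + C)
    rw [← this, hsum]
    simp
  obtain ⟨x, hx⟩ := eqvol_c hn hK'k hK'c hC hCc hV hK'V hCV (by rw [hsv]; exact hm) (by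
    intro θ
    rw [hcv]
    simp_rw [inner_sub_right]
    have hi : IntegrableOn (fun z : EE => z) (K + C) := continuousOn_id.integrableOn_compact hZ
    have hi2 : IntegrableOn (fun z : EE => inner ℝ θ z) (K + C) := (Continuous.continuousOn (by fun_prop)).integrableOn_compact hZ
    have hi3 : IntegrableOn (fun z : EE => inner ℝ θ c) (K + C) := continuousOn_const.integrableOn_compact hZ
    rw [integral_sub hi2.integrable hi3.integrable, setIntegral_const]
    have h3 : ∫ z in (K + C), inner ℝ θ z = inner ℝ θ (∫ z in (K + C), z) := integral_inner hi.integrable θ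
    rw [h3, hc, inner_smul_right, smul_eq_mul, ← hmdef]
    field_simp
    ring)
  refine ⟨c + x, ?_⟩
  have hs : symmDiff K' ({x} + C) = (fun z => c + z) ⁻¹' (symmDiff K ({c + x} + C)) := by
    rw [Set.preimage_symmDiff]
    congr 1
    ext z
    simp only [Set.mem_preimage, Set.singleton_add, Set.mem_image, add_assoc, add_right_inj]
  rw [hsv, hs, measureReal_def, measure_preimage_add] at hx
  exact hx

end P11

section P12

theorem gamma_bd {n : ℕ} (hn : 1 ≤ n) :
    ((2 - (2:ℝ) ^ (((n:ℝ) - 1)/(n:ℝ))) ^ ((3:ℝ)/2) / (122 * (n:ℝ)^7)) ^ 2 * (5408 * (n:ℝ) ^ 17) ≤ 1 := by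
  have hn0 : (0:ℝ) < n := by exact_mod_cast hn
  have hn1 : (1:ℝ) ≤ n := by exact_mod_cast hn
  have e0 : (2:ℝ) ^ (((n:ℝ) - 1)/(n:ℝ)) = 2 * Real.exp (-(Real.log 2 / n)) := by
    rw [Real.rpow_def_of_pos two_pos, sub_div, div_self hn0.ne', mul_sub, mul_one, Real.exp_sub, Real.exp_log two_pos,
      Real.exp_neg, mul_one_div]
    rfl
  have hlog : Real.log 2 < 0.7 := by have := Real.log_two_lt_d9; linarith
  have hlog0 : 0 < Real.log 2 := Real.log_pos (by norm_num)
  set g := 2 - (2:ℝ) ^ (((n:ℝ) - 1)/(n:ℝ)) with hg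
  have hg1 : g * n ≤ 1.4 := by
    have h1 := Real.add_one_le_exp (-(Real.log 2 / n))
    have h2 : g ≤ 2 * (Real.log 2 / n) := by rw [hg, e0]; linarith
    calc g * n ≤ 2 * (Real.log 2 / n) * n := by gcongr
      _ = 2 * Real.log 2 := by field_simp
      _ ≤ _ := by linarith
  have hg0 : 0 ≤ g := by
    have h1 : Real.exp (-(Real.log 2 / n)) ≤ 1 := Real.exp_le_one_iff.2 (by rw [neg_nonpos]; positivity)
    rw [hg, e0]; linarith
  have e1 : (g ^ ((3:ℝ)/2)) ^ 2 = g ^ 3 := by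
    rw [← Real.rpow_natCast, ← Real.rpow_mul hg0, ← Real.rpow_natCast]; norm_num
  rw [div_pow, e1]
  have e2 : g ^ 3 / (122 * (n:ℝ) ^ 7) ^ 2 * (5408 * (n:ℝ) ^ 17) = (g * n) ^ 3 * (5408 / 14884) := by
    field_simp; norm_num
  rw [e2]
  have h3 : (g * n) ^ 3 ≤ 1.4 ^ 3 := by gcongr
  norm_num at h3 ⊢
  linarith

theorem pow_small {n : ℕ} {y : ℝ} (hy : 0 ≤ y) (h : n * y ≤ 1 / 2) : (1 + y) ^ n ≤ 1 + 2 * n * y := by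
  have h1 : (1 + y) ^ n ≤ Real.exp (n * y) := by
    rw [Real.exp_nat_mul]
    gcongr
    have := Real.add_one_le_exp y; linarith
  have h0 : 0 ≤ n * y := by positivity
  have h2 := Real.exp_bound_div_one_sub_of_interval h0 (by linarith)
  have h3 : 1 / (1 - n * y) ≤ 1 + 2 * n * y := by
    rw [div_le_iff₀ (by linarith)]
    nlinarith
  linarith

theorem num_final {n : ℕ} (hn : 1 ≤ n) {a b y : ℝ} (hb : 0 < b) (hab : b ≤ a) (hy : 0 ≤ y) :
    Real.sqrt (a ^ n * b ^ n) * (1 + (a ^ n / b ^ n - 1) ^ 2 / (32 * n * (a ^ n / b ^ n) ^ 2) + n * y / (a / b))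
      ≤ ((a + b) / 2 + b * y) ^ n := by
  have ha : 0 < a := hb.trans_le hab
  have hn1 : (1:ℝ) ≤ n := by exact_mod_cast hn
  obtain ⟨g, hg0, hg⟩ : ∃ g : ℝ, 0 < g ∧ g ^ 2 = a * b := ⟨Real.sqrt (a * b), by positivity, Real.sq_sqrt (by positivity)⟩
  obtain ⟨t, ht0, ht⟩ : ∃ t : ℝ, 0 < t ∧ t ^ 2 = a / b := ⟨Real.sqrt (a / b), by positivity, Real.sq_sqrt (by positivity)⟩
  have ht1 : 1 ≤ t := by
    apply le_of_sq_le_sq ?_ ht0.le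
    rw [ht, one_pow, le_div_iff₀ hb]; linarith
  have hgt : a = g * t := by
    apply (pow_left_inj₀ ha.le (by positivity) two_ne_zero).1
    rw [mul_pow, hg, ht]; field_simp
  have hgb : b = g / t := by
    rw [eq_div_iff ht0.ne']
    apply (pow_left_inj₀ (by positivity) (by positivity) two_ne_zero).1
    rw [mul_pow, hg, ht]; field_simp
  have es : Real.sqrt (a ^ n * b ^ n) = g ^ n := by
    rw [← mul_pow, ← hg, ← pow_mul, mul_comm, pow_mul, Real.sqrt_sq (by positivity)]
  rw [es, ← div_pow, ← ht]
  have e1 : (a + b) / 2 + b * y = g * ((t + 1 / t) / 2 + y / t) := by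
    rw [hgt, hgb]; field_simp
  rw [e1, mul_pow]
  refine mul_le_mul_of_nonneg_left ?_ (by positivity)
  set h := (t + 1 / t) / 2 with hh
  have eh : h = 1 + (t - 1) ^ 2 / (2 * t) := by rw [hh]; field_simp; ring
  have hh1 : 1 ≤ h := by rw [eh]; have : 0 ≤ (t - 1) ^ 2 / (2 * t) := by positivity
                         linarith
  have hh0 : 0 < h := by linarith
  have s1 : h ^ n + n * (y / t) ≤ (h + y / t) ^ n := by
    have hu : 0 ≤ y / t := by positivity
    have := one_add_mul_le_pow (a := y / t / h) (by have : 0 ≤ y / t / h := by positivity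
                                                    linarith) n
    have e : (h + y / t) ^ n = h ^ n * (1 + y / t / h) ^ n := by rw [← mul_pow]; congr 1; field_simp
    rw [e]
    have e2 : h ^ n * (1 + n * (y / t / h)) = h ^ n + n * (y / t) * (h ^ n / h) := by field_simp
    have e3 : 1 ≤ h ^ n / h := by
      rw [le_div_iff₀ hh0, one_mul]; exact le_self_pow₀ hh1 (by omega)
    calc _ ≤ h ^ n + n * (y / t) * (h ^ n / h) := by
            have : 0 ≤ n * (y / t) := by positivity
            nlinarith
      _ = _ := e2.symm
      _ ≤ _ := by gcongr
  have s2 : 1 + n * ((t - 1) ^ 2 / (2 * t)) ≤ h ^ n := by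
    rw [eh]
    exact one_add_mul_le_pow (by have : 0 ≤ (t - 1) ^ 2 / (2 * t) := by positivity
                                 linarith) n
  have s3 : n * y / t ^ 2 ≤ n * (y / t) := by
    rw [mul_div_assoc]
    have : y / t ^ 2 ≤ y / t := by
      apply div_le_div_of_nonneg_left hy ht0
      nlinarith
    gcongr
  have s4 : ((t ^ 2) ^ n - 1) ^ 2 / (32 * n * ((t ^ 2) ^ n) ^ 2) ≤ n * ((t - 1) ^ 2 / (2 * t)) := by
    set q := (1 / t) ^ (2 * n) with hq
    have eq : (t ^ 2) ^ n = 1 / q := by rw [hq, ← pow_mul, one_div_pow]; simp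
    have hq0 : 0 < q := by positivity
    have hq1 : q ≤ 1 := pow_le_one₀ (by positivity) (by rw [div_le_one ht0]; exact ht1)
    have hbq : 1 - q ≤ 2 * n * ((t - 1) / t) := by
      have hp : 0 < 1 / t := by positivity
      have := one_add_mul_le_pow (a := 1 / t - 1) (by linarith) (2 * n)
      rw [add_sub_cancel, ← hq] at this
      push_cast at this
      have e : 1 + 2 * n * (1 / t - 1) = 1 - 2 * n * ((t - 1) / t) := by field_simp; ring
      linarith
    have e5 : ((t ^ 2) ^ n - 1) ^ 2 / (32 * n * ((t ^ 2) ^ n) ^ 2) = (1 - q) ^ 2 / (32 * n) := by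
      rw [eq]; field_simp
    rw [e5]
    calc (1 - q) ^ 2 / (32 * n) ≤ (2 * n * ((t - 1) / t)) ^ 2 / (32 * n) := by
          have : 0 ≤ 1 - q := by linarith
          gcongr
      _ = n * ((t - 1) ^ 2 / (8 * t * t)) := by field_simp; ring
      _ ≤ _ := by
        gcongr ?_ * (?_ / ?_)
        all_goals nlinarith
  linarith

variable {n : ℕ}
local notation "EE" => EuclideanSpace ℝ (Fin n)

theorem bm_step (hn : 1 ≤ n) {K C : Set EE} (hK : IsCompact K) (hKc : Convex ℝ K) (hC : IsCompact C)
    (hK1 : volume K = 1) {s : ℝ} (hs : 0 < s) (hs' : ENNReal.ofReal (s ^ n) ≤ volume (K + C)) {a b : ℝ} (hb : 0 < b) (hab : b ≤ a) :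
    ENNReal.ofReal ((a - b + b * s) ^ n) ≤ volume (a • K + b • C) := by
  have hZ : IsCompact (K + C) := hK.add hC
  have hf : Module.finrank ℝ EE = n := by simp
  have hvs : volume (b • (K + C)) = ENNReal.ofReal (b ^ n) * volume (K + C) := by
    rw [Measure.addHaar_smul, hf, abs_of_pos (by positivity)]
  have hsub : (a - b) • K + b • (K + C) ⊆ a • K + b • C := by
    rintro _ ⟨_, ⟨x, hx, rfl⟩, _, ⟨_, ⟨x', hx', c, hc, rfl⟩, rfl⟩, rfl⟩
    have ha : 0 < a := hb.trans_le hab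
    refine ⟨(a - b) • x + b • x', ?_, b • c, ⟨c, hc, rfl⟩, ?_⟩
    · refine ⟨((a - b) / a) • x + (b / a) • x', ?_, ?_⟩
      · exact hKc hx hx' (div_nonneg (by linarith) ha.le) (by positivity) (by field_simp; ring)
      · simp only [smul_add, smul_smul]
        congr 2 <;> field_simp
    · simp only [smul_add, add_assoc]
  rcases hab.eq_or_lt with rfl | hlt
  · calc ENNReal.ofReal ((b - b + b * s) ^ n) = ENNReal.ofReal (b ^ n) * ENNReal.ofReal (s ^ n) := by
          rw [sub_self, zero_add, mul_pow, ENNReal.ofReal_mul (by positivity)]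
      _ ≤ volume (b • (K + C)) := by rw [hvs]; gcongr
      _ = volume (b • K + b • C) := by rw [smul_add]
  · set v := (volume (K + C)).toReal with hv
    have hvv : volume (K + C) = ENNReal.ofReal v := (ENNReal.ofReal_toReal hZ.measure_lt_top.ne).symm
    have hsv : s ^ n ≤ v := by
      rw [hvv] at hs'
      exact (ENNReal.ofReal_le_ofReal_iff ENNReal.toReal_nonneg).1 hs'
    have hv0 : 0 < v := lt_of_lt_of_le (by positivity) hsv
    obtain ⟨r, hr0, hr⟩ : ∃ r : ℝ, 0 < r ∧ r ^ n = v := ⟨v ^ ((n:ℝ)⁻¹), by positivity, Real.rpow_inv_natCast_pow hv0.le (by omega)⟩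
    have hsr : s ≤ r := by
      rw [← hr] at hsv
      exact le_of_pow_le_pow_left₀ (by omega) hr0.le hsv
    have h1 := bm_add (E := EE) (by rw [hf]; omega) (hK.smul (a - b)) (hZ.smul b) (a := a - b) (b := b * r) (by linarith) (by positivity)
      (by rw [Measure.addHaar_smul, hK1, mul_one, hf, abs_of_pos (by have : 0 < a - b := by linarith
                                                                     positivity)])
      (by rw [hvs, hvv, ← hr, hf, mul_pow, ENNReal.ofReal_mul (by positivity)])
    rw [hf] at h1
    refine le_trans ?_ (h1.trans (measure_mono hsub))
    apply ENNReal.ofReal_le_ofReal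
    have : 0 ≤ a - b := by linarith
    gcongr

theorem red_final (hn : 1 ≤ n) {K C : Set EE} (hK : IsCompact K) (hKc : Convex ℝ K) (hC : IsCompact C)
    {a b : ℝ} (hb : 0 < b) (hab : b ≤ a) (hKV : volume (a⁻¹ • K) = 1) {y : ℝ} (hy : 0 ≤ y)
    (hs' : ENNReal.ofReal ((2 * (1 + y)) ^ n) ≤ volume (a⁻¹ • K + b⁻¹ • C)) :
    Real.sqrt (a ^ n * b ^ n) * (1 + (a ^ n / b ^ n - 1) ^ 2 / (32 * n * (a ^ n / b ^ n) ^ 2) + n * y / (a / b))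
      ≤ (volume ((2:ℝ)⁻¹ • (K + C))).toReal := by
  have ha : 0 < a := hb.trans_le hab
  refine (num_final hn hb hab hy).trans ?_
  have h := bm_step hn (hK.smul a⁻¹) (hKc.smul a⁻¹) (hC.smul b⁻¹) hKV (by positivity) hs' hb hab
  rw [smul_smul, smul_smul, mul_inv_cancel₀ ha.ne', mul_inv_cancel₀ hb.ne', one_smul, one_smul] at h
  have hfin : volume (K + C) ≠ ⊤ := (hK.add hC).measure_lt_top.ne
  have h2 := (ENNReal.ofReal_le_iff_le_toReal hfin).1 h
  rw [Measure.addHaar_smul, ENNReal.toReal_mul, ENNReal.toReal_ofReal (abs_nonneg _), abs_of_pos (by positivity),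
    show Module.finrank ℝ EE = n by simp]
  have e : ((a + b) / 2 + b * y) ^ n = ((2:ℝ)⁻¹) ^ n * (a - b + b * (2 * (1 + y))) ^ n := by
    rw [← mul_pow]; congr 1; ring
  rw [e]
  gcongr

end P12

section P13

theorem dim1 {K C : Set (EuclideanSpace ℝ (Fin 1))} (hK : IsCompact K) (hKc : Convex ℝ K) (hC : IsCompact C) (hCc : Convex ℝ C)
    (hK1 : volume K = 1) (hC1 : volume C = 1) : ∃ x, volume (symmDiff K ({x} + C)) = 0 := by
  let f : ℝ ≃ₗᵢ[ℝ] EuclideanSpace ℝ (Fin 1) := (OrthonormalBasis.singleton (Fin 1) ℝ).repr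
  have key : ∀ S : Set (EuclideanSpace ℝ (Fin 1)), IsCompact S → Convex ℝ S → volume S = 1 → ∃ p : ℝ, f ⁻¹' S = Set.Icc p (p + 1) := by
    intro S hS hSc hS1
    have hv : volume (f ⁻¹' S) = 1 := by
      rw [f.measurePreserving.measure_preimage hS.measurableSet.nullMeasurableSet, hS1]
    have hcp : IsCompact (f ⁻¹' S) := f.toHomeomorph.isClosedEmbedding.isCompact_preimage hS
    have hcv : Convex ℝ (f ⁻¹' S) := hSc.linear_preimage f.toLinearEquiv.toLinearMap
    have hne : (f ⁻¹' S).Nonempty := by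
      by_contra hcon
      rw [Set.not_nonempty_iff_eq_empty] at hcon
      rw [hcon, measure_empty] at hv
      exact zero_ne_one hv
    have he := eq_Icc_of_connected_compact ⟨hne, hcv.isPreconnected⟩ hcp
    rw [he, Real.volume_Icc, ENNReal.ofReal_eq_one] at hv
    refine ⟨sInf (f ⁻¹' S), ?_⟩
    refine he.trans ?_
    congr 1
    linarith
  obtain ⟨p, hp⟩ := key K hK hKc hK1
  obtain ⟨q, hq⟩ := key C hC hCc hC1
  refine ⟨f (p - q), ?_⟩
  have : K = {f (p - q)} + C := by
    ext z
    obtain ⟨t, rfl⟩ := f.surjective z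
    have h1 : f t ∈ K ↔ t ∈ Set.Icc p (p + 1) := by rw [← hp]; rfl
    have h2 : f t ∈ {f (p - q)} + C ↔ t - (p - q) ∈ Set.Icc q (q + 1) := by
      rw [← hq, Set.mem_preimage, map_sub f t (p - q), Set.singleton_add, Set.mem_image]
      constructor
      · rintro ⟨c, hc, hh⟩
        rw [← hh]; simpa using hc
      · intro hc
        exact ⟨_, hc, by simp⟩
    rw [h1, h2, Set.mem_Icc, Set.mem_Icc]
    constructor <;> rintro ⟨h3, h4⟩ <;> constructor <;> linarith
  rw [← this, symmDiff_self]
  simp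


theorem key_unit {n : ℕ} (hn : 1 ≤ n) {K C : Set (EuclideanSpace ℝ (Fin n))} (hK : IsCompact K) (hKc : Convex ℝ K)
    (hC : IsCompact C) (hCc : Convex ℝ C) (hK1 : volume K = 1) (hC1 : volume C = 1) {A γ : ℝ} (hA : 0 ≤ A) (hγ : 0 ≤ γ)
    (hγ' : γ * (5408 * (n:ℝ) ^ 17) ≤ 1)
    (hAx : ∀ x, A ≤ (volume (symmDiff K ({x} + C))).toReal) :
    ENNReal.ofReal ((2 * (1 + γ * A ^ 2)) ^ n) ≤ volume (K + C) := by
  have hf : Module.finrank ℝ (EuclideanSpace ℝ (Fin n)) = n := by simp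
  rcases hn.eq_or_lt with rfl | hn2
  · obtain ⟨x, hx⟩ := dim1 hK hKc hC hCc hK1 hC1
    have hA0 : A = 0 := le_antisymm (by have := hAx x; rwa [hx] at this) hA
    have := bm_add (E := EuclideanSpace ℝ (Fin 1)) (by rw [hf]; omega) hK hC (a := 1) (b := 1) one_pos one_pos (by simp [hK1]) (by simp [hC1])
    rw [hf] at this
    rw [hA0]
    convert this using 2
    norm_num
  have hn0 : (2:ℝ) ≤ n := by exact_mod_cast hn2
  have hfin : volume (K + C) ≠ ⊤ := (hK.add hC).measure_lt_top.ne
  rw [ENNReal.ofReal_le_iff_le_toReal hfin]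
  obtain ⟨x, hx⟩ := eqvol hn2 hK hKc hC hCc one_pos (by simpa using hK1) (by simpa using hC1)
  have hA2 : A ≤ 2 := by
    refine (hAx 0).trans ?_
    rw [Set.singleton_add, Set.image_congr (fun x _ => zero_add x), Set.image_id']
    have h3 : symmDiff K C ⊆ K ∪ C := by
      rw [Set.symmDiff_def]; exact Set.union_subset_union Set.sdiff_subset Set.sdiff_subset
    calc _ ≤ volume.real (K ∪ C) := measureReal_mono h3 (hK.union hC).measure_lt_top.ne
      _ ≤ _ := measureReal_union_le _ _
      _ = _ := by rw [measureReal_def, measureReal_def, hK1, hC1]; norm_num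
  set v := (volume (K + C)).toReal with hv
  have hxA : A ^ 2 * 2 ^ n ≤ 2704 * n ^ 16 * (v - 2 ^ n) := by
    calc A ^ 2 * 2 ^ n ≤ volume.real (symmDiff K ({x} + C)) ^ 2 * 2 ^ n := by
          have := hAx x
          rw [measureReal_def]
          gcongr
      _ ≤ _ := hx
      _ = _ := by rw [measureReal_def]; ring
  have hp17 : (1:ℝ) ≤ n ^ 16 := one_le_pow₀ (by linarith)
  have hnγ : (n:ℝ) * γ * (5408 * n ^ 16) ≤ 1 := by
    calc (n:ℝ) * γ * (5408 * n ^ 16) = γ * (5408 * (n:ℝ) ^ 17) := by ring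
      _ ≤ 1 := hγ'
  have hnγ0 : 0 ≤ (n:ℝ) * γ := by positivity
  have hny : n * (γ * A ^ 2) ≤ 1 / 2 := by
    have h4 : A ^ 2 ≤ 4 := by nlinarith
    have h5 : (n:ℝ) * γ * 5408 ≤ 1 := le_trans (by nlinarith) hnγ
    have : n * (γ * A ^ 2) ≤ n * γ * 4 := by rw [← mul_assoc]; gcongr
    linarith
  have hps := pow_small (n := n) (y := γ * A ^ 2) (by positivity) hny
  have h6 : 2 * n * (γ * A ^ 2) * 2 ^ n ≤ v - 2 ^ n := by
    have hv0 : 0 ≤ v - 2 ^ n := by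
      have : 0 ≤ 2704 * (n:ℝ) ^ 16 * (v - 2 ^ n) := le_trans (by positivity) hxA
      exact nonneg_of_mul_nonneg_right this (by positivity)
    calc 2 * n * (γ * A ^ 2) * 2 ^ n = 2 * (n * γ) * (A ^ 2 * 2 ^ n) := by ring
      _ ≤ 2 * (n * γ) * (2704 * n ^ 16 * (v - 2 ^ n)) := by gcongr
      _ = (n * γ * (5408 * n ^ 16)) * (v - 2 ^ n) := by ring
      _ ≤ 1 * (v - 2 ^ n) := by gcongr
      _ = _ := one_mul _
  calc (2 * (1 + γ * A ^ 2)) ^ n = 2 ^ n * (1 + γ * A ^ 2) ^ n := by rw [mul_pow]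
    _ ≤ 2 ^ n * (1 + 2 * n * (γ * A ^ 2)) := by gcongr
    _ ≤ v := by linarith

end P13

/-- **Product form of the Figalli–Maggi–Pratelli stability version of the
Brunn–Minkowski inequality.** With `γ* = ((2 − 2^((n−1)/n))^(3/2) / (122·n⁷))²`
and `σ = σ(K,C)`, for any convex bodies `K` and `C` in `ℝⁿ`:
`|½(K+C)| ≥ √(|K|·|C|)·[1 + (σ−1)²/(32·n·σ²) + (n·γ*/σ^(1/n))·A(K,C)²]`. -/
theorem figalli_maggi_pratelli_product {n : ℕ} (hn : 1 ≤ n)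
    (K C : Set (EuclideanSpace ℝ (Fin n)))
    (hKcomp : IsCompact K) (hKconv : Convex ℝ K) (hKint : (interior K).Nonempty)
    (hCcomp : IsCompact C) (hCconv : Convex ℝ C) (hCint : (interior C).Nonempty) :
    Real.sqrt ((volume K).toReal * (volume C).toReal) *
        (1 + (volRatio K C - 1) ^ 2 / (32 * (n:ℝ) * volRatio K C ^ 2) +
          (n:ℝ) * ((2 - (2:ℝ) ^ (((n:ℝ) - 1)/(n:ℝ))) ^ ((3:ℝ)/2) / (122 * (n:ℝ)^7)) ^ 2 /
            (volRatio K C) ^ ((1:ℝ)/(n:ℝ)) * homDist K C ^ 2) ≤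
      (volume ((2:ℝ)⁻¹ • (K + C))).toReal := by
  have hn0 : (n:ℝ) ≠ 0 := by positivity
  have hf : Module.finrank ℝ (EuclideanSpace ℝ (Fin n)) = n := by simp
  have root : ∀ S : Set (EuclideanSpace ℝ (Fin n)), IsCompact S → (interior S).Nonempty → ∃ a : ℝ, 0 < a ∧ (volume S).toReal = a ^ n ∧
      (volume S).toReal ^ (-(1:ℝ)/(n:ℝ)) = a⁻¹ ∧ volume (a⁻¹ • S) = 1 := by
    intro S hS hSi
    have h0 : 0 < (volume S).toReal := ENNReal.toReal_pos (Measure.measure_pos_of_nonempty_interior volume hSi).ne' hS.measure_lt_top.ne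
    have hp : 0 < (volume S).toReal ^ ((n:ℝ)⁻¹) := by positivity
    have hr : ((volume S).toReal ^ ((n:ℝ)⁻¹)) ^ n = (volume S).toReal := Real.rpow_inv_natCast_pow h0.le (by omega)
    refine ⟨(volume S).toReal ^ ((n:ℝ)⁻¹), hp, hr.symm, ?_, ?_⟩
    · rw [neg_div, one_div, Real.rpow_neg h0.le]
    · have hi : 0 < ((volume S).toReal ^ ((n:ℝ)⁻¹))⁻¹ ^ n := by positivity
      rw [Measure.addHaar_smul, hf, abs_of_pos hi, inv_pow, hr, ENNReal.ofReal_inv_of_pos h0, ENNReal.ofReal_toReal hS.measure_lt_top.ne]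
      exact ENNReal.inv_mul_cancel (Measure.measure_pos_of_nonempty_interior volume hSi).ne' hS.measure_lt_top.ne
  obtain ⟨a, ha, hKa, hKa', hK1⟩ := root K hKcomp hKint
  obtain ⟨b, hb, hCb, hCb', hC1⟩ := root C hCcomp hCint
  set γ := ((2 - (2:ℝ) ^ (((n:ℝ) - 1)/(n:ℝ))) ^ ((3:ℝ)/2) / (122 * (n:ℝ)^7)) ^ 2 with hγ
  have hγ0 : 0 ≤ γ := sq_nonneg _
  set A := homDist K C with hA
  have hA0 : 0 ≤ A := by
    apply Real.sInf_nonneg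
    rintro _ ⟨x, rfl⟩
    exact ENNReal.toReal_nonneg
  have hAx : ∀ x, A ≤ (volume (symmDiff (a⁻¹ • K) ({x} + b⁻¹ • C))).toReal := by
    intro x
    refine csInf_le ⟨0, ?_⟩ ⟨x, by rw [hKa', hCb']⟩
    rintro _ ⟨x, rfl⟩
    exact ENNReal.toReal_nonneg
  have hkey := key_unit hn (hKcomp.smul a⁻¹) (hKconv.smul a⁻¹) (hCcomp.smul b⁻¹) (hCconv.smul b⁻¹) hK1 hC1 hA0 hγ0 (gamma_bd hn) hAx
  have hy : 0 ≤ γ * A ^ 2 := by positivity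
  have hroot : ∀ r : ℝ, 0 < r → (r ^ n) ^ ((1:ℝ) / n) = r := fun r hr => by
    rw [one_div]; exact Real.pow_rpow_inv_natCast hr.le (by omega)
  rcases le_total b a with hab | hab
  · have hσ : volRatio K C = a ^ n / b ^ n := by
      rw [volRatio, hKa, hCb]
      apply max_eq_right
      have h1 : b ^ n ≤ a ^ n := by gcongr
      have h2 : 0 < b ^ n := by positivity
      rw [div_le_div_iff₀ (by positivity) h2]
      nlinarith
    have := red_final hn hKcomp hKconv hCcomp hb hab hK1 hy hkey
    rw [hσ, hKa, hCb, ← div_pow, hroot _ (by positivity), div_pow]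
    convert this using 3
    ring
  · have hσ : volRatio K C = b ^ n / a ^ n := by
      rw [volRatio, hKa, hCb]
      apply max_eq_left
      have h1 : a ^ n ≤ b ^ n := by gcongr
      have h2 : 0 < a ^ n := by positivity
      rw [div_le_div_iff₀ (by positivity) h2]
      nlinarith
    rw [add_comm (a⁻¹ • K)] at hkey
    have := red_final hn hCcomp hCconv hKcomp ha hab hC1 hy hkey
    rw [hσ, hKa, hCb, ← div_pow, hroot _ (by positivity), div_pow, mul_comm (a ^ n), add_comm K]
    convert this using 3
    ring
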